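/- Let p, q, s be distinct primes with p ≡ 5 (mod 8), q ≡ 3 (mod 8), s ≡ 3 (mod 4), (p/q) = (p/s) = 1. Then for every n ≥ 0, the 2-Sylow subgroup of the ideal class group of Cₙ(F) = ℚ(√p, √q, √s, 2cos(2π/2^{n+2})) is cyclic and nontrivial. -/

import Mathlib

open NumberField

/-- The field `Cₙ(F) = ℚ(√p, √q, √s, 2cos(2π/2^(n+2)))`, realized inside `ℂ`. -/
noncomputable def CnF (p q s n : ℕ) : IntermediateField ℚ ℂ :=
  IntermediateField.adjoin ℚ
    {((Real.sqrt p : ℝ) : ℂ), ((Real.sqrt q : ℝ) : ℂ), ((Real.sqrt s : ℝ) : ℂ),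
     ((2 * Real.cos (2 * Real.pi / 2 ^ (n + 2)) : ℝ) : ℂ)}

section
open NumberField

namespace CnFProof

theorem herbrand {E : Type*} [CommGroup E] (σ : E →* E) (hσ : ∀ x, σ (σ x) = x)
    (ν : E) (hν1 : ν ≠ 1) (hν2 : ν ^ 2 = 1) (htor : ∀ x : E, x ^ 2 = 1 → x = 1 ∨ x = ν)
    (hns : ∀ x : E, x ^ 2 ≠ ν) (P M : Subgroup E) (hP : ∀ x, x ∈ P ↔ σ x = x)
    (hM : ∀ x, x ∈ M ↔ x * σ x = 1) (n : ℕ)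
    (hE : (powMonoidHom 2 : E →* E).range.index = 2 ^ (2 * n))
    (hPi : (P.map (powMonoidHom 2 : E →* E)).relIndex P = 2 ^ n) :
    (MonoidHom.id E / σ).range.relIndex M = 2 * (MonoidHom.id E * σ).range.relIndex P ∧
    (MonoidHom.id E * σ).range.relIndex P ≠ 0 := by
  set sq : E →* E := powMonoidHom 2 with hsq
  set D : E →* E := MonoidHom.id E / σ with hD
  set N : E →* E := MonoidHom.id E * σ with hN
  have Dap : ∀ x, D x = x / σ x := fun x => rfl
  have Nap : ∀ x, N x = x * σ x := fun x => rfl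
  have sqap : ∀ x, sq x = x ^ 2 := fun x => rfl
  have hσν : σ ν = ν := by
    rcases htor (σ ν) (by rw [← map_pow, hν2, map_one]) with h | h
    · exfalso; apply hν1; rw [← hσ ν, h, map_one]
    · exact h
  have hνP : ν ∈ P := (hP ν).2 hσν
  have hνM : ν ∈ M := (hM ν).2 (by rw [hσν, ← pow_two, hν2])
  have hMD : M.map D = M.map sq := by
    apply le_antisymm <;> rintro _ ⟨x, hx, rfl⟩ <;> refine ⟨x, hx, ?_⟩ <;>
    · have := (hM x).1 hx
      rw [Dap, sqap, eq_inv_of_mul_eq_one_right this]; simp [pow_two]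
  have hPN : P.map N = P.map sq := by
    apply le_antisymm <;> rintro _ ⟨x, hx, rfl⟩ <;> refine ⟨x, hx, ?_⟩ <;>
    · have := (hP x).1 hx
      rw [Nap, sqap, this]; simp [pow_two]
  have kerD : D.ker = P := by
    ext x; rw [MonoidHom.mem_ker, Dap, div_eq_one, hP, eq_comm]
  have kerN : N.ker = M := by
    ext x; rw [MonoidHom.mem_ker, Nap, hM]
  have kersq : sq.ker ≤ P := by
    intro x hx
    rw [MonoidHom.mem_ker, sqap] at hx
    rcases htor x hx with h | h
    · rw [h]; exact P.one_mem
    · rw [h]; exact hνP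
  have hi1 : (M.map sq).relIndex D.range = (P ⊔ M).index := by
    rw [← hMD, MonoidHom.range_eq_map, Subgroup.relIndex_map_map, kerD, top_sup_eq,
      Subgroup.relIndex_top_right, sup_comm]
  have hi2 : (P.map sq).relIndex N.range = (P ⊔ M).index := by
    rw [← hPN, MonoidHom.range_eq_map, Subgroup.relIndex_map_map, kerN, top_sup_eq,
      Subgroup.relIndex_top_right]
  have hDM : D.range ≤ M := by
    rintro _ ⟨x, rfl⟩; rw [hM, Dap, map_div, hσ]; simp
  have hNP : N.range ≤ P := by
    rintro _ ⟨x, rfl⟩; rw [hP, Nap, map_mul, hσ, mul_comm]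
  have hj1 : (P ⊔ M).index * D.range.relIndex M = (M.map sq).relIndex M := by
    rw [← hi1]; exact Subgroup.relIndex_mul_relIndex _ _ _ (hMD ▸ Subgroup.map_le_range D M) hDM
  have hj2 : (P ⊔ M).index * N.range.relIndex P = (P.map sq).relIndex P := by
    rw [← hi2]; exact Subgroup.relIndex_mul_relIndex _ _ _ (hPN ▸ Subgroup.map_le_range N P) hNP
  have hB0 : (P ⊔ M).index ≠ 0 := by
    intro h; rw [h, zero_mul, hPi] at hj2; exact absurd hj2.symm (by positivity)
  have hB2 : ((P ⊔ M).map sq).relIndex (P ⊔ M) = 2 ^ (2 * n) := by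
    have h1 : ((P ⊔ M).map sq).relIndex sq.range = (P ⊔ M).index := by
      rw [MonoidHom.range_eq_map, Subgroup.relIndex_map_map, top_sup_eq,
        Subgroup.relIndex_top_right, sup_eq_left.2 (kersq.trans le_sup_left)]
    have h2 := Subgroup.relIndex_mul_index (Subgroup.map_le_range sq (P ⊔ M))
    have h3 : ((P ⊔ M).map sq) ≤ P ⊔ M := by
      rintro _ ⟨x, hx, rfl⟩; exact Subgroup.pow_mem _ hx 2
    have h4 := Subgroup.relIndex_mul_index h3
    rw [h1, hE, ← h4, mul_comm] at h2
    exact (Nat.eq_of_mul_eq_mul_right (Nat.pos_of_ne_zero hB0) h2).symm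
  -- the product group
  let f : P × M →* E := (P.subtype).coprod M.subtype
  have fap : ∀ x : P × M, f x = x.1 * x.2 := fun x => rfl
  have frange : f.range = P ⊔ M := by
    ext x
    rw [MonoidHom.mem_range, Subgroup.mem_sup]
    constructor
    · rintro ⟨y, rfl⟩; exact ⟨y.1, y.1.2, y.2, y.2.2, rfl⟩
    · rintro ⟨a, ha, b, hb, rfl⟩; exact ⟨(⟨a, ha⟩, ⟨b, hb⟩), rfl⟩
  let RP : Subgroup P := (powMonoidHom 2 : P →* P).range
  let RM : Subgroup M := (powMonoidHom 2 : M →* M).range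
  have hRP : RP.index = (P.map sq).relIndex P := by
    rw [Subgroup.relIndex]; congr 1
    ext x; rw [Subgroup.mem_subgroupOf]
    constructor
    · rintro ⟨y, rfl⟩; exact ⟨y, y.2, rfl⟩
    · rintro ⟨y, hy, h⟩; exact ⟨⟨y, hy⟩, Subtype.ext h⟩
  have hRM : RM.index = (M.map sq).relIndex M := by
    rw [Subgroup.relIndex]; congr 1
    ext x; rw [Subgroup.mem_subgroupOf]
    constructor
    · rintro ⟨y, rfl⟩; exact ⟨y, y.2, rfl⟩
    · rintro ⟨y, hy, h⟩; exact ⟨⟨y, hy⟩, Subtype.ext h⟩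
  have hmapR : (RP.prod RM).map f = (P ⊔ M).map sq := by
    ext x; constructor
    · rintro ⟨⟨_, _⟩, ⟨⟨a, rfl⟩, ⟨b, rfl⟩⟩, rfl⟩
      refine ⟨a * b, Subgroup.mul_mem_sup a.2 b.2, ?_⟩
      rw [sqap, mul_pow]; rfl
    · rintro ⟨y, hy, rfl⟩
      obtain ⟨a, ha, b, hb, rfl⟩ := Subgroup.mem_sup.1 hy
      refine ⟨(⟨a, ha⟩ ^ 2, ⟨b, hb⟩ ^ 2), ⟨⟨_, rfl⟩, ⟨_, rfl⟩⟩, ?_⟩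
      rw [sqap, mul_pow]; rfl
  have hidx : (RP.prod RM ⊔ f.ker).index = 2 ^ (2 * n) := by
    rw [← hB2, ← hmapR, ← frange, MonoidHom.range_eq_map, Subgroup.relIndex_map_map, top_sup_eq,
      Subgroup.relIndex_top_right]
  have hker2 : (RP.prod RM).relIndex f.ker = 2 := by
    rw [Subgroup.relIndex_eq_two_iff_exists_notMem_and]
    refine ⟨(⟨ν, hνP⟩, ⟨ν, hνM⟩), ?_, ?_, ?_⟩
    · rw [MonoidHom.mem_ker, fap, ← pow_two]; exact hν2
    · rintro ⟨⟨y, hy⟩, -⟩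
      exact hns y (congrArg Subtype.val hy)
    · rintro ⟨a, b⟩ hab
      rw [MonoidHom.mem_ker, fap] at hab
      have ha : (a : E) = (b : E)⁻¹ := eq_inv_of_mul_eq_one_left hab
      have haM : (a : E) ∈ M := ha ▸ M.inv_mem b.2
      have ha2 : (a : E) ^ 2 = 1 := by
        have := (hM _).1 haM
        rwa [(hP _).1 a.2, ← pow_two] at this
      have hba : (b : E) = a := by
        rw [eq_comm, ha, inv_eq_iff_mul_eq_one, ← pow_two]
        have : (b : E) = (a : E)⁻¹ := eq_inv_of_mul_eq_one_right hab
        rw [this, inv_pow, ha2, inv_one]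
      rcases htor a ha2 with h | h
      · right
        have h1 : a = 1 := Subtype.ext h
        have h2 : b = 1 := Subtype.ext (hba.trans h)
        rw [h1, h2]; exact Subgroup.one_mem _
      · left
        have h1 : a = ⟨ν, hνP⟩ := Subtype.ext h
        have h2 : b = ⟨ν, hνM⟩ := Subtype.ext (hba.trans h)
        rw [h1, h2]
        have : ((⟨ν, hνP⟩, ⟨ν, hνM⟩) : P × M) * (⟨ν, hνP⟩, ⟨ν, hνM⟩) = 1 := by
          apply Prod.ext <;> apply Subtype.ext <;> simp [← pow_two, hν2]
        rw [this]; exact Subgroup.one_mem _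
  have hfin := Subgroup.relIndex_mul_index (le_sup_left : RP.prod RM ≤ RP.prod RM ⊔ f.ker)
  rw [Subgroup.relIndex_sup_left, hker2, hidx, Subgroup.index_prod, hRP, hRM, ← hj1, ← hj2] at hfin
  rw [hPi] at hj2
  constructor
  · -- 2*(b h0)^2 = (b h0)(b h1)
    have h5 : 2 * 2 ^ (2 * n) = 2 * (2 ^ n * 2 ^ n) := by ring
    rw [h5, ← hj2] at hfin
    have hb : (P ⊔ M).index * N.range.relIndex P ≠ 0 := by rw [hj2]; positivity
    have : (P ⊔ M).index * N.range.relIndex P * ((P ⊔ M).index * (2 * N.range.relIndex P)) =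
        (P ⊔ M).index * N.range.relIndex P * ((P ⊔ M).index * D.range.relIndex M) := by
      rw [← hfin]; ring
    exact (Nat.eq_of_mul_eq_mul_left (Nat.pos_of_ne_zero hB0)
      (Nat.eq_of_mul_eq_mul_left (Nat.pos_of_ne_zero hb) this)).symm
  · intro h; rw [h, mul_zero] at hj2; exact absurd hj2.symm (by positivity)

section
variable (K : Type*) [Field K] [NumberField K] [IsTotallyReal K]

theorem unit_sq_ne_neg_one (x : K) : x ^ 2 ≠ -1 := by
  intro h
  have φ : K →+* ℂ := Classical.arbitrary _
  have hr := IsTotallyReal.complexEmbedding_isReal φ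
  have h1 : (hr.embedding x) ^ 2 = -1 := by rw [← map_pow, h, map_neg, map_one]
  nlinarith [sq_nonneg (hr.embedding x)]

theorem torsion_eq_pm (x : (𝓞 K)ˣ) (hx : x ∈ Units.torsion K) : x = 1 ∨ x = -1 := by
  have φ : K →+* ℂ := Classical.arbitrary _
  have hr := IsTotallyReal.complexEmbedding_isReal φ
  have h1 := (Units.mem_torsion K).1 hx (InfinitePlace.mk φ)
  have h2 : |hr.embedding x| = 1 := by
    rw [InfinitePlace.apply] at h1
    rw [← h1, ← ComplexEmbedding.IsReal.coe_embedding_apply hr, Complex.norm_real, Real.norm_eq_abs]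
  rcases eq_or_eq_neg_of_abs_eq h2 with h | h
  · left
    have : (x : K) = 1 := hr.embedding.injective (by rw [h, map_one])
    ext; simpa using this
  · right
    have : (x : K) = -1 := hr.embedding.injective (by rw [h, map_neg, map_one])
    ext; simpa using this

theorem neg_one_mem_torsion : (-1 : (𝓞 K)ˣ) ∈ Units.torsion K := by
  rw [Units.torsion, CommGroup.mem_torsion, isOfFinOrder_iff_pow_eq_one]
  exact ⟨2, by norm_num, by simp⟩

theorem index_two_free (r : ℕ) (A : Type*) [CommGroup A] (b : Module.Basis (Fin r) ℤ (Additive A)) :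
    (powMonoidHom 2 : A →* A).range.index = 2 ^ r := by
  let e : A ≃* Multiplicative (Fin r → ℤ) := AddEquiv.toMultiplicativeRight b.equivFun.toAddEquiv
  have h1 : ((powMonoidHom 2 : A →* A).range.map (e : A →* _)) =
    AddSubgroup.toSubgroup (AddSubgroup.pi Set.univ fun _ : Fin r => AddSubgroup.zmultiples (2 : ℤ)) := by
    ext x
    constructor
    · rintro ⟨_, ⟨y, rfl⟩, rfl⟩
      intro i _
      refine ⟨(e y).toAdd i, ?_⟩
      simp [mul_comm]
    · intro hx
      have : ∀ i, ∃ k : ℤ, k • (2 : ℤ) = x.toAdd i := fun i => hx i (Set.mem_univ _)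
      choose k hk using this
      refine ⟨(e.symm (Multiplicative.ofAdd k)) ^ 2, ⟨_, rfl⟩, ?_⟩
      simp only [MonoidHom.coe_coe, map_pow, MulEquiv.apply_symm_apply]
      apply Multiplicative.toAdd.injective
      funext i
      have := hk i
      simp at this ⊢
      linarith
  rw [← Subgroup.index_map_equiv _ e, h1, AddSubgroup.index_toSubgroup, AddSubgroup.index_pi]
  simp [Int.index_zmultiples]

theorem range_sq_map {A B : Type*} [CommGroup A] [CommGroup B] (π : A →* B)
    (hπ : Function.Surjective π) : (powMonoidHom 2 : B →* B).range =
      (powMonoidHom 2 : A →* A).range.map π := by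
  ext x
  constructor
  · rintro ⟨y, rfl⟩
    obtain ⟨z, rfl⟩ := hπ y
    exact ⟨_, ⟨z, rfl⟩, by simp⟩
  · rintro ⟨_, ⟨z, rfl⟩, rfl⟩
    exact ⟨π z, by simp⟩

theorem index_sq_sup {A B : Type*} [CommGroup A] [CommGroup B] (f : A → B)
    (hf : ∀ x y, f (x * y) = f x * f y) (hs : Function.Surjective f) (T : Subgroup A)
    (hT : ∀ x, f x = 1 ↔ x ∈ T) : (powMonoidHom 2 : B →* B).range.index =
      ((powMonoidHom 2 : A →* A).range ⊔ T).index := by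
  let π : A →* B := MonoidHom.mk' f hf
  have hk : π.ker = T := by ext x; exact hT x
  rw [range_sq_map π hs, ← Subgroup.index_map_eq (f := π)
    (H := (powMonoidHom 2 : A →* A).range ⊔ T) hs (by rw [hk]; exact le_sup_right),
    Subgroup.map_sup, (Subgroup.map_eq_bot_iff T).2 hk.ge, sup_bot_eq]

theorem units_sq_index :
    (powMonoidHom 2 : (𝓞 K)ˣ →* (𝓞 K)ˣ).range.index = 2 ^ Module.finrank ℚ K := by
  set sq := (powMonoidHom 2 : (𝓞 K)ˣ →* (𝓞 K)ˣ)
  set T := Units.torsion K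
  have h1 : (sq.range ⊔ T).index = 2 ^ (Units.rank K) := by
    rw [← index_two_free _ _ (Units.basisModTorsion K)]
    exact (index_sq_sup (fun x => (QuotientGroup.mk x : (𝓞 K)ˣ ⧸ T)) (fun _ _ => rfl)
      (QuotientGroup.mk'_surjective T) T (fun x => QuotientGroup.eq_one_iff x)).symm
  have h2 : sq.range.relIndex T = 2 := by
    rw [Subgroup.relIndex_eq_two_iff_exists_notMem_and]
    refine ⟨-1, neg_one_mem_torsion K, ?_, ?_⟩
    · rintro ⟨y, hy⟩
      apply unit_sq_ne_neg_one K (y : K)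
      have := congrArg (fun z : (𝓞 K)ˣ => (z : K)) hy
      simpa [sq] using this
    · intro b hb
      rcases torsion_eq_pm K b hb with rfl | rfl
      · right; exact Subgroup.one_mem _
      · left; simp
  have h3 := Subgroup.relIndex_mul_index (le_sup_left : sq.range ≤ sq.range ⊔ T)
  rw [Subgroup.relIndex_sup_left, h2, h1] at h3
  have h4 : Module.finrank ℚ K = Units.rank K + 1 := by
    have h5 : Fintype.card (InfinitePlace K) ≠ 0 := Fintype.card_ne_zero
    rw [Units.rank, IsTotallyReal.finrank, InfinitePlace.card_eq_nrRealPlaces_add_nrComplexPlaces,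
      IsTotallyReal.nrComplexPlaces_eq_zero] at *
    omega
  rw [← h3, h4]; ring
end
end CnFProof

end

section
open NumberField

namespace CnFProof
set_option linter.unusedSectionVars false

/-- An extension of Dedekind domains with an involution whose fixed ring is the base. -/
structure Inv (O R : Type*) [CommRing O] [CommRing R] [Algebra O R] where
  τ : R ≃+* R
  inv : ∀ x, τ (τ x) = x
  fixd : ∀ a, τ (algebraMap O R a) = algebraMap O R a
  fix : ∀ x, τ x = x → ∃ a, algebraMap O R a = x
  inj : Function.Injective (algebraMap O R)
  cm : ∀ J : Ideal O, (J.map (algebraMap O R)).comap (algebraMap O R) = J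
  θ : R
  θ0 : θ ≠ 0
  hθ : τ θ = -θ

section ded
variable {O : Type*} [CommRing O] [IsDedekindDomain O]

theorem ideal_cancel_eq {A B C : Ideal O} (hA : A ≠ ⊥) (h : A * B = A * C) : B = C :=
  mul_left_cancel₀ (a := A) hA h

theorem ideal_cancel_le {A B C : Ideal O} (hA : A ≠ ⊥) (h : A * B ≤ A * C) : B ≤ C := by
  rw [← Ideal.dvd_iff_le] at h ⊢
  exact (mul_dvd_mul_iff_left (a := A) hA).1 h

open UniqueFactorizationMonoid in
theorem ideal_sq_inj {A B : Ideal O} (h : A ^ 2 = B ^ 2) : A = B := by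
  by_cases hA : A = ⊥
  · subst hA
    have : B ^ 2 = 0 := by rw [← h]; exact zero_pow two_ne_zero
    exact (pow_eq_zero_iff two_ne_zero).1 this |>.symm
  · have hB : B ≠ ⊥ := by
      rintro rfl
      have : A ^ 2 = 0 := by rw [h]; exact zero_pow two_ne_zero
      exact hA ((pow_eq_zero_iff two_ne_zero).1 this)
    have := congrArg normalizedFactors h
    rw [normalizedFactors_pow, normalizedFactors_pow] at this
    classical
    have h2 : normalizedFactors A = normalizedFactors B := by
      ext a
      have := congrArg (Multiset.count a) this
      simp only [Multiset.count_nsmul] at this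
      omega
    rw [← Ideal.prod_normalizedFactors_eq_self hA, h2, Ideal.prod_normalizedFactors_eq_self hB]

open Classical in
/-- exponent of `P` in `J` -/
noncomputable def vv (P J : Ideal O) : ℕ :=
  Multiset.count P (UniqueFactorizationMonoid.normalizedFactors J)

theorem vv_mul (P : Ideal O) {A B : Ideal O} (hA : A ≠ ⊥) (hB : B ≠ ⊥) :
    vv P (A * B) = vv P A + vv P B := by
  classical
  unfold vv
  rw [UniqueFactorizationMonoid.normalizedFactors_mul (x := A) (y := B) hA hB, Multiset.count_add]

open UniqueFactorizationMonoid in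
theorem vv_eq_zero {P A : Ideal O} (h : ¬ A ≤ P) : vv P A = 0 := by
  classical
  unfold vv
  rw [Multiset.count_eq_zero]
  intro hh
  exact h (Ideal.dvd_iff_le.1 (dvd_of_mem_normalizedFactors hh))

open UniqueFactorizationMonoid in
theorem vv_not_prime {P A : Ideal O} (h : ¬ (P.IsPrime ∧ P ≠ ⊥)) : vv P A = 0 := by
  classical
  unfold vv
  rw [Multiset.count_eq_zero]
  intro hh
  have := prime_of_normalized_factor _ hh
  exact h ⟨Ideal.isPrime_of_prime this, this.ne_zero⟩

open UniqueFactorizationMonoid in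
theorem ideal_sq_of_even {J : Ideal O} (hJ : J ≠ ⊥) (h : ∀ P, Even (vv P J)) :
    ∃ J0 : Ideal O, J = J0 ^ 2 := by
  classical
  set s := normalizedFactors J with hs
  refine ⟨(∑ a ∈ s.toFinset, (Multiset.count a s / 2) • ({a} : Multiset (Ideal O))).prod, ?_⟩
  rw [← Multiset.prod_nsmul, Finset.smul_sum]
  conv_lhs => rw [← Ideal.prod_normalizedFactors_eq_self hJ, ← hs,
    ← Multiset.toFinset_sum_count_nsmul_eq s]
  congr 1
  refine Finset.sum_congr rfl fun a _ => ?_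
  rw [smul_smul]
  congr 1
  have h1 : Even (Multiset.count a s) := by
    have := h a
    unfold vv at this
    convert this
  obtain ⟨k, hk⟩ := h1
  omega

end ded

namespace Inv
variable {O R : Type*} [CommRing O] [CommRing R] [Algebra O R]
variable (Q : Inv O R)

/-- conjugate ideal -/
def conj (I : Ideal R) : Ideal R := I.map (Q.τ : R →+* R)

theorem mem_conj {I : Ideal R} {x : R} : x ∈ Q.conj I ↔ Q.τ x ∈ I := by
  unfold conj
  constructor
  · intro h
    rw [Ideal.mem_map_iff_of_surjective (Q.τ : R →+* R) Q.τ.surjective] at h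
    obtain ⟨y, hy, rfl⟩ := h
    simpa [Q.inv] using hy
  · intro h
    have := Ideal.mem_map_of_mem (Q.τ : R →+* R) h
    simpa [Q.inv] using this

theorem conj_conj (I : Ideal R) : Q.conj (Q.conj I) = I := by
  ext x; rw [mem_conj, mem_conj, Q.inv]

theorem conj_mul (I J : Ideal R) : Q.conj (I * J) = Q.conj I * Q.conj J := Ideal.map_mul _ _ _

theorem conj_pow (I : Ideal R) (n : ℕ) : Q.conj (I ^ n) = Q.conj I ^ n := Ideal.map_pow _ _ _

theorem conj_span (x : R) : Q.conj (Ideal.span {x}) = Ideal.span {Q.τ x} := by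
  unfold conj; rw [Ideal.map_span]; simp

theorem conj_map (J : Ideal O) : Q.conj (J.map (algebraMap O R)) = J.map (algebraMap O R) := by
  unfold conj
  rw [Ideal.map_map]
  congr 1
  ext x
  simp [Q.fixd]

theorem conj_ne {I : Ideal R} (h : I ≠ ⊥) : Q.conj I ≠ ⊥ := by
  intro hh
  apply h
  rw [← Q.conj_conj I, hh]
  ext x
  simp [mem_conj]

/-- the norm ideal downstairs -/
def nm (I : Ideal R) : Ideal O := (I * Q.conj I).comap (algebraMap O R)

theorem exists_norm (x : R) : ∃ a, algebraMap O R a = x * Q.τ x :=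
  Q.fix _ (by rw [map_mul, Q.inv, mul_comm])

theorem exists_tr (x : R) : ∃ a, algebraMap O R a = x + Q.τ x :=
  Q.fix _ (by rw [map_add, Q.inv, add_comm])

variable [IsDedekindDomain O] [IsDedekindDomain R]

theorem map_inj (Q : Inv O R) {A B : Ideal O} (h : A.map (algebraMap O R) = B.map (algebraMap O R)) : A = B := by
  rw [← Q.cm A, h, Q.cm]

theorem map_le (Q : Inv O R) {A B : Ideal O} (h : A.map (algebraMap O R) ≤ B.map (algebraMap O R)) : A ≤ B := by
  rw [← Q.cm A, ← Q.cm B]; exact Ideal.comap_mono h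

theorem map_ne (Q : Inv O R) {A : Ideal O} (h : A ≠ ⊥) : A.map (algebraMap O R) ≠ ⊥ := by
  intro hh; apply h; apply Q.map_inj; rw [hh, Ideal.map_bot]

theorem map_nm (I : Ideal R) : (Q.nm I).map (algebraMap O R) = I * Q.conj I := by
  apply le_antisymm Ideal.map_comap_le
  rw [Ideal.mul_le]
  intro a ha b' hb'
  set b := Q.τ b' with hb
  have hbI : b ∈ I := Q.mem_conj.1 hb'
  have hbb : b' = Q.τ b := by rw [hb, Q.inv]
  rw [hbb]
  set x := a * Q.τ b with hx
  set JR := (Q.nm I).map (algebraMap O R) with hJR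
  have key : ∀ c d, c ∈ I → d ∈ I → c * Q.τ d ∈ I * Q.conj I := fun c d hc hd =>
    Ideal.mul_mem_mul hc (Q.mem_conj.2 (by rwa [Q.inv]))
  obtain ⟨t, ht⟩ := Q.exists_tr x
  obtain ⟨n1, hn1⟩ := Q.exists_norm a
  obtain ⟨n2, hn2⟩ := Q.exists_norm b
  have hτx : Q.τ x = b * Q.τ a := by rw [hx, map_mul, Q.inv, mul_comm]
  have htJ : algebraMap O R t ∈ JR := by
    apply Ideal.mem_map_of_mem
    change algebraMap O R t ∈ I * Q.conj I
    rw [ht, hτx]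
    exact add_mem (key _ _ ha hbI) (key _ _ hbI ha)
  have hn1J : algebraMap O R n1 ∈ JR := by
    apply Ideal.mem_map_of_mem
    change algebraMap O R n1 ∈ I * Q.conj I
    rw [hn1]; exact key _ _ ha ha
  have hn2J : algebraMap O R n2 ∈ JR := by
    apply Ideal.mem_map_of_mem
    change algebraMap O R n2 ∈ I * Q.conj I
    rw [hn2]; exact key _ _ hbI hbI
  have hxx : x * x = algebraMap O R t * x - algebraMap O R n1 * algebraMap O R n2 := by
    rw [ht, hn1, hn2, hτx, hx]; ring
  by_cases hx0 : x = 0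
  · rw [hx0]; exact zero_mem _
  set X := Ideal.span {x} ⊔ JR with hX
  have hxX : x ∈ X := Ideal.mem_sup_left (Ideal.mem_span_singleton_self x)
  have hX0 : X ≠ ⊥ := by
    intro h
    rw [h] at hxX
    exact hx0 hxX
  have h1 : X * X ≤ X * JR := by
    conv_lhs => rw [hX]
    rw [Ideal.sup_mul, Ideal.mul_sup]
    refine sup_le (sup_le ?_ ?_) ?_
    · rw [Ideal.span_singleton_mul_span_singleton, Ideal.span_singleton_le_iff_mem, hxx]
      refine sub_mem ?_ ?_
      · rw [mul_comm (algebraMap O R t)]; exact Ideal.mul_mem_mul hxX htJ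
      · exact Ideal.mul_mem_mul (Ideal.mem_sup_right hn1J) hn2J
    · exact Ideal.mul_mono_left le_sup_left
    · rw [mul_comm]
  exact ideal_cancel_le hX0 h1 hxX

theorem nm_mul (I J : Ideal R) : Q.nm (I * J) = Q.nm I * Q.nm J := by
  apply Q.map_inj
  rw [Ideal.map_mul, map_nm, map_nm, map_nm, conj_mul]; ring

theorem nm_ne {I : Ideal R} (h : I ≠ ⊥) : Q.nm I ≠ ⊥ := by
  intro hh
  have := Q.map_nm I
  rw [hh, Ideal.map_bot] at this
  exact (mul_ne_zero h (Q.conj_ne h)) this.symm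

/-- away from S the norm of an ambiguous ideal is even -/
theorem even_of_unram {I : Ideal R} (h0 : I ≠ ⊥) (hI : Q.conj I = I) (P : Ideal O) (hP : P.IsPrime)
    (ω : R) (D : O) (hD : algebraMap O R D = (ω - Q.τ ω) ^ 2) (hDP : D ∉ P) :
    Even (vv P (Q.nm I)) := by
  set J := Q.nm I with hJ
  have hJR : J.map (algebraMap O R) = I * I := by rw [hJ, map_nm, hI]
  have hJ0 : J ≠ ⊥ := Q.nm_ne h0
  set J1 : Ideal O := I.comap (algebraMap O R) with hJ1
  set δ := ω - Q.τ ω with hδ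
  have h1 : Ideal.span {δ} * I ≤ J1.map (algebraMap O R) := by
    rw [Ideal.span_singleton_mul_le_iff]
    intro a ha
    have hτa : Q.τ a ∈ I := by rw [← hI] at ha; exact Q.mem_conj.1 ha
    obtain ⟨t, ht⟩ := Q.exists_tr a
    obtain ⟨t', ht'⟩ := Q.exists_tr (a * ω)
    have e : δ * a = algebraMap O R t' - algebraMap O R t * Q.τ ω := by
      rw [ht, ht', hδ, map_mul]; ring
    rw [e]
    refine sub_mem ?_ (Ideal.mul_mem_right _ _ ?_)
    · apply Ideal.mem_map_of_mem
      change algebraMap O R t' ∈ I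
      rw [ht', map_mul]
      exact add_mem (Ideal.mul_mem_right _ _ ha) (Ideal.mul_mem_right _ _ hτa)
    · apply Ideal.mem_map_of_mem
      change algebraMap O R t ∈ I
      rw [ht]
      exact add_mem ha hτa
  have h2 : J1.map (algebraMap O R) ≤ I := Ideal.map_comap_le
  have h3 : J1 * J1 ≤ J := by
    apply Q.map_le
    rw [Ideal.map_mul, hJR]; exact Ideal.mul_mono h2 h2
  obtain ⟨C, hC⟩ := Ideal.dvd_iff_le.2 h3
  have h4 : J * Ideal.span {D} ≤ J * C := by
    apply Q.map_le
    rw [← hC, Ideal.map_mul, Ideal.map_mul, hJR, Ideal.map_span, Set.image_singleton, hD, pow_two,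
      ← Ideal.span_singleton_mul_span_singleton]
    calc _ = (Ideal.span {δ} * I) * (Ideal.span {δ} * I) := by ring
      _ ≤ _ := Ideal.mul_mono h1 h1
  have h5 : Ideal.span {D} ≤ C := ideal_cancel_le hJ0 h4
  have hCP : ¬ C ≤ P := fun h => hDP (h (h5 (Ideal.mem_span_singleton_self D)))
  have hC0 : C ≠ ⊥ := by rintro rfl; exact hCP bot_le
  have hJ1 : J1 ≠ ⊥ := by
    intro h
    rw [h, Ideal.mul_bot] at hC
    exact mul_ne_zero hJ0 hC0 hC.symm
  have := congrArg (vv P) hC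
  rw [vv_mul P hJ1 hJ1, vv_mul P hJ0 hC0, vv_eq_zero hCP] at this
  exact ⟨_, by simpa using this.symm⟩

/-- the parity vector -/
noncomputable def par (S : Finset (Ideal O)) (I : Ideal R) : S → ZMod 2 :=
  fun P => (vv (P : Ideal O) (Q.nm I) : ZMod 2)

theorem par_mul (S : Finset (Ideal O)) {I J : Ideal R} (hI : I ≠ ⊥) (hJ : J ≠ ⊥) :
    Q.par S (I * J) = Q.par S I + Q.par S J := by
  ext P
  simp only [par, Pi.add_apply]
  rw [nm_mul, vv_mul _ (Q.nm_ne hI) (Q.nm_ne hJ), Nat.cast_add]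

/-- S controls ramification -/
def Good (S : Finset (Ideal O)) : Prop :=
  ∀ P : Ideal O, P.IsPrime → P ≠ ⊥ → P ∉ S → ∃ (ω : R) (D : O),
    algebraMap O R D = (ω - Q.τ ω) ^ 2 ∧ D ∉ P

theorem descend {S : Finset (Ideal O)} (hS : Q.Good S) {I : Ideal R} (h0 : I ≠ ⊥) (hI : Q.conj I = I)
    (hp : Q.par S I = 0) : ∃ J0 : Ideal O, J0 ≠ ⊥ ∧ I = J0.map (algebraMap O R) := by
  have : ∀ P, Even (vv P (Q.nm I)) := by
    intro P
    by_cases h : P ∈ S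
    · have := congrFun hp ⟨P, h⟩
      simp only [par, Pi.zero_apply] at this
      rw [ZMod.natCast_eq_zero_iff] at this
      exact even_iff_two_dvd.2 this
    · by_cases h1 : P.IsPrime ∧ P ≠ ⊥
      · obtain ⟨ω, D, h2, h3⟩ := hS P h1.1 h1.2 h
        exact Q.even_of_unram h0 hI P h1.1 ω D h2 h3
      · rw [vv_not_prime h1]; exact Even.zero
  obtain ⟨J0, hJ0⟩ := ideal_sq_of_even (Q.nm_ne h0) this
  have e : I = J0.map (algebraMap O R) := by
    apply ideal_sq_inj
    rw [← Ideal.map_pow, ← hJ0, map_nm, hI, pow_two]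
  refine ⟨J0, ?_, e⟩
  rintro rfl
  rw [Ideal.map_bot] at e
  exact h0 e

end Inv
end CnFProof

end

section
open NumberField

namespace CnFProof
set_option linter.unusedSectionVars false

section cl
variable {R : Type*} [CommRing R] [IsDedekindDomain R]

open Classical in
/-- ideal class -/
noncomputable def cl (I : Ideal R) : ClassGroup R :=
  if h : I ≠ ⊥ then ClassGroup.mk0 ⟨I, mem_nonZeroDivisors_of_ne_zero h⟩ else 1

theorem cl_mul {I J : Ideal R} (hI : I ≠ ⊥) (hJ : J ≠ ⊥) : cl (I * J) = cl I * cl J := by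
  have hIJ : I * J ≠ ⊥ := mul_ne_zero hI hJ
  unfold cl
  rw [dif_pos hI, dif_pos hJ, dif_pos hIJ, ← map_mul]
  rfl

theorem cl_pow {I : Ideal R} (hI : I ≠ ⊥) (n : ℕ) : cl (I ^ n) = cl I ^ n := by
  have hIn : I ^ n ≠ ⊥ := pow_ne_zero n hI
  unfold cl
  rw [dif_pos hI, dif_pos hIn, ← map_pow]
  rfl

theorem cl_eq_one_iff {I : Ideal R} (hI : I ≠ ⊥) : cl I = 1 ↔ ∃ a, I = Ideal.span {a} := by
  unfold cl
  rw [dif_pos hI, ClassGroup.mk0_eq_one_iff]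
  exact ⟨fun h => h.principal, fun h => ⟨h⟩⟩

theorem cl_surj (c : ClassGroup R) : ∃ I : Ideal R, I ≠ ⊥ ∧ cl I = c := by
  obtain ⟨I, hI⟩ := ClassGroup.mk0_surjective c
  have h : (I : Ideal R) ≠ ⊥ := nonZeroDivisors.ne_zero I.2
  exact ⟨I, h, by unfold cl; rw [dif_pos h, ← hI]⟩

theorem cl_span {a : R} (ha : a ≠ 0) : cl (Ideal.span {a}) = 1 :=
  (cl_eq_one_iff (by simpa using ha)).2 ⟨a, rfl⟩

theorem span_ne {a : R} (ha : a ≠ 0) : Ideal.span {a} ≠ ⊥ := by simpa using ha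

end cl

theorem one_of_odd_of_sq {G : Type*} [Group G] {c : G} {h : ℕ} (ho : Odd h) (h1 : c ^ h = 1)
    (h2 : c ^ 2 = 1) : c = 1 := by
  obtain ⟨k, rfl⟩ := ho
  rwa [pow_succ, pow_mul, h2, one_pow, one_mul] at h1

namespace Inv
variable {O R : Type*} [CommRing O] [CommRing R] [Algebra O R]
variable (Q : Inv O R)

/-- the involution on units -/
def σu : Rˣ →* Rˣ := Units.map (Q.τ : R →* R)

@[simp] theorem coe_σu (u : Rˣ) : ((Q.σu u : Rˣ) : R) = Q.τ u := rfl

/-- norm one units -/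
def MM : Subgroup Rˣ where
  carrier := {u | u * Q.σu u = 1}
  mul_mem' := by
    intro a b ha hb
    change a * b * Q.σu (a * b) = 1
    rw [map_mul, mul_mul_mul_comm]
    change a * Q.σu a = 1 at ha
    change b * Q.σu b = 1 at hb
    rw [ha, hb, one_mul]
  one_mem' := by simp
  inv_mem' := by
    intro a ha
    change a * Q.σu a = 1 at ha
    change a⁻¹ * Q.σu a⁻¹ = 1
    rw [map_inv, ← mul_inv, ha, inv_one]

theorem mem_MM {u : Rˣ} : u ∈ Q.MM ↔ u * Q.σu u = 1 := Iff.rfl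

variable [IsDedekindDomain O] [IsDedekindDomain R]

theorem hilb90 (u : Rˣ) (hu : u ∈ Q.MM) : ∃ a : R, a ≠ 0 ∧ a = u * Q.τ a := by
  by_cases h : (1 : R) + u = 0
  · refine ⟨Q.θ, Q.θ0, ?_⟩
    have : (u : R) = -1 := by linear_combination h
    rw [Q.hθ, this]; ring
  · refine ⟨1 + u, h, ?_⟩
    have : (u : R) * Q.τ u = 1 := by
      have := congrArg (fun x : Rˣ => (x : R)) (Q.mem_MM.1 hu)
      simpa using this
    rw [map_add, map_one]; linear_combination (-1 : R) * this

/-- ambiguous classes of order two -/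
def BB : Set (ClassGroup R) :=
  {c | c ^ 2 = 1 ∧ ∃ I : Ideal R, I ≠ ⊥ ∧ Q.conj I = I ∧ cl I = c}

theorem conj_principal {a : R} {u : Rˣ} (h : a = u * Q.τ a) :
    Q.conj (Ideal.span {a}) = Ideal.span {a} := by
  rw [conj_span]
  conv_rhs => rw [h]
  rw [Ideal.span_singleton_mul_left_unit u.isUnit]

theorem count1 [Finite (ClassGroup R)] {S : Finset (Ideal O)} (hS : Q.Good S) {h : ℕ} (ho : Odd h)
    (hh : ∀ J : Ideal O, J ≠ ⊥ → ∃ b, J ^ h = Ideal.span {b}) :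
    Nat.card Q.BB * ((MonoidHom.id Rˣ / Q.σu).range.relIndex Q.MM) ≤ 2 ^ S.card := by
  classical
  set DD := (MonoidHom.id Rˣ / Q.σu).range with hDD
  have hDDmem : ∀ x : Rˣ, x / Q.σu x ∈ DD := fun x => ⟨x, rfl⟩
  choose I hI0 hIc hIcl using fun c : Q.BB => c.2.2
  choose a ha0 ha using fun u : Q.MM => Q.hilb90 u.1 u.2
  have haI : ∀ u, Q.conj (Ideal.span {a u}) = Ideal.span {a u} := fun u => Q.conj_principal (ha u)
  let F : Q.BB × (Q.MM ⧸ DD.subgroupOf Q.MM) → (S → ZMod 2) :=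
    fun x => Q.par S (I x.1) + Q.par S (Ideal.span {a x.2.out})
  have hF : Function.Injective F := by
    rintro ⟨c, m⟩ ⟨c', m'⟩ hcc
    set u := m.out with hu
    set u' := m'.out with hu'
    have hcc : Q.par S (I c) + Q.par S (Ideal.span {a u}) =
      Q.par S (I c') + Q.par S (Ideal.span {a u'}) := hcc
    have two : ∀ v : S → ZMod 2, v + v = 0 := by
      intro v; ext P; exact CharTwo.add_self_eq_zero (v P)
    have hA : a u * a u' ≠ 0 := mul_ne_zero (ha0 u) (ha0 u')
    have hIc1 : c = c' := by
      have e0 : Q.par S (I c * I c' * Ideal.span {a u * a u'}) = 0 := by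
        rw [← Ideal.span_singleton_mul_span_singleton,
          Q.par_mul S (mul_ne_zero (hI0 c) (hI0 c'))
            (mul_ne_zero (span_ne (ha0 u)) (span_ne (ha0 u'))),
          Q.par_mul S (hI0 c) (hI0 c'), Q.par_mul S (span_ne (ha0 u)) (span_ne (ha0 u')),
          add_add_add_comm, hcc, add_add_add_comm, two, two, add_zero]
      have hne : I c * I c' * Ideal.span {a u * a u'} ≠ ⊥ :=
        mul_ne_zero (mul_ne_zero (hI0 c) (hI0 c')) (span_ne hA)
      have hcj : Q.conj (I c * I c' * Ideal.span {a u * a u'}) =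
          I c * I c' * Ideal.span {a u * a u'} := by
        rw [← Ideal.span_singleton_mul_span_singleton]
        simp only [conj_mul, haI, hIc]
      obtain ⟨J0, hJ0, e⟩ := Q.descend hS hne hcj e0
      obtain ⟨b, hb⟩ := hh J0 hJ0
      have e1 : cl (I c * I c' * Ideal.span {a u * a u'}) = c * c' := by
        rw [cl_mul (mul_ne_zero (hI0 c) (hI0 c')) (span_ne hA), cl_mul (hI0 c) (hI0 c'),
          cl_span hA, hIcl, hIcl, mul_one]
      have e2 : (c * c' : ClassGroup R) ^ h = 1 := by
        rw [← e1, ← cl_pow hne]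
        refine (cl_eq_one_iff (pow_ne_zero h hne)).2 ⟨algebraMap O R b, ?_⟩
        rw [e, ← Ideal.map_pow, hb, Ideal.map_span, Set.image_singleton]
      have e3 : (c * c' : ClassGroup R) = 1 := by
        refine one_of_odd_of_sq ho e2 ?_
        rw [mul_pow, c.2.1, c'.2.1, one_mul]
      have e4 : (c' * c' : ClassGroup R) = 1 := by rw [← pow_two]; exact c'.2.1
      exact Subtype.ext (mul_right_cancel (e3.trans e4.symm))
    subst hIc1
    congr 1
    have hcc' := add_left_cancel hcc
    have e0 : Q.par S (Ideal.span {a u * a u'}) = 0 := by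
      rw [← Ideal.span_singleton_mul_span_singleton,
          Q.par_mul S (span_ne (ha0 u)) (span_ne (ha0 u')), hcc', two]
    have hcj : Q.conj (Ideal.span {a u * a u'}) = Ideal.span {a u * a u'} := by
      rw [← Ideal.span_singleton_mul_span_singleton]
      simp only [conj_mul, haI]
    obtain ⟨J0, hJ0, e⟩ := Q.descend hS (span_ne hA) hcj e0
    obtain ⟨b, hb⟩ := hh J0 hJ0
    have e5 : Ideal.span {(a u * a u') ^ h} = Ideal.span {algebraMap O R b} := by
      rw [← Ideal.span_singleton_pow, e, ← Ideal.map_pow, hb, Ideal.map_span, Set.image_singleton]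
    obtain ⟨ε, hε⟩ := Ideal.span_singleton_eq_span_singleton.1 e5.symm
    have hb0 : algebraMap O R b ≠ 0 := by
      intro h0
      rw [h0, zero_mul] at hε
      exact pow_ne_zero h hA hε.symm
    set w : Rˣ := (u : Rˣ) * (u' : Rˣ) with hw
    have e6 : (a u * a u') ^ h = (w : R) ^ h * Q.τ ((a u * a u') ^ h) := by
      rw [map_pow, map_mul, ← mul_pow]
      congr 1
      conv_lhs => rw [ha u, ha u']
      rw [hw]; push_cast; ring
    have e7 : w ^ h = ε / Q.σu ε := by
      rw [eq_div_iff_mul_eq']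
      ext
      push_cast
      rw [coe_σu]
      rw [← hε, map_mul, Q.fixd] at e6
      apply mul_left_cancel₀ hb0
      linear_combination -e6
    have e8 : w ^ h ∈ DD := e7 ▸ hDDmem ε
    have sqm : ∀ v : Rˣ, v ∈ Q.MM → v ^ 2 ∈ DD := by
      intro v hv
      have : v ^ 2 = v / Q.σu v := by
        rw [eq_div_iff_mul_eq', pow_two, mul_assoc, Q.mem_MM.1 hv, mul_one]
      rw [this]; exact hDDmem v
    have e9 : w ∈ DD := by
      obtain ⟨k, rfl⟩ := ho
      rw [pow_succ, pow_mul] at e8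
      exact (Subgroup.mul_mem_cancel_left _
        (Subgroup.pow_mem _ (sqm w (mul_mem u.2 u'.2)) k)).1 e8
    rw [← QuotientGroup.out_eq' m, ← QuotientGroup.out_eq' m', QuotientGroup.eq,
      Subgroup.mem_subgroupOf]
    change (u : Rˣ)⁻¹ * (u' : Rˣ) ∈ DD
    have : (u : Rˣ)⁻¹ * (u' : Rˣ) = ((u : Rˣ) ^ 2)⁻¹ * w := by rw [hw]; group
    rw [this]
    exact mul_mem (inv_mem (sqm _ u.2)) e9
  have := Nat.card_le_card_of_injective F hF
  rw [Nat.card_prod] at this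
  refine this.trans (le_of_eq ?_)
  simp

/-- units that are norms of field elements -/
def XX : Subgroup Rˣ where
  carrier := {u | Q.σu u = u ∧ ∃ a b : R, a ≠ 0 ∧ b ≠ 0 ∧ a * Q.τ a = u * (b * Q.τ b)}
  mul_mem' := by
    rintro u v ⟨hu, a, b, h1, h2, h3⟩ ⟨hv, a', b', h1', h2', h3'⟩
    refine ⟨by rw [map_mul, hu, hv], a * a', b * b', mul_ne_zero h1 h1', mul_ne_zero h2 h2', ?_⟩
    rw [map_mul, map_mul]; push_cast
    linear_combination (a' * Q.τ a') * h3 + (u * (b * Q.τ b)) * h3'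
  one_mem' := ⟨by simp, 1, 1, one_ne_zero, one_ne_zero, by simp⟩
  inv_mem' := by
    rintro u ⟨hu, a, b, h1, h2, h3⟩
    refine ⟨by rw [map_inv, hu], b, a, h2, h1, ?_⟩
    rw [h3, ← mul_assoc, Units.inv_mul, one_mul]

theorem mem_XX {u : Rˣ} : u ∈ Q.XX ↔
  Q.σu u = u ∧ ∃ a b : R, a ≠ 0 ∧ b ≠ 0 ∧ a * Q.τ a = u * (b * Q.τ b) := Iff.rfl

theorem count2 [Finite (ClassGroup R)] {h : ℕ} (ho : Odd h)
    (hh : ∀ J : Ideal O, J ≠ ⊥ → ∃ b, J ^ h = Ideal.span {b})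
    (hfin : (MonoidHom.id Rˣ * Q.σu).range.relIndex Q.XX ≠ 0) :
    Nat.card {c : ClassGroup R | c ^ 2 = 1} ≤
      Nat.card Q.BB * ((MonoidHom.id Rˣ * Q.σu).range.relIndex Q.XX) := by
  classical
  set NN := (MonoidHom.id Rˣ * Q.σu).range with hNN
  have step : ∀ c : {c : ClassGroup R | c ^ 2 = 1}, ∃ (I : Ideal R) (b g : R) (u : Q.XX), I ≠ ⊥ ∧
      b ≠ 0 ∧ g ≠ 0 ∧ Q.τ b = b ∧ cl I = c.1 ∧ I * Ideal.span {b} = Ideal.span {g} * Q.conj I ∧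
      g * Q.τ g = u.1 * (b * b) := by
    rintro ⟨c, hc⟩
    change c ^ 2 = 1 at hc
    obtain ⟨I0, hI0, hcl⟩ := cl_surj c
    have hI : I0 ^ h ≠ ⊥ := pow_ne_zero h hI0
    have hclI : cl (I0 ^ h) = c := by
      rw [cl_pow hI0, hcl]
      obtain ⟨k, rfl⟩ := ho
      rw [pow_succ, pow_mul, hc, one_pow, one_mul]
    obtain ⟨b0, hb0⟩ := hh (Q.nm I0) (Q.nm_ne hI0)
    have hb : I0 ^ h * Q.conj (I0 ^ h) = Ideal.span {algebraMap O R b0} := by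
      rw [conj_pow, ← mul_pow, ← map_nm, ← Ideal.map_pow, hb0, Ideal.map_span, Set.image_singleton]
    set I := I0 ^ h with hIdef
    set b := algebraMap O R b0 with hbdef
    have hbn : b ≠ 0 := by
      intro h0
      rw [h0, Ideal.span_singleton_eq_bot.2 rfl] at hb
      exact mul_ne_zero hI (Q.conj_ne hI) hb
    obtain ⟨g, hg⟩ := (cl_eq_one_iff (mul_ne_zero hI hI)).1 (by rw [cl_mul hI hI, hclI, ← pow_two, hc])
    have hgn : g ≠ 0 := by
      intro h0
      rw [h0, Ideal.span_singleton_eq_bot.2 rfl] at hg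
      exact mul_ne_zero hI hI hg
    have hτb : Q.τ b = b := Q.fixd b0
    have h1 : Ideal.span {b * b} = Ideal.span {g * Q.τ g} := by
      rw [← Ideal.span_singleton_mul_span_singleton, ← Ideal.span_singleton_mul_span_singleton,
        ← conj_span, ← hg, ← hb, conj_mul]; ring
    obtain ⟨v, hv⟩ := Ideal.span_singleton_eq_span_singleton.1 h1
    have hvf : Q.σu v = v := by
      ext
      rw [coe_σu]
      apply mul_left_cancel₀ (mul_ne_zero hbn hbn)
      have := congrArg Q.τ hv
      rw [map_mul, map_mul, map_mul, Q.inv, hτb] at this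
      rw [this, hv, mul_comm]
    refine ⟨I, b, g, ⟨v, hvf, g, b, hgn, hbn, ?_⟩, hI, hbn, hgn, hτb, hclI, ?_, ?_⟩
    · rw [hτb, ← hv, mul_comm]
    · rw [← hb, ← hg]; ring
    · exact hv.symm.trans (mul_comm _ _)
  choose I b g u hI hb hg hτb hcl hrel hnorm using step
  let φ : {c : ClassGroup R | c ^ 2 = 1} → (Q.XX ⧸ NN.subgroupOf Q.XX) := fun c => QuotientGroup.mk (u c)
  have key : ∀ c c', φ c = φ c' → (c.1 * c'.1) ∈ Q.BB := by
    intro c c' hcc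
    have hcc := QuotientGroup.eq.1 hcc
    rw [Subgroup.mem_subgroupOf] at hcc
    obtain ⟨ε, hε⟩ := hcc
    have hε : ε * Q.σu ε = (u c : Rˣ)⁻¹ * (u c' : Rˣ) := hε
    have hε' : (u c : Rˣ) * (u c' : Rˣ) = (u c * ε) * Q.σu (u c * ε) := by
      rw [map_mul, (u c).2.1]
      calc (u c : Rˣ) * (u c' : Rˣ) = u c * (u c * (((u c : Rˣ))⁻¹ * u c')) := by group
        _ = _ := by rw [← hε]; rw [mul_mul_mul_comm, mul_assoc]
    set e := (u c : Rˣ) * ε with he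
    have hcsq : (c.1 * c'.1) ^ 2 = 1 := by
      rw [mul_pow]
      have h1 := c.2
      have h2 := c'.2
      change c.1 ^ 2 = 1 at h1
      change c'.1 ^ 2 = 1 at h2
      rw [h1, h2, one_mul]
    set II := I c * I c' with hII
    have hII0 : II ≠ ⊥ := mul_ne_zero (hI c) (hI c')
    set β := b c * b c' with hβ
    have hβ0 : β ≠ 0 := mul_ne_zero (hb c) (hb c')
    have hτβ : Q.τ β = β := by rw [hβ, map_mul, hτb, hτb]
    set G := g c * g c' * (e⁻¹ : Rˣ) with hG
    have hG0 : G ≠ 0 := mul_ne_zero (mul_ne_zero (hg c) (hg c')) (Units.ne_zero _)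
    have hGn : G * Q.τ G = β * β := by
      have h1 : Q.τ ((e⁻¹ : Rˣ) : R) = ((Q.σu e)⁻¹ : Rˣ) := by rw [← map_inv]; rfl
      have h2 : ((u c : Rˣ) : R) * ((u c' : Rˣ) : R) = (e : R) * (Q.σu e : Rˣ) := by
        exact_mod_cast congrArg (fun x : Rˣ => (x : R)) hε'
      have i1 : (e : R) * ((e⁻¹ : Rˣ) : R) = 1 := Units.mul_inv e
      have i2 : ((Q.σu e : Rˣ) : R) * (((Q.σu e)⁻¹ : Rˣ) : R) = 1 := Units.mul_inv _
      rw [hG, map_mul, map_mul, h1, hβ]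
      calc _ = (g c * Q.τ (g c)) * (g c' * Q.τ (g c')) * ((e⁻¹ : Rˣ) : R) * (((Q.σu e)⁻¹ : Rˣ) : R) := by
            ring
        _ = (((u c : Rˣ) : R) * ((u c' : Rˣ) : R)) * (b c * b c * (b c' * b c')) *
            ((e⁻¹ : Rˣ) : R) * (((Q.σu e)⁻¹ : Rˣ) : R) := by rw [hnorm, hnorm]; ring
        _ = ((e : R) * ((e⁻¹ : Rˣ) : R)) * (((Q.σu e : Rˣ) : R) * (((Q.σu e)⁻¹ : Rˣ) : R)) *
            (b c * b c * (b c' * b c')) := by rw [h2]; ring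
        _ = _ := by rw [i1, i2]; ring
    have hGrel : II * Ideal.span {β} = Ideal.span {G} * Q.conj II := by
      rw [hG, Ideal.span_singleton_mul_right_unit (Units.isUnit _), hβ,
        ← Ideal.span_singleton_mul_span_singleton, ← Ideal.span_singleton_mul_span_singleton,
        conj_mul]
      calc _ = (I c * Ideal.span {b c}) * (I c' * Ideal.span {b c'}) := by ring
        _ = _ := by rw [hrel, hrel]; ring
    have hclII : cl II = c.1 * c'.1 := by rw [cl_mul (hI c) (hI c'), hcl, hcl]
    refine ⟨hcsq, ?_⟩
    by_cases ha : β + G = 0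
    · refine ⟨II, hII0, ?_, hclII⟩
      have : G = - β := by linear_combination ha
      rw [this, Ideal.span_singleton_neg, mul_comm] at hGrel
      exact (ideal_cancel_eq (span_ne hβ0) hGrel).symm
    · set a := β + G with hadef
      have hτa0 : Q.τ a ≠ 0 := by simpa using ha
      have h1 : G * Q.τ a = β * a := by
        rw [hadef, map_add, hτβ]; linear_combination hGn
      refine ⟨Ideal.span {Q.τ a} * II, mul_ne_zero (span_ne hτa0) hII0, ?_, ?_⟩
      · rw [conj_mul, conj_span, Q.inv]
        apply ideal_cancel_eq (span_ne hG0)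
        calc _ = Ideal.span {a} * (Ideal.span {G} * Q.conj II) := by ring
          _ = (Ideal.span {β} * Ideal.span {a}) * II := by rw [← hGrel]; ring
          _ = _ := by
            rw [Ideal.span_singleton_mul_span_singleton, ← h1,
              ← Ideal.span_singleton_mul_span_singleton]; ring
      · rw [cl_mul (span_ne hτa0) hII0, cl_span hτa0, one_mul, hclII]
  have : ∀ x : Set.range φ, ∃ c, φ c = x := fun x => x.2
  choose r hr using this
  let Ψ : {c : ClassGroup R | c ^ 2 = 1} → Q.BB × (Q.XX ⧸ NN.subgroupOf Q.XX) := fun c =>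
    (⟨c.1 * (r ⟨φ c, c, rfl⟩).1, key _ _ (hr ⟨φ c, c, rfl⟩).symm⟩, φ c)
  have hΨ : Function.Injective Ψ := by
    intro c c' hcc
    have h2 : φ c = φ c' := congrArg Prod.snd hcc
    have h1 := congrArg (fun x => (Prod.fst x).1) hcc
    change c.1 * (r ⟨φ c, c, rfl⟩).1 = c'.1 * (r ⟨φ c', c', rfl⟩).1 at h1
    have : (⟨φ c, c, rfl⟩ : Set.range φ) = ⟨φ c', c', rfl⟩ := Subtype.ext h2
    rw [this] at h1
    exact Subtype.ext (mul_right_cancel h1)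
  have : Finite (Q.XX ⧸ NN.subgroupOf Q.XX) := Nat.finite_of_card_ne_zero hfin
  have := Nat.card_le_card_of_injective Ψ hΨ
  rwa [Nat.card_prod] at this

end Inv
end CnFProof

end

section
open NumberField

namespace CnFProof
set_option linter.unusedSectionVars false

/-- quadratic extension data -/
structure Quad (K L : Type*) [Field K] [Field L] [Algebra K L] where
  σ : L ≃ₐ[K] L
  θ : L
  d : K
  hθ2 : θ ^ 2 = algebraMap K L d
  hσθ : σ θ = -θ
  span : ∀ x, ∃ a b : K, x = algebraMap K L a + algebraMap K L b * θ
  θint : IsIntegral ℤ θ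
  θ0 : θ ≠ 0

section build
variable {K L : Type*} [Field K] [Field L] [Algebra K L] [CharZero L]

theorem Quad.exists_of (θ : L) (d : K) (hθ2 : θ ^ 2 = algebraMap K L d)
    (span : ∀ x, ∃ a b : K, x = algebraMap K L a + algebraMap K L b * θ) (θint : IsIntegral ℤ θ)
    (hθ : θ ∉ Set.range (algebraMap K L)) : ∃ q : Quad K L, q.θ = θ ∧ q.d = d := by
  have uniq : ∀ a b a' b' : K, algebraMap K L a + algebraMap K L b * θ =
      algebraMap K L a' + algebraMap K L b' * θ → a = a' ∧ b = b' := by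
    intro a b a' b' h
    have hb : b = b' := by
      by_contra hne
      apply hθ
      refine ⟨(a' - a) / (b - b'), ?_⟩
      have : algebraMap K L b - algebraMap K L b' ≠ 0 := by
        rw [← map_sub]; simpa [sub_eq_zero] using hne
      rw [map_div₀, map_sub, map_sub, div_eq_iff this]
      linear_combination -h
    subst hb
    exact ⟨(algebraMap K L).injective (by linear_combination h), rfl⟩
  choose A B hAB using span
  have hA : ∀ a b : K, A (algebraMap K L a + algebraMap K L b * θ) = a ∧
      B (algebraMap K L a + algebraMap K L b * θ) = b := fun a b => by
    have := uniq _ _ _ _ (hAB (algebraMap K L a + algebraMap K L b * θ))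
    exact ⟨this.1.symm, this.2.symm⟩
  let f : L → L := fun x => algebraMap K L (A x) - algebraMap K L (B x) * θ
  have hf : ∀ a b : K, f (algebraMap K L a + algebraMap K L b * θ) =
      algebraMap K L a - algebraMap K L b * θ := fun a b => by
    simp only [f, (hA a b).1, (hA a b).2]
  have hff : ∀ x, f (f x) = x := by
    intro x
    have : f x = algebraMap K L (A x) + algebraMap K L (-B x) * θ := by
      simp only [f, map_neg]; ring
    rw [this, hf]
    conv_rhs => rw [hAB x]
    rw [map_neg]; ring
  have hadd : ∀ x y, f (x + y) = f x + f y := by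
    intro x y
    have : x + y = algebraMap K L (A x + A y) + algebraMap K L (B x + B y) * θ := by
      conv_lhs => rw [hAB x, hAB y]
      rw [map_add, map_add]; ring
    rw [this, hf]
    simp only [f, map_add]; ring
  have hmul : ∀ x y, f (x * y) = f x * f y := by
    intro x y
    have : x * y = algebraMap K L (A x * A y + B x * B y * d) +
        algebraMap K L (A x * B y + B x * A y) * θ := by
      conv_lhs => rw [hAB x, hAB y]
      simp only [map_add, map_mul, ← hθ2]; ring
    rw [this, hf]
    simp only [f, map_add, map_mul, ← hθ2]; ring
  have halg : ∀ a, f (algebraMap K L a) = algebraMap K L a := by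
    intro a
    have := hf a 0
    simpa using this
  let g : L ≃ₐ[K] L :=
    { toFun := f
      invFun := f
      left_inv := hff
      right_inv := hff
      map_mul' := hmul
      map_add' := hadd
      commutes' := halg }
  refine ⟨⟨g, θ, d, hθ2, ?_, fun x => ⟨_, _, hAB x⟩, θint, ?_⟩, rfl, rfl⟩
  · have := hf 0 1
    change f θ = _
    simpa using this
  · rintro rfl
    exact hθ ⟨0, by simp⟩

end build

namespace Quad
variable {K L : Type*} [Field K] [Field L] [NumberField K] [NumberField L] [Algebra K L]
variable (q : Quad K L)

theorem σ_apply (a b : K) : q.σ (algebraMap K L a + algebraMap K L b * q.θ) =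
    algebraMap K L a - algebraMap K L b * q.θ := by
  rw [map_add, map_mul, q.hσθ, AlgEquiv.commutes, AlgEquiv.commutes]; ring

theorem σσ (x : L) : q.σ (q.σ x) = x := by
  obtain ⟨a, b, rfl⟩ := q.span x
  rw [σ_apply, map_sub, map_mul, q.hσθ, AlgEquiv.commutes, AlgEquiv.commutes]; ring

theorem not_mem : q.θ ∉ Set.range (algebraMap K L) := by
  rintro ⟨a, ha⟩
  have h1 := q.hσθ
  rw [← ha, AlgEquiv.commutes] at h1
  have : algebraMap K L a = 0 := by
    have h2 : (2 : L) * algebraMap K L a = 0 := by linear_combination h1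
    simpa using h2
  exact q.θ0 (by rw [← ha, this])

theorem fixed (x : L) (h : q.σ x = x) : ∃ a, algebraMap K L a = x := by
  obtain ⟨a, b, rfl⟩ := q.span x
  rw [σ_apply] at h
  have h2 : (2 : L) * (algebraMap K L b * q.θ) = 0 := by linear_combination -h
  have h3 : algebraMap K L b * q.θ = 0 := by simpa using h2
  exact ⟨a, by rw [h3, add_zero]⟩

theorem finrank_eq (q : Quad K L) : Module.finrank K L = 2 := by
  have hli : LinearIndependent K ![(1 : L), q.θ] := by
    rw [LinearIndependent.pair_iff]
    intro s t h
    have ht : t = 0 := by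
      by_contra ht
      apply q.not_mem
      refine ⟨-s / t, ?_⟩
      have : algebraMap K L t ≠ 0 := by simpa using ht
      rw [map_div₀, div_eq_iff this, map_neg]
      simp only [Algebra.smul_def, mul_one] at h
      linear_combination -h
    subst ht
    simpa using h
  have hsp : ⊤ ≤ Submodule.span K (Set.range ![(1 : L), q.θ]) := by
    intro x _
    obtain ⟨a, b, rfl⟩ := q.span x
    have e : algebraMap K L a + algebraMap K L b * q.θ = a • (1 : L) + b • q.θ := by
      simp [Algebra.smul_def]
    rw [e]
    refine add_mem (Submodule.smul_mem _ _ (Submodule.subset_span ⟨0, rfl⟩))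
      (Submodule.smul_mem _ _ (Submodule.subset_span ⟨1, rfl⟩))
  have := Module.finrank_eq_card_basis (Module.Basis.mk hli hsp)
  simpa using this

theorem finrank_Q (q : Quad K L) : Module.finrank ℚ L = 2 * Module.finrank ℚ K := by
  rw [← Module.finrank_mul_finrank ℚ K L, q.finrank_eq, mul_comm]

/-- the involution on integers -/
noncomputable def toInv : Inv (𝓞 K) (𝓞 L) where
  τ := RingOfIntegers.mapRingEquiv q.σ
  inv x := by ext; simp [q.σσ]
  fixd a := by
    ext
    change q.σ (algebraMap (𝓞 K) (𝓞 L) a : L) = (algebraMap (𝓞 K) (𝓞 L) a : L)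
    have : ((algebraMap (𝓞 K) (𝓞 L) a : 𝓞 L) : L) = algebraMap K L (a : K) := rfl
    rw [this, AlgEquiv.commutes]
  fix x h := by
    have h1 : q.σ (x : L) = x := congrArg (fun y : 𝓞 L => (y : L)) h
    obtain ⟨a, ha⟩ := q.fixed _ h1
    have hintg : IsIntegral ℤ a := by
      have : IsIntegral ℤ (algebraMap K L a) := by rw [ha]; exact x.2
      exact (isIntegral_algebraMap_iff (algebraMap K L).injective).1 this
    exact ⟨⟨a, hintg⟩, by ext; exact ha⟩
  inj := FaithfulSMul.algebraMap_injective _ _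
  cm J := Ideal.comap_map_eq_self_of_faithfullyFlat J
  θ := ⟨q.θ, q.θint⟩
  θ0 := by
    intro h
    exact q.θ0 (congrArg (fun y : 𝓞 L => (y : L)) h)
  hθ := by ext; exact q.hσθ

theorem coe_τ (x : 𝓞 L) : ((q.toInv.τ x : 𝓞 L) : L) = q.σ (x : L) := rfl

/-- units from below -/
noncomputable def uu (K L : Type*) [Field K] [Field L] [NumberField K] [NumberField L]
    [Algebra K L] : (𝓞 K)ˣ →* (𝓞 L)ˣ := Units.map (algebraMap (𝓞 K) (𝓞 L) : 𝓞 K →* 𝓞 L)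

theorem uu_inj : Function.Injective (uu K L) :=
  Units.map_injective (FaithfulSMul.algebraMap_injective (𝓞 K) (𝓞 L))

theorem mem_range_uu (u : (𝓞 L)ˣ) : u ∈ (uu K L).range ↔ q.toInv.σu u = u := by
  constructor
  · rintro ⟨v, rfl⟩
    ext1
    exact q.toInv.fixd _
  · intro h
    have h1 : q.toInv.τ (u : 𝓞 L) = u := congrArg (fun y : (𝓞 L)ˣ => (y : 𝓞 L)) h
    have h2 : q.toInv.τ ((u⁻¹ : (𝓞 L)ˣ) : 𝓞 L) = ((u⁻¹ : (𝓞 L)ˣ) : 𝓞 L) := by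
      have : q.toInv.σu u⁻¹ = u⁻¹ := by rw [map_inv, h]
      exact congrArg (fun y : (𝓞 L)ˣ => (y : 𝓞 L)) this
    obtain ⟨a, ha⟩ := q.toInv.fix _ h1
    obtain ⟨b, hb⟩ := q.toInv.fix _ h2
    have hab : a * b = 1 := by
      apply q.toInv.inj
      rw [map_mul, ha, hb, Units.mul_inv, map_one]
    refine ⟨⟨a, b, hab, by rw [mul_comm, hab]⟩, ?_⟩
    ext1
    exact ha

theorem relIndex_M [IsTotallyReal K] [IsTotallyReal L] :
    (MonoidHom.id (𝓞 L)ˣ / q.toInv.σu).range.relIndex q.toInv.MM =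
      2 * (MonoidHom.id (𝓞 L)ˣ * q.toInv.σu).range.relIndex (uu K L).range ∧
    (MonoidHom.id (𝓞 L)ˣ * q.toInv.σu).range.relIndex (uu K L).range ≠ 0 := by
  refine herbrand q.toInv.σu ?_ (-1) ?_ ?_ ?_ ?_ _ _ (q.mem_range_uu) (fun x => q.toInv.mem_MM)
    (Module.finrank ℚ K) ?_ ?_
  · intro x; ext1; exact q.toInv.inv _
  · intro h
    have := congrArg (fun y : (𝓞 L)ˣ => ((y : 𝓞 L) : L)) h
    simp at this
    norm_num at this
  · simp
  · intro x hx
    have h1 : ((x : 𝓞 L)) ^ 2 = 1 := by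
      have := congrArg (fun y : (𝓞 L)ˣ => (y : 𝓞 L)) hx
      simpa using this
    rcases sq_eq_sq_iff_eq_or_eq_neg.1 (h1.trans (one_pow 2).symm) with h | h
    · left; ext1; exact h
    · right; ext1; simpa using h
  · intro x hx
    refine unit_sq_ne_neg_one L ((x : 𝓞 L) : L) ?_
    have := congrArg (fun y : (𝓞 L)ˣ => ((y : 𝓞 L) : L)) hx
    simpa using this
  · rw [units_sq_index, q.finrank_Q]
  · rw [MonoidHom.range_eq_map, Subgroup.map_map]
    have : ((powMonoidHom 2 : (𝓞 L)ˣ →* (𝓞 L)ˣ)).comp (uu K L) =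
        (uu K L).comp (powMonoidHom 2 : (𝓞 K)ˣ →* (𝓞 K)ˣ) := by
      ext1 x; simp
    rw [this, ← Subgroup.map_map, Subgroup.relIndex_map_map_of_injective _ _ uu_inj,
      Subgroup.relIndex_top_right, ← MonoidHom.range_eq_map, units_sq_index]

end Quad
end CnFProof

end

section
open NumberField

namespace CnFProof
set_option linter.unusedSectionVars false
set_option linter.style.haveILetI false
set_option linter.unusedVariables false

/-- odd class number -/
def OddCl (K : Type*) [Field K] [NumberField K] : Prop := Odd (Nat.card (ClassGroup (𝓞 K)))

theorem odd_of_two_torsion {G : Type*} [Group G] [Finite G] (h : ∀ g : G, g ^ 2 = 1 → g = 1) :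
    Odd (Nat.card G) := by
  by_contra hn
  rw [Nat.not_odd_iff_even, even_iff_two_dvd] at hn
  haveI : Fact (Nat.Prime 2) := ⟨Nat.prime_two⟩
  obtain ⟨g, hg⟩ := exists_prime_orderOf_dvd_card' 2 hn
  have : g = 1 := h g (by rw [← hg]; exact pow_orderOf_eq_one g)
  rw [this, orderOf_one] at hg
  norm_num at hg

theorem OddCl.principal {K : Type*} [Field K] [NumberField K] (h : OddCl K) (J : Ideal (𝓞 K))
    (hJ : J ≠ ⊥) : ∃ b, J ^ (Nat.card (ClassGroup (𝓞 K))) = Ideal.span {b} := by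
  rw [← cl_eq_one_iff (pow_ne_zero _ hJ), cl_pow hJ, pow_card_eq_one']

namespace Quad
variable {K L : Type*} [Field K] [Field L] [NumberField K] [NumberField L] [Algebra K L]
variable [IsTotallyReal K] [IsTotallyReal L]
variable (q : Quad K L)

theorem NN_le_XX : (MonoidHom.id (𝓞 L)ˣ * q.toInv.σu).range ≤ q.toInv.XX := by
  rintro _ ⟨ε, rfl⟩
  refine ⟨?_, ε, 1, Units.ne_zero _, one_ne_zero, ?_⟩
  · have h : q.toInv.σu (q.toInv.σu ε) = ε := by ext1; exact q.toInv.inv _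
    change q.toInv.σu (ε * q.toInv.σu ε) = ε * q.toInv.σu ε
    rw [map_mul, h, mul_comm]
  · simp

theorem XX_le : q.toInv.XX ≤ (uu K L).range := fun u hu => (q.mem_range_uu u).2 hu.1

theorem one_mem_BB : (1 : ClassGroup (𝓞 L)) ∈ q.toInv.BB :=
  ⟨one_pow 2, Ideal.span {1}, span_ne one_ne_zero, by rw [Inv.conj_span, map_one],
    cl_span one_ne_zero⟩

theorem card_BB_pos : 0 < Nat.card q.toInv.BB := by
  haveI : Nonempty q.toInv.BB := ⟨⟨1, q.one_mem_BB⟩⟩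
  exact Nat.card_pos

theorem main1 (hK : OddCl K) {S : Finset (Ideal (𝓞 K))} (hS : q.toInv.Good S) :
    Nat.card q.toInv.BB * (2 * (MonoidHom.id (𝓞 L)ˣ * q.toInv.σu).range.relIndex (uu K L).range)
      ≤ 2 ^ S.card := by
  rw [← q.relIndex_M.1]
  exact q.toInv.count1 hS hK (fun J hJ => hK.principal J hJ)

theorem main2 (hK : OddCl K) {S : Finset (Ideal (𝓞 K))} (hS : q.toInv.Good S) :
    2 * Nat.card {c : ClassGroup (𝓞 L) | c ^ 2 = 1} * q.toInv.XX.relIndex (uu K L).range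
      ≤ 2 ^ S.card := by
  have h1 := q.main1 hK hS
  have h0 := q.relIndex_M.2
  have hm := Subgroup.relIndex_mul_relIndex _ _ _ q.NN_le_XX q.XX_le
  have hfin : (MonoidHom.id (𝓞 L)ˣ * q.toInv.σu).range.relIndex q.toInv.XX ≠ 0 := by
    intro h; rw [h, zero_mul] at hm; exact h0 hm.symm
  have h2 := q.toInv.count2 hK (fun J hJ => hK.principal J hJ) hfin
  rw [← hm] at h1
  refine le_trans ?_ h1
  calc _ ≤ 2 * (Nat.card q.toInv.BB *
      (MonoidHom.id (𝓞 L)ˣ * q.toInv.σu).range.relIndex q.toInv.XX) *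
        q.toInv.XX.relIndex (uu K L).range := by gcongr
    _ = _ := by ring

theorem XX_ne : q.toInv.XX.relIndex (uu K L).range ≠ 0 := by
  have h0 := q.relIndex_M.2
  have hm := Subgroup.relIndex_mul_relIndex _ _ _ q.NN_le_XX q.XX_le
  intro h; rw [h, mul_zero] at hm; exact h0 hm.symm

theorem not_good_empty (hK : OddCl K) : ¬ q.toInv.Good ∅ := by
  intro hS
  have h1 := q.main1 hK hS
  have h0 := Nat.pos_of_ne_zero q.relIndex_M.2
  have hB := q.card_BB_pos
  have := Nat.mul_pos hB h0
  simp only [Finset.card_empty, pow_zero] at h1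
  nlinarith

theorem odd_of_card_le_two (h : Nat.card {c : ClassGroup (𝓞 L) | c ^ 2 = 1} ≤ 1) : OddCl L := by
  apply odd_of_two_torsion
  intro g hg
  have hsub : Subsingleton {c : ClassGroup (𝓞 L) | c ^ 2 = 1} :=
    Finite.card_le_one_iff_subsingleton.1 h
  have := hsub.elim ⟨g, hg⟩ ⟨1, one_pow 2⟩
  exact congrArg Subtype.val this

theorem main_small (hK : OddCl K) {S : Finset (Ideal (𝓞 K))} (hS : q.toInv.Good S)
    (hc : S.card ≤ 1) : OddCl L ∧ ∀ u : (𝓞 K)ˣ, ∃ ε : (𝓞 L)ˣ, ε * q.toInv.σu ε = uu K L u := by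
  have hle : 2 ^ S.card ≤ 2 := by
    calc 2 ^ S.card ≤ 2 ^ 1 := Nat.pow_le_pow_right (by norm_num) hc
      _ = 2 := by norm_num
  constructor
  · apply odd_of_card_le_two
    have h := (q.main2 hK hS).trans hle
    have := Nat.pos_of_ne_zero q.XX_ne
    nlinarith
  · have h1 := (q.main1 hK hS).trans hle
    have h0 := Nat.pos_of_ne_zero q.relIndex_M.2
    have hB := q.card_BB_pos
    have h2 : (MonoidHom.id (𝓞 L)ˣ * q.toInv.σu).range.relIndex (uu K L).range = 1 := by
      nlinarith
    rw [Subgroup.relIndex_eq_one] at h2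
    intro u
    obtain ⟨ε, hε⟩ := h2 ⟨u, rfl⟩
    exact ⟨ε, hε⟩

theorem main_count (hK : OddCl K) {S : Finset (Ideal (𝓞 K))} (hS : q.toInv.Good S) {ι : Type*}
    [Fintype ι] (χ : (𝓞 K)ˣ →* Multiplicative (ι → ZMod 2)) (hχ : Function.Surjective χ)
    (hn : ∀ (u : (𝓞 K)ˣ) (a b : 𝓞 L), a ≠ 0 → b ≠ 0 →
      a * q.toInv.τ a = algebraMap (𝓞 K) (𝓞 L) u * (b * q.toInv.τ b) → χ u = 1) :
    2 * Nat.card {c : ClassGroup (𝓞 L) | c ^ 2 = 1} * 2 ^ Fintype.card ι ≤ 2 ^ S.card := by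
  refine le_trans ?_ (q.main2 hK hS)
  refine Nat.mul_le_mul_left _ ?_
  have h0 := q.XX_ne
  rw [← Subgroup.index_comap] at h0 ⊢
  have hle : q.toInv.XX.comap (uu K L) ≤ χ.ker := by
    rintro u ⟨_, a, b, ha, hb, h⟩
    exact hn u a b ha hb h
  have hd := Subgroup.index_dvd_of_le hle
  classical
  have hk : χ.ker.index = 2 ^ Fintype.card ι := by
    rw [Subgroup.index_ker, MonoidHom.range_eq_top.2 hχ, Subgroup.card_top,
      Nat.card_congr (Multiplicative.toAdd (α := ι → ZMod 2)), Nat.card_eq_fintype_card]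
    simp
  rw [← hk]
  exact Nat.le_of_dvd (Nat.pos_of_ne_zero h0) hd

end Quad
end CnFProof

end

section
open NumberField IsDedekindDomain

namespace CnFProof
set_option linter.unusedSectionVars false

open WithZero in
theorem val_exp_neg_one {O : Type*} [CommRing O] [IsDedekindDomain O] (v : HeightOneSpectrum O)
    {d : O} (h1 : d ∈ v.asIdeal) (h2 : d ∉ v.asIdeal ^ 2) : v.intValuation d = exp (-1 : ℤ) := by
  have a1 : v.intValuation d ≤ exp (-((1 : ℕ) : ℤ)) :=
    (v.intValuation_le_pow_iff_mem d 1).2 (by simpa using h1)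
  have a2 : ¬ v.intValuation d ≤ exp (-((2 : ℕ) : ℤ)) := by
    rw [v.intValuation_le_pow_iff_mem d 2]; exact h2
  have hd : v.intValuation d ≠ 0 := by
    intro h; rw [h] at a2; exact a2 zero_le
  have b1 := (WithZero.log_le_iff_le_exp hd).symm.1 a1 
  have b2 : ¬ log (v.intValuation d) ≤ _ := fun h => a2 ((WithZero.log_le_iff_le_exp hd).symm.2 h)
  rw [← WithZero.exp_log hd]
  congr 1
  push_cast at b1 b2
  omega

open WithZero in
theorem sq_mod_of_norm_form {K : Type*} [Field K] [NumberField K] (P : Ideal (𝓞 K)) (hP : P.IsPrime)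
    {d : 𝓞 K} (h1 : d ∈ P) (h2 : d ∉ P ^ 2) (u : 𝓞 K) (hu : u ∉ P) (x y : K)
    (h : x ^ 2 - d * y ^ 2 = u) : ∃ c : 𝓞 K, u - c ^ 2 ∈ P := by
  have hP0 : P ≠ ⊥ := by
    rintro rfl
    have : d = 0 := h1
    exact h2 (by rw [this]; exact zero_mem _)
  let v : HeightOneSpectrum (𝓞 K) := ⟨P, hP, hP0⟩
  set V := v.valuation K with hV
  have hd : V (d : K) = exp (-1 : ℤ) := by
    rw [hV, HeightOneSpectrum.valuation_of_algebraMap]; exact val_exp_neg_one v h1 h2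
  have hu1 : V (u : K) = 1 := (v.valuation_eq_one_iff_notMem (K := K)).2 hu
  have hx2 : x ^ 2 = u + d * y ^ 2 := by linear_combination h
  have hdy : V (d * y ^ 2) = exp (-1 : ℤ) * V y ^ 2 := by rw [map_mul, map_pow, hd]
  by_cases hy : V y ≤ 1
  · have hlt : V (d * y ^ 2) < 1 := by
      rw [hdy]
      calc exp (-1 : ℤ) * V y ^ 2 ≤ exp (-1 : ℤ) * 1 := by
            gcongr; exact pow_le_one₀ zero_le hy
        _ < 1 := by rw [mul_one, ← exp_zero, exp_lt_exp]; norm_num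
    have hVx : V x ≤ 1 := by
      by_contra hc
      push Not at hc
      have : V (x ^ 2) ≤ 1 := by
        rw [hx2]; exact (V.map_add _ _).trans (max_le hu1.le hlt.le)
      rw [map_pow] at this
      exact absurd this (not_le.2 (one_lt_pow₀ hc two_ne_zero))
    obtain ⟨c, hc⟩ := v.exists_valuation_sub_lt_of_integer hVx 1
    refine ⟨c, ?_⟩
    rw [show P = v.asIdeal from rfl, ← v.valuation_lt_one_iff_mem (K := K)]
    have e : algebraMap (𝓞 K) K (u - c ^ 2) = (x - c) * (x + c) - d * y ^ 2 := by
      rw [map_sub, map_pow]; linear_combination -h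
    change V (algebraMap (𝓞 K) K (u - c ^ 2)) < 1
    rw [e]
    refine V.map_sub_lt ?_ hlt
    rw [map_mul]
    have hc2 : V (x + c) ≤ 1 := (V.map_add _ _).trans (max_le hVx (v.valuation_le_one c))
    have hc' : V (x - c) < 1 := by rw [V.map_sub_swap]; simpa using hc
    calc V (x - c) * V (x + c) ≤ V (x - c) * 1 := by gcongr
      _ < 1 := by rw [mul_one]; exact hc'
  · exfalso
    push Not at hy
    have hy0 : V y ≠ 0 := fun h => by rw [h] at hy; exact absurd hy (by simp)
    have hly : 0 < log (V y) := by
      rw [← log_one]; exact (log_lt_log one_ne_zero hy0).2 hy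
    have hdy0 : exp (-1 : ℤ) * V y ^ 2 ≠ 0 := mul_ne_zero (by simp) (pow_ne_zero _ hy0)
    have hl : log (exp (-1 : ℤ) * V y ^ 2) = -1 + 2 * log (V y) := by
      rw [log_mul (by simp) (pow_ne_zero _ hy0), log_exp, log_pow]; simp
    have hgt : V (u : K) < V (d * y ^ 2) := by
      rw [hu1, hdy, ← log_lt_log one_ne_zero hdy0, log_one, hl]; omega
    have hVx : V (x ^ 2) = V (d * y ^ 2) := by
      rw [hx2]; exact V.map_add_eq_of_lt_right hgt
    have hx0 : V x ≠ 0 := by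
      intro h0
      rw [map_pow, h0, hdy] at hVx
      exact hdy0 (by rw [← hVx]; simp)
    have := congrArg log hVx
    rw [hdy, hl, map_pow, log_pow] at this
    simp at this
    omega

namespace Quad
variable {K L : Type*} [Field K] [Field L] [NumberField K] [NumberField L] [Algebra K L]
variable (q : Quad K L)

/-- a unit which is a norm is a square modulo primes exactly dividing `d` -/
theorem norm_test (P : Ideal (𝓞 K)) (hP : P.IsPrime) (d : 𝓞 K) (hd : (d : K) = q.d)
    (h1 : d ∈ P) (h2 : d ∉ P ^ 2) (u : (𝓞 K)ˣ) (a b : 𝓞 L) (hb : b ≠ 0)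
    (h : a * q.toInv.τ a = algebraMap (𝓞 K) (𝓞 L) u * (b * q.toInv.τ b)) :
    ∃ c : 𝓞 K, (u : 𝓞 K) - c ^ 2 ∈ P := by
  have hbL : (b : L) ≠ 0 := by simpa using hb
  obtain ⟨x, y, hxy⟩ := q.span ((a : L) / b)
  refine sq_mod_of_norm_form P hP h1 h2 u ?_ x y ?_
  · intro hu
    exact hP.ne_top (Ideal.eq_top_of_isUnit_mem _ hu u.isUnit)
  · apply (algebraMap K L).injective
    have hL : (a : L) * q.σ a = algebraMap K L ((u : 𝓞 K) : K) * (b * q.σ b) :=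
      congrArg (fun z : 𝓞 L => (z : L)) h
    have hσb : q.σ (b : L) ≠ 0 := by simpa using hbL
    have e1 : ((a : L) / b) * q.σ ((a : L) / b) = algebraMap K L ((u : 𝓞 K) : K) := by
      rw [map_div₀, div_mul_div_comm, hL, mul_div_assoc, div_self (mul_ne_zero hbL hσb), mul_one]
    rw [hxy, q.σ_apply] at e1
    rw [map_sub, map_mul, map_pow, map_pow, hd, ← q.hθ2, ← e1]; ring

end Quad
end CnFProof

end

section
open NumberField IsDedekindDomain

namespace CnFProof
set_option linter.unusedSectionVars false
set_option linter.unusedVariables false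

/-- being a square modulo an ideal -/
def SqMod {O : Type*} [CommRing O] (P : Ideal O) (u : O) : Prop := ∃ c, u - c ^ 2 ∈ P

theorem sqMod_iff {O : Type*} [CommRing O] (P : Ideal O) (u : O) :
    SqMod P u ↔ IsSquare (Ideal.Quotient.mk P u) := by
  constructor
  · rintro ⟨c, hc⟩
    refine ⟨Ideal.Quotient.mk P c, ?_⟩
    rw [← map_mul, ← pow_two]; exact Ideal.Quotient.eq.2 hc
  · rintro ⟨c, hc⟩
    obtain ⟨c, rfl⟩ := Ideal.Quotient.mk_surjective c
    exact ⟨c, Ideal.Quotient.eq.1 (by rw [hc, map_pow, pow_two])⟩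

theorem isSquare_mul_iff {F : Type*} [Field F] [Finite F] {a b : F} (ha : a ≠ 0) (hb : b ≠ 0) :
    IsSquare (a * b) ↔ (IsSquare a ↔ IsSquare b) := by
  classical
  haveI := Fintype.ofFinite F
  by_cases h2 : ringChar F = 2
  · simp [FiniteField.isSquare_of_char_two h2]
  · rw [← quadraticChar_one_iff_isSquare (mul_ne_zero ha hb), ← quadraticChar_one_iff_isSquare ha,
      ← quadraticChar_one_iff_isSquare hb, map_mul]
    rcases quadraticChar_dichotomy ha with h | h <;> rcases quadraticChar_dichotomy hb with h' | h' <;>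
      rw [h, h'] <;> norm_num

/-- Residue field lemma: inert case. -/
theorem inert_field {F F' : Type*} [Field F] [Field F'] [Finite F] (ι : F →+* F')
    (t : F' →+* F') (ht : ∀ y, t (t y) = y) (hfix : ∀ f, t (ι f) = ι f) (hN : ∀ y, ∃ f, ι f = y * t y)
    (δ : F') (hδ : δ ≠ 0) (htδ : t δ = -δ) (h2 : (2 : F') ≠ 0) :
    (∀ f : F, IsSquare (ι f)) ∧ ∀ (z : F') (n : F), z ≠ 0 → ι n = z * t z → (IsSquare z ↔ IsSquare n) := by
  have sq : ∀ f : F, IsSquare (ι f) := by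
    intro f
    by_cases hf : f = 0
    · subst hf; simp
    by_cases hs : IsSquare f
    · exact hs.map ι
    obtain ⟨D', hD'⟩ := hN δ
    have hD : ι (-D') = δ * δ := by rw [map_neg, hD', htδ]; ring
    have hD0 : -D' ≠ 0 := by
      intro h
      rw [h, map_zero] at hD
      exact mul_ne_zero hδ hδ hD.symm
    have hDs : ¬ IsSquare (-D') := by
      rintro ⟨r, hr⟩
      rw [hr, map_mul] at hD
      have : ι r = δ ∨ ι r = - δ := mul_self_eq_mul_self_iff.1 hD
      have key : t δ = δ := by
        rcases this with h | h
        · rw [← h, hfix]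
        · have : δ = ι (-r) := by rw [map_neg, h, neg_neg]
          rw [this, hfix]
      rw [htδ] at key
      have : 2 * δ = 0 := by linear_combination -key
      exact mul_ne_zero h2 hδ this
    have : IsSquare (f * -D') := (isSquare_mul_iff hf hD0).2 (by simp [hs, hDs])
    obtain ⟨r, hr⟩ := this.map ι
    refine ⟨r / δ, ?_⟩
    rw [map_mul, hD] at hr
    field_simp
    linear_combination hr
  refine ⟨sq, fun z n hz hn => ⟨?_, ?_⟩⟩
  · rintro ⟨w, rfl⟩
    obtain ⟨m, hm⟩ := hN w
    refine ⟨m, ι.injective ?_⟩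
    rw [hn, map_mul, map_mul, hm]; ring
  · rintro ⟨c, rfl⟩
    rw [map_mul] at hn
    have htz : t z ≠ 0 := by simpa using hz
    have hc : ι c ≠ 0 := by
      intro h
      rw [h, zero_mul] at hn
      exact mul_ne_zero hz htz hn.symm
    -- find y with z * t y = ι c * y
    have hy : ∃ y, y ≠ 0 ∧ z * t y = ι c * y := by
      by_cases h : ι c + z = 0
      · refine ⟨δ, hδ, ?_⟩
        rw [htδ, show z = - ι c by linear_combination h]; ring
      · refine ⟨ι c + z, h, ?_⟩
        rw [map_add, hfix]; linear_combination -hn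
    obtain ⟨y, hy0, hy⟩ := hy
    obtain ⟨m, hm⟩ := hN y
    have hty : t y ≠ 0 := by simpa using hy0
    obtain ⟨r, hr⟩ := sq (c * m)
    refine ⟨r / t y, ?_⟩
    rw [map_mul, hm] at hr
    field_simp
    linear_combination t y * hy + hr

namespace Inv
variable {O R : Type*} [CommRing O] [CommRing R] [Algebra O R] [IsDedekindDomain O]
  [IsDedekindDomain R] (Q : Inv O R)

theorem conj_prime (P : Ideal R) (hP : P.IsPrime) : (Q.conj P).IsPrime := by
  have : Q.conj P = P.comap (Q.τ : R →+* R) := by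
    ext x; rw [mem_conj]; rfl
  rw [this]; exact Ideal.comap_isPrime _ P

/-- contraction -/
def dn (P : Ideal R) : Ideal O := P.comap (algebraMap O R)

theorem mem_dn {P : Ideal R} {a : O} : a ∈ dn (O := O) P ↔ algebraMap O R a ∈ P := Iff.rfl

theorem dn_prime (P : Ideal R) (hP : P.IsPrime) : (dn (O := O) P).IsPrime := Ideal.comap_isPrime _ P

theorem dn_conj (P : Ideal R) : dn (O := O) (Q.conj P) = dn P := by
  ext a; rw [mem_dn, mem_dn, mem_conj, Q.fixd]

theorem dn_ne (Q : Inv O R) (P : Ideal R) (hP : P ≠ ⊥) (hP' : P.IsPrime) : dn (O := O) P ≠ ⊥ := by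
  obtain ⟨x, hx, hx0⟩ := Submodule.exists_mem_ne_zero_of_ne_bot hP
  obtain ⟨a, ha⟩ := Q.exists_norm x
  intro h
  have : a ∈ dn (O := O) P := by rw [mem_dn, ha]; exact Ideal.mul_mem_right _ _ hx
  rw [h] at this
  have h0 : a = 0 := this
  rw [h0, map_zero] at ha
  exact mul_ne_zero hx0 (by simpa using hx0) ha.symm

theorem nm_le_dn (P : Ideal R) : Q.nm P ≤ dn P := fun a ha => Ideal.mul_le_right (I := Q.conj P) (by
  rw [mul_comm]; exact ha)

theorem trans_primes (P P' : Ideal R) (hP : P.IsPrime) (hP' : P'.IsPrime) (hP0 : P' ≠ ⊥)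
    (h : dn (O := O) P = dn P') : P' = P ∨ P' = Q.conj P := by
  have hc := Q.conj_prime P hP
  have hle : P' ≤ P ∨ P' ≤ Q.conj P := by
    have : (P' : Set R) ⊆ (P : Set R) ∪ (Q.conj P : Set R) := by
      intro x hx
      obtain ⟨a, ha⟩ := Q.exists_norm x
      have : a ∈ dn (O := O) P := by
        rw [h, mem_dn, ha]; exact Ideal.mul_mem_right _ _ hx
      rw [mem_dn, ha] at this
      rcases hP.mem_or_mem this with h | h
      · exact Or.inl h
      · exact Or.inr (Q.mem_conj.2 h)
    exact Ideal.subset_union.1 this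
  have hm : P'.IsMaximal := hP'.isMaximal hP0
  rcases hle with h | h
  · left; exact hm.eq_of_le hP.ne_top h
  · right; exact hm.eq_of_le hc.ne_top h

theorem conj_not_le (P : Ideal R) (hP : P.IsPrime) (hP0 : P ≠ ⊥) (h : Q.conj P ≠ P) :
    ∃ b ∈ Q.conj P, b ∉ P := by
  by_contra hc
  push Not at hc
  have hm : (Q.conj P).IsMaximal := (Q.conj_prime P hP).isMaximal (Q.conj_ne hP0)
  exact h (hm.eq_of_le hP.ne_top hc)

/-- split primes: residue fields agree -/
theorem split_res (P : Ideal R) (hP : P.IsPrime) (hP0 : P ≠ ⊥) (h : Q.conj P ≠ P) (x : R) :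
    ∃ a : O, x - algebraMap O R a ∈ P := by
  have hm : P.IsMaximal := hP.isMaximal hP0
  obtain ⟨b, hb, hbP⟩ := Q.conj_not_le P hP hP0 h
  obtain ⟨y, i, hi, hy⟩ := hm.exists_inv hbP
  obtain ⟨a, ha⟩ := Q.exists_tr (y * b * x)
  refine ⟨a, ?_⟩
  have h1 : Q.τ (y * b * x) ∈ P := by
    rw [map_mul, map_mul]
    exact Ideal.mul_mem_right _ _ (Ideal.mul_mem_left _ _ (Q.mem_conj.1 hb))
  have : x - algebraMap O R a = i * x - Q.τ (y * b * x) := by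
    rw [ha]; linear_combination (-x) * hy
  rw [this]
  exact sub_mem (Ideal.mul_mem_right _ _ hi) h1

theorem nonram (P : Ideal R) (hP : P.IsPrime) (hP0 : P ≠ ⊥) (ω : R) (hω : ω - Q.τ ω ∉ P)
    (c : O) (hc : c ∈ dn (O := O) P) (hc2 : c ∉ (dn (O := O) P) ^ 2) : algebraMap O R c ∉ P ^ 2 := by
  intro hcon
  have hp := dn_prime (O := O) P hP
  have hp0 := Q.dn_ne P hP0 hP
  set 𝔰 := dn (O := O) P with h𝔰
  have e1 : 𝔰 ≤ Ideal.span {c} ⊔ 𝔰 ^ 2 := by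
    have hd : (Ideal.span {c} ⊔ 𝔰 ^ 2) ∣ 𝔰 ^ 2 := Ideal.dvd_iff_le.2 le_sup_right
    have hpp : Prime 𝔰 := Ideal.prime_of_isPrime hp0 hp
    obtain ⟨i, hi, hass⟩ := (dvd_prime_pow hpp 2).1 hd
    have hass := associated_iff_eq.1 hass
    rw [hass]
    interval_cases i
    · simp
    · simp
    · exfalso
      apply hc2
      rw [← hass]
      exact Ideal.mem_sup_left (Ideal.mem_span_singleton_self c)
  have e2 : 𝔰.map (algebraMap O R) ≤ P ^ 2 := by
    refine (Ideal.map_mono e1).trans ?_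
    rw [Ideal.map_sup, Ideal.map_span, Set.image_singleton, Ideal.map_pow]
    refine sup_le ?_ (Ideal.pow_right_mono Ideal.map_comap_le 2)
    rw [Ideal.span_singleton_le_iff_mem]; exact hcon
  have e3 : ∀ a ∈ P, Q.τ a ∈ P → (ω - Q.τ ω) * a ∈ P ^ 2 := by
    intro a ha hτa
    obtain ⟨t, ht⟩ := Q.exists_tr a
    obtain ⟨t', ht'⟩ := Q.exists_tr (a * ω)
    have e : (ω - Q.τ ω) * a = algebraMap O R t' - algebraMap O R t * Q.τ ω := by
      rw [ht, ht', map_mul]; ring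
    rw [e]
    apply e2
    refine sub_mem ?_ (Ideal.mul_mem_right _ _ ?_)
    · apply Ideal.mem_map_of_mem
      change algebraMap O R t' ∈ P
      rw [ht', map_mul]
      exact add_mem (Ideal.mul_mem_right _ _ ha) (Ideal.mul_mem_right _ _ hτa)
    · apply Ideal.mem_map_of_mem
      change algebraMap O R t ∈ P
      rw [ht]
      exact add_mem ha hτa
  have e4 : ∃ b ∉ P, ∀ a ∈ P, Q.τ (b * a) ∈ P := by
    by_cases h : Q.conj P = P
    · refine ⟨1, fun h => hP.ne_top ((Ideal.eq_top_iff_one _).2 h), fun a ha => ?_⟩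
      rw [one_mul]; rw [← h] at ha; exact Q.mem_conj.1 ha
    · obtain ⟨b, hb, hbP⟩ := Q.conj_not_le P hP hP0 h
      refine ⟨b, hbP, fun a ha => ?_⟩
      rw [map_mul]; exact Ideal.mul_mem_right _ _ (Q.mem_conj.1 hb)
  obtain ⟨b, hb, hba⟩ := e4
  have e5 : P ≤ P ^ 2 := by
    intro a ha
    have h1 := e3 (b * a) (Ideal.mul_mem_left _ _ ha) (hba a ha)
    rcases Ideal.IsPrime.mul_mem_pow P h1 with h | h
    · exact absurd h hω
    · rcases Ideal.IsPrime.mul_mem_pow P h with h | h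
      · exact absurd h hb
      · exact h
  have e6 : P ^ 2 = P := le_antisymm (Ideal.pow_le_self two_ne_zero) e5
  have : P * P = P * ⊤ := by rw [Ideal.mul_top, ← pow_two, e6]
  exact hP.ne_top (ideal_cancel_eq hP0 this)

/-- inert primes -/
theorem inert_sq (P : Ideal R) (hP : P.IsPrime) (hP0 : P ≠ ⊥) (h : Q.conj P = P)
    (hfin : Finite (O ⧸ dn (O := O) P))
    (ω : R) (hω : ω - Q.τ ω ∉ P) (h2 : (2 : R) ∉ P) :
    (∀ a : O, SqMod P (algebraMap O R a)) ∧
    ∀ (z : R) (n : O), z ∉ P → algebraMap O R n = z * Q.τ z →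
      (SqMod P z ↔ SqMod (dn (O := O) P) n) := by
  have hm : P.IsMaximal := hP.isMaximal hP0
  have hm' : (dn (O := O) P).IsMaximal := (dn_prime P hP).isMaximal (Q.dn_ne P hP0 hP)
  letI := Ideal.Quotient.field P
  letI := Ideal.Quotient.field (dn (O := O) P)
  let ι : O ⧸ dn (O := O) P →+* R ⧸ P := Ideal.quotientMap P (algebraMap O R) le_rfl
  have hι : ∀ a, ι (Ideal.Quotient.mk _ a) = Ideal.Quotient.mk P (algebraMap O R a) := fun a => rfl
  let t : R ⧸ P →+* R ⧸ P := Ideal.quotientMap P (Q.τ : R →+* R) (fun x hx => by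
    change Q.τ x ∈ P
    rw [← h] at hx; exact Q.mem_conj.1 hx)
  have htt : ∀ a, t (Ideal.Quotient.mk P a) = Ideal.Quotient.mk P (Q.τ a) := fun a => rfl
  have key := inert_field ι t
    (by
      intro y
      obtain ⟨y, rfl⟩ := Ideal.Quotient.mk_surjective y
      rw [htt, htt, Q.inv])
    (by
      intro y
      obtain ⟨y, rfl⟩ := Ideal.Quotient.mk_surjective y
      rw [hι, htt, Q.fixd])
    (by
      intro y
      obtain ⟨y, rfl⟩ := Ideal.Quotient.mk_surjective y
      obtain ⟨a, ha⟩ := Q.exists_norm y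
      exact ⟨Ideal.Quotient.mk _ a, by rw [hι, htt, ha, map_mul]⟩)
    (Ideal.Quotient.mk P (ω - Q.τ ω))
    (by rw [Ne, Ideal.Quotient.eq_zero_iff_mem]; exact hω)
    (by rw [htt, ← map_neg, map_sub, Q.inv]; congr 1; ring)
    (by
      have : (2 : R ⧸ P) = Ideal.Quotient.mk P 2 := (map_ofNat (Ideal.Quotient.mk P) 2).symm
      rw [this, Ne, Ideal.Quotient.eq_zero_iff_mem]; exact h2)
  constructor
  · intro a
    rw [sqMod_iff, ← hι]; exact key.1 _
  · intro z n hz hn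
    rw [sqMod_iff, sqMod_iff]
    refine key.2 _ _ ?_ ?_
    · rw [Ne, Ideal.Quotient.eq_zero_iff_mem]; exact hz
    · rw [hι, htt, hn, map_mul]

theorem split_sq (P : Ideal R) (hP : P.IsPrime) (hP0 : P ≠ ⊥) (h : Q.conj P ≠ P) (a : O) :
    SqMod P (algebraMap O R a) ↔ SqMod (dn (O := O) P) a := by
  constructor
  · rintro ⟨c, hc⟩
    obtain ⟨b, hb⟩ := Q.split_res P hP hP0 h c
    refine ⟨b, ?_⟩
    rw [mem_dn, map_sub, map_pow]
    have : algebraMap O R a - algebraMap O R b ^ 2 = (algebraMap O R a - c ^ 2) +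
      (c - algebraMap O R b) * (c + algebraMap O R b) := by ring
    rw [this]
    exact add_mem hc (Ideal.mul_mem_right _ _ hb)
  · rintro ⟨c, hc⟩
    exact ⟨algebraMap O R c, by rw [← map_pow, ← map_sub]; exact hc⟩

theorem sq_conj (P : Ideal R) (z : R) : SqMod (Q.conj P) z ↔ SqMod P (Q.τ z) := by
  constructor
  · rintro ⟨c, hc⟩
    exact ⟨Q.τ c, by rw [← map_pow, ← map_sub]; exact Q.mem_conj.1 hc⟩
  · rintro ⟨c, hc⟩
    exact ⟨Q.τ c, by rw [mem_conj, map_sub, map_pow, Q.inv]; exact hc⟩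

end Inv
end CnFProof

end

section
open NumberField IsDedekindDomain

namespace CnFProof
set_option linter.unusedSectionVars false
set_option linter.unusedVariables false
set_option linter.style.haveILetI false

open Classical in
/-- quadratic residue character with values in `ZMod 2` -/
noncomputable def chi {O : Type*} [CommRing O] (P : Ideal O) (u : O) : ZMod 2 := if SqMod P u then 0 else 1

theorem chi_eq_zero {O : Type*} [CommRing O] {P : Ideal O} {u : O} : chi P u = 0 ↔ SqMod P u := by
  unfold chi; split_ifs with h <;> simp [h]

theorem chi_congr {O O' : Type*} [CommRing O] [CommRing O'] {P : Ideal O} {u : O} {P' : Ideal O'}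
    {u' : O'} (h : SqMod P u ↔ SqMod P' u') : chi P u = chi P' u' := by
  unfold chi; by_cases h' : SqMod P u
  · rw [if_pos h', if_pos (h.1 h')]
  · rw [if_neg h', if_neg (fun h1 => h' (h.2 h1))]

section
variable {K : Type*} [Field K] [NumberField K]

theorem fin_quot {P : Ideal (𝓞 K)} (h0 : P ≠ ⊥) : Finite (𝓞 K ⧸ P) :=
  Ideal.finiteQuotientOfFreeOfNeBot P h0

theorem chi_mul {P : Ideal (𝓞 K)} (hP : P.IsPrime) (h0 : P ≠ ⊥) {u v : 𝓞 K} (hu : u ∉ P) (hv : v ∉ P) :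
    chi P (u * v) = chi P u + chi P v := by
  have hm : P.IsMaximal := hP.isMaximal h0
  letI := Ideal.Quotient.field P
  haveI := fin_quot h0
  have := isSquare_mul_iff (F := 𝓞 K ⧸ P) (a := Ideal.Quotient.mk P u) (b := Ideal.Quotient.mk P v)
    (by rwa [Ne, Ideal.Quotient.eq_zero_iff_mem]) (by rwa [Ne, Ideal.Quotient.eq_zero_iff_mem])
  rw [← map_mul, ← sqMod_iff, ← sqMod_iff, ← sqMod_iff] at this
  unfold chi
  by_cases h1 : SqMod P u <;> by_cases h2 : SqMod P v <;> simp [this, h1, h2]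
  decide

theorem unit_not_mem {O : Type*} [CommRing O] {P : Ideal O} (hP : P.IsPrime) (u : Oˣ) : (u : O) ∉ P :=
  fun h => hP.ne_top (Ideal.eq_top_of_isUnit_mem _ h u.isUnit)

open Classical in
variable (K) in
/-- the primes over m -/
noncomputable def PS (m : ℕ) : Finset (Ideal (𝓞 K)) :=
  (UniqueFactorizationMonoid.normalizedFactors (Ideal.span {(m : 𝓞 K)})).toFinset

theorem mem_PS {m : ℕ} (hm : m ≠ 0) {P : Ideal (𝓞 K)} : P ∈ PS K m ↔ P.IsPrime ∧ (m : 𝓞 K) ∈ P := by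
  unfold PS
  rw [Multiset.mem_toFinset, Ideal.mem_normalizedFactors_iff, Ideal.span_singleton_le_iff_mem]
  rw [Ne, Ideal.span_singleton_eq_bot]; exact_mod_cast hm

theorem ne_bot_of_nat {m : ℕ} (hm : m ≠ 0) {P : Ideal (𝓞 K)} (h : (m : 𝓞 K) ∈ P) : P ≠ ⊥ := by
  rintro rfl
  exact hm (by exact_mod_cast (Ideal.mem_bot.1 h))

variable (K) in
/-- the units are independent modulo the primes over m -/
def Indep (m : ℕ) : Prop := ∀ T : Ideal (𝓞 K) → ZMod 2,
  (∀ u : (𝓞 K)ˣ, ∑ P ∈ PS K m, T P * chi P (u : 𝓞 K) = 0) → ∀ P ∈ PS K m, T P = 0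

variable (K) in
/-- m is unramified -/
def Unr (m : ℕ) : Prop := ∀ P : Ideal (𝓞 K), P.IsPrime → (m : 𝓞 K) ∈ P → (m : 𝓞 K) ∉ P ^ 2

/-- the sign homomorphism -/
noncomputable def chiHom (J : Finset (Ideal (𝓞 K))) (hJ : ∀ P ∈ J, P.IsPrime ∧ P ≠ ⊥) :
    (𝓞 K)ˣ →* Multiplicative (J → ZMod 2) where
  toFun u := Multiplicative.ofAdd fun P => chi P.1 (u : 𝓞 K)
  map_one' := by
    refine congrArg Multiplicative.ofAdd (funext fun P => ?_)
    exact chi_eq_zero.2 ⟨1, by simp⟩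
  map_mul' u v := by
    rw [← ofAdd_add]
    refine congrArg Multiplicative.ofAdd (funext fun P => ?_)
    exact chi_mul (hJ _ P.2).1 (hJ _ P.2).2 (unit_not_mem (hJ _ P.2).1 u) (unit_not_mem (hJ _ P.2).1 v)

theorem chiHom_surj {m : ℕ} (hm : m ≠ 0) (h : Indep K m) (J : Finset (Ideal (𝓞 K)))
    (hJ : ∀ P ∈ J, P.IsPrime ∧ P ≠ ⊥) (hJm : ∀ P ∈ J, P ∈ PS K m) :
    Function.Surjective (chiHom J hJ) := by
  classical
  set A : AddSubgroup (J → ZMod 2) := (MonoidHom.toAdditive (chiHom J hJ)).range with hA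
  set S : Submodule (ZMod 2) (J → ZMod 2) := AddSubgroup.toZModSubmodule 2 A with hS
  have hmem : ∀ u : (𝓞 K)ˣ, (fun P : J => chi P.1 (u : 𝓞 K)) ∈ S := fun u => ⟨Additive.ofMul u, rfl⟩
  have htop : S = ⊤ := by
    by_contra hne
    obtain ⟨f, hf0, hf⟩ := Submodule.exists_le_ker_of_lt_top S (lt_top_iff_ne_top.2 hne)
    apply hf0
    have hexp : ∀ w, f w = ∑ P : J, w P * f (Pi.single P 1) := fun w => by
      conv_lhs => rw [LinearMap.pi_apply_eq_sum_univ f w]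
      refine Finset.sum_congr rfl fun P _ => ?_
      rw [smul_eq_mul]; congr 2; funext x; simp [Pi.single_apply, eq_comm]
    have := h (fun P => if hP : P ∈ J then f (Pi.single ⟨P, hP⟩ 1) else 0) (by
      intro u
      have h1 := hf (hmem u)
      rw [LinearMap.mem_ker, hexp] at h1
      refine Eq.trans ?_ h1
      rw [← Finset.sum_subset (s₁ := J) (fun P hP => hJm P hP)]
      · rw [← Finset.sum_coe_sort J]
        refine Finset.sum_congr rfl fun P _ => ?_
        simp [mul_comm]
      · intro P _ hP; simp [hP])
    refine LinearMap.ext fun w => ?_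
    rw [hexp, LinearMap.zero_apply]
    refine Finset.sum_eq_zero fun P _ => ?_
    have := this P.1 (hJm _ P.2)
    simp only [P.2, dif_pos] at this
    rw [this, mul_zero]
  intro w
  have : Multiplicative.toAdd w ∈ S := by rw [htop]; trivial
  obtain ⟨u, hu⟩ := this
  exact ⟨Additive.toMul u, hu⟩

end

namespace Quad
variable {K L : Type*} [Field K] [Field L] [NumberField K] [NumberField L] [Algebra K L]
variable (q : Quad K L)

theorem dn_PS {m : ℕ} (hm : m ≠ 0) {P : Ideal (𝓞 L)} (h : P ∈ PS L m) :
    Inv.dn (O := 𝓞 K) P ∈ PS K m := by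
  rw [mem_PS hm] at h ⊢
  exact ⟨Inv.dn_prime P h.1, by rw [Inv.mem_dn, map_natCast]; exact h.2⟩

theorem conj_PS {m : ℕ} (hm : m ≠ 0) {P : Ideal (𝓞 L)} (h : P ∈ PS L m) :
    q.toInv.conj P ∈ PS L m := by
  rw [mem_PS hm] at h ⊢
  exact ⟨q.toInv.conj_prime P h.1, by rw [Inv.mem_conj, map_natCast]; exact h.2⟩

theorem unr_step {m : ℕ} (hm : m ≠ 0) (h : Unr K m) (ω : 𝓞 L)
    (hω : ∀ P ∈ PS L m, ω - q.toInv.τ ω ∉ P) : Unr L m := by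
  intro P hP hmP
  have hPS : P ∈ PS L m := (mem_PS hm).2 ⟨hP, hmP⟩
  have := q.toInv.nonram P hP (ne_bot_of_nat hm hmP) ω (hω P hPS) (m : 𝓞 K)
    (by rw [Inv.mem_dn, map_natCast]; exact hmP)
    (h _ (Inv.dn_prime P hP) (by rw [Inv.mem_dn, map_natCast]; exact hmP))
  rwa [map_natCast] at this

/-- the local norm formula -/
theorem fib_sum {m : ℕ} (hm : m ≠ 0) (ω : 𝓞 L)
    (hω : ∀ P ∈ PS L m, ω - q.toInv.τ ω ∉ P) (h2 : ∀ P ∈ PS L m, (2 : 𝓞 L) ∉ P)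
    (T : Ideal (𝓞 L) → ZMod 2) (hT : ∀ P ∈ PS L m, T (q.toInv.conj P) = T P)
    (u : (𝓞 L)ˣ) (v : 𝓞 K) (huv : algebraMap (𝓞 K) (𝓞 L) v = u * q.toInv.τ u)
    (P : Ideal (𝓞 L)) (hPS : P ∈ PS L m) [DecidableEq (Ideal (𝓞 K))] :
    ∑ P' ∈ PS L m with Inv.dn (O := 𝓞 K) P' = Inv.dn P, T P' * chi P' (u : 𝓞 L) =
      T P * chi (Inv.dn (O := 𝓞 K) P) v := by
  classical
  obtain ⟨hP, hmP⟩ := (mem_PS hm).1 hPS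
  have hP0 := ne_bot_of_nat hm hmP
  have hset : (PS L m).filter (fun P' => Inv.dn (O := 𝓞 K) P' = Inv.dn P) = {P, q.toInv.conj P} := by
    ext P'
    rw [Finset.mem_filter, Finset.mem_insert, Finset.mem_singleton]
    constructor
    · rintro ⟨h1, h3⟩
      obtain ⟨h1, h1'⟩ := (mem_PS hm).1 h1
      exact q.toInv.trans_primes P P' hP h1 (ne_bot_of_nat hm h1') h3.symm
    · rintro (rfl | rfl)
      · exact ⟨hPS, rfl⟩
      · exact ⟨q.conj_PS hm hPS, q.toInv.dn_conj _⟩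
  rw [hset]
  by_cases hc : q.toInv.conj P = P
  · rw [hc, Finset.pair_eq_singleton, Finset.sum_singleton]
    congr 1
    exact chi_congr ((q.toInv.inert_sq P hP hP0 hc (fin_quot (q.toInv.dn_ne P hP0 hP)) ω (hω P hPS)
      (h2 P hPS)).2 u v (unit_not_mem hP u) huv)
  · rw [Finset.sum_pair (Ne.symm hc), hT P hPS, ← mul_add]
    congr 1
    rw [← chi_congr (q.toInv.split_sq P hP hP0 hc v), huv, chi_mul hP hP0 (unit_not_mem hP u),
      chi_congr (q.toInv.sq_conj P u)]
    intro h
    have : IsUnit (q.toInv.τ (u : 𝓞 L)) := u.isUnit.map q.toInv.τ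
    exact hP.ne_top (Ideal.eq_top_of_isUnit_mem _ h this)

theorem indep_step {m : ℕ} (hm : m ≠ 0) (h : Indep K m) (ω : 𝓞 L)
    (hω : ∀ P ∈ PS L m, ω - q.toInv.τ ω ∉ P) (h2 : ∀ P ∈ PS L m, (2 : 𝓞 L) ∉ P)
    (hN : ∀ u : (𝓞 K)ˣ, ∃ ε : (𝓞 L)ˣ, ε * q.toInv.σu ε = uu K L u) : Indep L m := by
  classical
  have key : ∀ T : Ideal (𝓞 L) → ZMod 2, (∀ P ∈ PS L m, T (q.toInv.conj P) = T P) →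
      (∀ u : (𝓞 L)ˣ, ∑ P ∈ PS L m, T P * chi P (u : 𝓞 L) = 0) → ∀ P ∈ PS L m, T P = 0 := by
    intro T hT hbad
    set T0 : Ideal (𝓞 K) → ZMod 2 := fun p =>
      if hp : ∃ P ∈ PS L m, Inv.dn (O := 𝓞 K) P = p then T hp.choose else 0 with hT0
    have hT0' : ∀ P ∈ PS L m, T0 (Inv.dn P) = T P := by
      intro P hPS
      have hex : ∃ P' ∈ PS L m, Inv.dn (O := 𝓞 K) P' = Inv.dn P := ⟨P, hPS, rfl⟩
      rw [hT0]; simp only [hex, dif_pos]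
      obtain ⟨h1, h3⟩ := hex.choose_spec
      obtain ⟨h1, h1'⟩ := (mem_PS hm).1 h1
      rcases q.toInv.trans_primes P _ ((mem_PS hm).1 hPS).1 h1 (ne_bot_of_nat hm h1') h3.symm with h | h
      · rw [h]
      · rw [h, hT P hPS]
    have := h T0 (by
      intro v
      obtain ⟨u, hu⟩ := hN v
      have huv : algebraMap (𝓞 K) (𝓞 L) v = u * q.toInv.τ u := (congrArg Units.val hu).symm
      refine Eq.trans ?_ (hbad u)
      rw [← Finset.sum_fiberwise_of_maps_to (s := PS L m) (t := PS K m) (g := fun P => Inv.dn (O := 𝓞 K) P)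
        (fun P hP => dn_PS hm hP)]
      refine Finset.sum_congr rfl fun p hp => ?_
      by_cases hex : ∃ P ∈ PS L m, Inv.dn (O := 𝓞 K) P = p
      · obtain ⟨P, hPS, rfl⟩ := hex
        rw [hT0' P hPS]
        exact (q.fib_sum hm ω hω h2 T hT u v huv P hPS).symm
      · rw [hT0]; simp only [hex, dif_neg, not_false_eq_true, zero_mul]
        symm
        refine Finset.sum_eq_zero fun P hP => ?_
        rw [Finset.mem_filter] at hP
        exact absurd ⟨P, hP.1, hP.2⟩ hex)
    intro P hPS
    rw [← hT0' P hPS]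
    exact this _ (dn_PS hm hPS)
  intro T hbad
  have hbad' : ∀ u : (𝓞 L)ˣ, ∑ P ∈ PS L m, T (q.toInv.conj P) * chi P (u : 𝓞 L) = 0 := by
    intro u
    rw [← hbad (q.toInv.σu u)]
    refine Finset.sum_nbij' (fun P => q.toInv.conj P) (fun P => q.toInv.conj P)
      (fun P hP => q.conj_PS hm hP) (fun P hP => q.conj_PS hm hP)
      (fun P _ => q.toInv.conj_conj P) (fun P _ => q.toInv.conj_conj P) ?_
    intro P _
    congr 1
    refine chi_congr ?_
    rw [q.toInv.sq_conj]
    have : q.toInv.τ ((q.toInv.σu u : (𝓞 L)ˣ) : 𝓞 L) = u := q.toInv.inv _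
    rw [this]
  have h1 := key (fun P => T P + T (q.toInv.conj P))
    (fun P _ => by simp only [q.toInv.conj_conj]; ring)
    (fun u => by simp only [add_mul, Finset.sum_add_distrib, hbad, hbad']; ring)
  refine key T (fun P hP => ?_) hbad
  have := h1 P hP
  have h3 : T P + T P = 0 := CharTwo.add_self_eq_zero _
  linear_combination this - h3

end Quad
end CnFProof

end

section
open NumberField IsDedekindDomain

namespace CnFProof
set_option linter.unusedSectionVars false
set_option linter.unusedVariables false
set_option linter.style.haveILetI false

/-- totally real, elementary form -/
def TR (K : Type*) [Field K] : Prop := ∀ (ψ : K →+* ℂ) (x : K), (ψ x).im = 0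

theorem TR.real {K : Type*} [Field K] [NumberField K] (h : TR K) : IsTotallyReal K := by
  constructor
  intro v
  rw [InfinitePlace.isReal_iff, ComplexEmbedding.isReal_iff]
  ext x
  simp only [ComplexEmbedding.conjugate_coe_eq]
  exact Complex.conj_eq_iff_im.2 (h _ x)

theorem Quad.TR_step {K L : Type*} [Field K] [Field L] [Algebra K L] (q : Quad K L) (h : TR K)
    (hd : ∀ ψ : K →+* ℂ, 0 < (ψ q.d).re) : TR L := by
  intro ψ x
  have hr := h (ψ.comp (algebraMap K L))
  have hθ : (ψ q.θ).im = 0 := by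
    have h1 := congrArg ψ q.hθ2
    rw [map_pow] at h1
    have h2 := hd (ψ.comp (algebraMap K L))
    have h3 := hr q.d
    simp only [RingHom.comp_apply] at h2 h3
    rw [← h1, pow_two] at h2 h3
    rw [Complex.mul_re] at h2
    rw [Complex.mul_im] at h3
    by_contra hne
    have : (ψ q.θ).re = 0 := by
      have : (ψ q.θ).re * (ψ q.θ).im = 0 := by linarith
      exact (mul_eq_zero.1 this).resolve_right hne
    rw [this] at h2
    nlinarith [sq_nonneg (ψ q.θ).im]
  obtain ⟨a, b, rfl⟩ := q.span x
  have ha := hr a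
  have hb := hr b
  simp only [RingHom.comp_apply] at ha hb
  rw [map_add, map_mul, Complex.add_im, Complex.mul_im, ha, hb, hθ]
  ring

theorem not_unit_nat (K : Type*) [Field K] [NumberField K] {m : ℕ} (hm : m ≠ 1) :
    ¬ IsUnit (m : 𝓞 K) := by
  intro h
  have h1 := h.map (Algebra.norm ℤ (S := 𝓞 K))
  rw [show (m : 𝓞 K) = algebraMap ℤ (𝓞 K) (m : ℤ) by simp, Algebra.norm_algebraMap] at h1
  have h2 : Module.finrank ℤ (𝓞 K) ≠ 0 := Module.finrank_pos.ne'
  rw [isUnit_pow_iff h2, Int.isUnit_iff] at h1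
  omega

theorem exists_prime_over (K : Type*) [Field K] [NumberField K] {m : ℕ} (hm : m ≠ 1) :
    ∃ P : Ideal (𝓞 K), P.IsPrime ∧ (m : 𝓞 K) ∈ P := by
  have : Ideal.span {(m : 𝓞 K)} ≠ ⊤ := fun h => not_unit_nat K hm (Ideal.span_singleton_eq_top.1 h)
  obtain ⟨P, hP, hle⟩ := Ideal.exists_le_maximal _ this
  exact ⟨P, hP.isPrime, hle (Ideal.mem_span_singleton_self _)⟩

theorem two_not_mem {O : Type*} [CommRing O] {P : Ideal O} (hP : P.IsPrime) {a b : ℕ} (hab : a.Coprime b)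
    (h : (a : O) ∈ P) : (b : O) ∉ P := by
  intro h'
  apply hP.ne_top
  rw [Ideal.eq_top_iff_one]
  have hb := Nat.gcd_eq_gcd_ab a b
  rw [hab] at hb
  have := congrArg (Int.cast (R := O)) hb
  push_cast at this
  rw [this]
  exact add_mem (Ideal.mul_mem_right _ _ h) (Ideal.mul_mem_right _ _ h')

theorem Inv.mem_sq {O R : Type*} [CommRing O] [CommRing R] [Algebra O R] [IsDedekindDomain O]
    [IsDedekindDomain R] (Q : Inv O R) (P : Ideal R) (c : O)
    (h : algebraMap O R c ∈ (P * Q.conj P) ^ 2) : c ∈ (Inv.dn (O := O) P) ^ 2 := by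
  rw [← Q.map_nm, ← Ideal.map_pow] at h
  have h1 : c ∈ ((Q.nm P) ^ 2 : Ideal O) := by
    have : Ideal.span {c} ≤ (Q.nm P) ^ 2 := Q.map_le (by
      rw [Ideal.map_span, Set.image_singleton, Ideal.span_singleton_le_iff_mem]; exact h)
    exact this (Ideal.mem_span_singleton_self _)
  exact Ideal.pow_right_mono (Q.nm_le_dn P) 2 h1

/-- properties of the n-th layer over ℚ(√p) -/
structure Stage (q s : ℕ) (K : Type*) [Field K] [NumberField K] (x : 𝓞 K) : Prop where
  tr : TR K
  small : ∀ ψ : K →+* ℂ, -2 < (ψ (x : K)).re ∧ (ψ (x : K)).re < 2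
  odd : OddCl K
  away : ∀ P : Ideal (𝓞 K), P.IsPrime → (2 : 𝓞 K) ∉ P → 2 - x ∉ P ∧ 2 + x ∉ P
  uniq : ∀ P P' : Ideal (𝓞 K), P.IsPrime → P'.IsPrime → (2 : 𝓞 K) ∈ P → (2 : 𝓞 K) ∈ P' → P = P'
  eis : ∀ P : Ideal (𝓞 K), P.IsPrime → (2 : 𝓞 K) ∈ P → 2 + x ∈ P ∧ 2 + x ∉ P ^ 2
  uns : Unr K s
  unq : Unr K q
  ins : Indep K s
  inq : Indep K q
  nsq : ∀ P ∈ PS K q, ¬ SqMod P (2 + x) ∧ ¬ SqMod P (2 - x)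
  le2 : (PS K q).card ≤ 2

section
variable {K L : Type*} [Field K] [Field L] [NumberField K] [NumberField L] [Algebra K L]

theorem Stage.not_range {q s : ℕ} {x : 𝓞 K} (h : Stage q s K x) (y : L)
    (hy : y ^ 2 = algebraMap K L (2 + x)) (hyi : IsIntegral ℤ y) : y ∉ Set.range (algebraMap K L) := by
  rintro ⟨w, rfl⟩
  rw [← map_pow] at hy
  have hw := (algebraMap K L).injective hy
  have hwi : IsIntegral ℤ w := (isIntegral_algebraMap_iff (algebraMap K L).injective).1 hyi
  set w' : 𝓞 K := ⟨w, hwi⟩ with hw'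
  have h1 : w' ^ 2 = 2 + x := by
    apply RingOfIntegers.coe_injective
    rw [map_pow, map_add, map_ofNat]; exact hw
  obtain ⟨P, hP, h2⟩ := exists_prime_over K (m := 2) (by norm_num)
  obtain ⟨h3, h4⟩ := h.eis P hP (by exact_mod_cast h2)
  rw [← h1] at h3 h4
  exact h4 (Ideal.pow_mem_pow (hP.mem_of_pow_mem _ h3) 2)

theorem Stage.step {q s : ℕ} (hq : q.Coprime 2) (hs : s.Coprime 2) {x : 𝓞 K} (h : Stage q s K x)
    (Q : Quad K L) (x' : 𝓞 L)
    (hd : Q.d = ((2 + x : 𝓞 K) : K)) (hx' : Q.θ = x') : Stage q s L x' := by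
  have hq0 : q ≠ 0 := by rintro rfl; simp at hq
  have hs0 : s ≠ 0 := by rintro rfl; simp at hs
  have hsq : x' ^ 2 = algebraMap (𝓞 K) (𝓞 L) (2 + x) := by
    ext
    have := Q.hθ2
    rw [hd, hx'] at this
    exact this
  have hsq2 : x' ^ 2 = 2 + algebraMap (𝓞 K) (𝓞 L) x := by rw [hsq, map_add, map_ofNat]
  have hτ : Q.toInv.τ x' = -x' := by
    ext
    rw [Q.coe_τ, ← hx', Q.hσθ, hx']; rfl
  have hω : x' - Q.toInv.τ x' = 2 * x' := by rw [hτ]; ring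
  have hnm : algebraMap (𝓞 K) (𝓞 L) (2 - x) = (2 + x') * (2 - x') := by
    rw [map_sub, map_ofNat]; linear_combination hsq2
  have htr : TR L := Q.TR_step h.tr (by
    intro ψ
    rw [hd]
    have := (h.small ψ).1
    simp only [map_add, map_ofNat, Complex.add_re, Complex.re_ofNat] at this ⊢
    linarith)
  haveI := h.tr.real
  haveI := htr.real
  have h2dn : ∀ P : Ideal (𝓞 L), (2 : 𝓞 K) ∈ Inv.dn (O := 𝓞 K) P ↔ (2 : 𝓞 L) ∈ P := fun P => by
    rw [Inv.mem_dn, map_ofNat]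
  have haway : ∀ P : Ideal (𝓞 L), P.IsPrime → (2 : 𝓞 L) ∉ P →
      (2 - x' ∉ P ∧ 2 + x' ∉ P) ∧ x' - Q.toInv.τ x' ∉ P := by
    intro P hP h2
    obtain ⟨h3, h4⟩ := h.away _ (Inv.dn_prime (O := 𝓞 K) P hP) (by rwa [h2dn])
    rw [Inv.mem_dn] at h3 h4
    rw [hnm] at h3
    rw [← hsq] at h4
    refine ⟨⟨fun hc => h3 (Ideal.mul_mem_left _ _ hc), fun hc => h3 (Ideal.mul_mem_right _ _ hc)⟩, ?_⟩
    rw [hω]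
    intro hc
    rcases hP.mem_or_mem hc with hc | hc
    · exact h2 hc
    · exact h4 (by rw [pow_two]; exact Ideal.mul_mem_left _ _ hc)
  have hgood : Q.toInv.Good (PS K 2) := by
    intro P hP hP0 hPS
    rw [mem_PS (by norm_num)] at hPS
    have h2 : (2 : 𝓞 K) ∉ P := fun h2 => hPS ⟨hP, by exact_mod_cast h2⟩
    refine ⟨x', 4 * (2 + x), ?_, ?_⟩
    · rw [hω, map_mul, ← hsq, map_ofNat]; ring
    · intro hc
      rcases hP.mem_or_mem hc with hc | hc
      · apply h2
        have : (2 : 𝓞 K) * 2 ∈ P := by norm_num; exact hc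
        rcases hP.mem_or_mem this with h | h <;> exact h
      · exact (h.away P hP h2).2 hc
  have hcard : (PS K 2).card ≤ 1 := by
    rw [Finset.card_le_one]
    intro P hP P' hP'
    rw [mem_PS (by norm_num)] at hP hP'
    exact h.uniq P P' hP.1 hP'.1 (by exact_mod_cast hP.2) (by exact_mod_cast hP'.2)
  obtain ⟨hodd, hN⟩ := Q.main_small h.odd hgood hcard
  have hoddm : ∀ m : ℕ, m ≠ 0 → m.Coprime 2 → ∀ P ∈ PS L m, (2 : 𝓞 L) ∉ P := by
    intro m hm0 hm P hP
    rw [mem_PS hm0] at hP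
    exact_mod_cast two_not_mem hP.1 hm hP.2
  have hωm : ∀ m : ℕ, m ≠ 0 → m.Coprime 2 → ∀ P ∈ PS L m, x' - Q.toInv.τ x' ∉ P :=
    fun m hm0 hm P hP => (haway P ((mem_PS hm0).1 hP).1 (hoddm m hm0 hm P hP)).2
  have hconj2 : ∀ P : Ideal (𝓞 L), P.IsPrime → (2 : 𝓞 L) ∈ P →
      (x' ∈ P ∧ 2 + x' ∈ P) ∧ Q.toInv.conj P = P ∧ 2 + x' ∉ P ^ 2 := by
    intro P hP h2
    have hP0 : P ≠ ⊥ := ne_bot_of_nat (m := 2) (by norm_num) (by exact_mod_cast h2)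
    obtain ⟨h3, h4⟩ := h.eis _ (Inv.dn_prime (O := 𝓞 K) P hP) (by rwa [h2dn])
    have hxP : x' ∈ P := by
      rw [Inv.mem_dn, ← hsq] at h3
      exact hP.mem_of_pow_mem _ h3
    refine ⟨⟨hxP, add_mem h2 hxP⟩, ?_, ?_⟩
    · by_contra hne
      apply h4
      apply Q.toInv.mem_sq
      rw [← hsq]
      refine Ideal.pow_mem_pow ?_ 2
      have hm : P.IsMaximal := hP.isMaximal hP0
      have hm' : (Q.toInv.conj P).IsMaximal :=
        (Q.toInv.conj_prime P hP).isMaximal (Q.toInv.conj_ne hP0)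
      have hcop : IsCoprime P (Q.toInv.conj P) := Ideal.isCoprime_of_isMaximal (Ne.symm hne)
      rw [Ideal.mul_eq_inf_of_isCoprime hcop]
      exact ⟨hxP, by rw [SetLike.mem_coe, Inv.mem_conj, hτ]; exact neg_mem hxP⟩
    · intro hc
      apply h4
      have h5 : algebraMap (𝓞 K) (𝓞 L) (2 - x) ∈ (P * Q.toInv.conj P) ^ 2 := by
        rw [hnm, mul_pow]
        refine Ideal.mul_mem_mul hc ?_
        rw [← Q.toInv.conj_pow, Inv.mem_conj, map_sub, hτ, map_ofNat, sub_neg_eq_add]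
        exact hc
      have h6 := Q.toInv.mem_sq P _ h5
      have h7 : (2 + x : 𝓞 K) = 2 ^ 2 - (2 - x) := by ring
      rw [h7]
      exact sub_mem (Ideal.pow_mem_pow (by rwa [h2dn]) 2) h6
  have hqc : ∀ P ∈ PS L q, Q.toInv.conj P = P := by
    intro P hPS
    obtain ⟨hP, hqP⟩ := (mem_PS hq0).1 hPS
    have hP0 := ne_bot_of_nat hq0 hqP
    by_contra hne
    obtain ⟨a, ha⟩ := Q.toInv.split_res P hP hP0 hne x'
    refine (h.nsq _ (Quad.dn_PS (K := K) hq0 hPS)).1 ⟨a, ?_⟩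
    rw [Inv.mem_dn, map_sub, ← hsq, map_pow]
    have : x' ^ 2 - algebraMap (𝓞 K) (𝓞 L) a ^ 2 =
      (x' - algebraMap (𝓞 K) (𝓞 L) a) * (x' + algebraMap (𝓞 K) (𝓞 L) a) := by ring
    rw [this]
    exact Ideal.mul_mem_right _ _ ha
  refine ⟨htr, ?_, hodd, fun P hP h2 => (haway P hP h2).1, ?_, ?_, ?_, ?_, ?_, ?_, ?_, ?_⟩
  · intro ψ
    have h1 := h.small (ψ.comp (algebraMap K L))
    have h2 := congrArg ψ Q.hθ2
    rw [map_pow, hd, hx'] at h2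
    have h3 := htr ψ (x' : L)
    have h4 := congrArg Complex.re h2
    rw [pow_two, Complex.mul_re, h3] at h4
    simp only [RingHom.comp_apply] at h1
    simp only [map_add, map_ofNat, Complex.add_re, Complex.re_ofNat] at h4
    constructor <;> nlinarith
  · intro P P' hP hP' h2 h2'
    have hP0' : P' ≠ ⊥ := ne_bot_of_nat (m := 2) (by norm_num) (by exact_mod_cast h2')
    have h3 := h.uniq _ _ (Inv.dn_prime (O := 𝓞 K) P hP) (Inv.dn_prime (O := 𝓞 K) P' hP')
      (by rwa [h2dn]) (by rwa [h2dn])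
    rcases Q.toInv.trans_primes P P' hP hP' hP0' h3 with h | h
    · exact h.symm
    · rw [h, (hconj2 P hP h2).2.1]
  · intro P hP h2
    exact ⟨(hconj2 P hP h2).1.2, (hconj2 P hP h2).2.2⟩
  · exact Q.unr_step hs0 h.uns x' (hωm s hs0 hs)
  · exact Q.unr_step hq0 h.unq x' (hωm q hq0 hq)
  · exact Q.indep_step hs0 h.ins x' (hωm s hs0 hs) (hoddm s hs0 hs) hN
  · exact Q.indep_step hq0 h.inq x' (hωm q hq0 hq) (hoddm q hq0 hq) hN
  · intro P hPS
    obtain ⟨hP, hqP⟩ := (mem_PS hq0).1 hPS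
    have hP0 := ne_bot_of_nat hq0 hqP
    have h2 := hoddm q hq0 hq P hPS
    have h3 := (Q.toInv.inert_sq P hP hP0 (hqc P hPS) (fin_quot (Q.toInv.dn_ne P hP0 hP)) x'
      (hωm q hq0 hq P hPS) h2).2
    have h4 := (h.nsq _ (Quad.dn_PS (K := K) hq0 hPS)).2
    rw [h3 (2 + x') (2 - x) (haway P hP h2).1.2 (by
        rw [hnm, map_add, map_ofNat, hτ]; ring),
      h3 (2 - x') (2 - x) (haway P hP h2).1.1 (by
        rw [hnm, map_sub, map_ofNat, hτ]; ring)]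
    exact ⟨h4, h4⟩
  · refine le_trans (Finset.card_le_card_of_injOn (fun P => Inv.dn (O := 𝓞 K) P)
      (fun P hP => Quad.dn_PS (K := K) hq0 hP) ?_) h.le2
    intro P hP P' hP' hdn
    obtain ⟨hP1, hP2⟩ := (mem_PS hq0).1 hP'
    rcases Q.toInv.trans_primes P P' ((mem_PS hq0).1 hP).1 hP1 (ne_bot_of_nat hq0 hP2) hdn with h | h
    · exact h.symm
    · rw [h, hqc P hP]

end
end CnFProof

end

section
open NumberField IsDedekindDomain

namespace CnFProof
set_option linter.unusedSectionVars false
set_option linter.unusedVariables false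
set_option linter.style.haveILetI false

theorem oddCl_rat : OddCl ℚ := by
  unfold OddCl
  have := Rat.classNumber_eq
  unfold NumberField.classNumber at this
  rw [Nat.card_eq_fintype_card]
  convert odd_one

theorem int_of_rat (a : 𝓞 ℚ) : ∃ n : ℤ, a = n := by
  refine ⟨Rat.ringOfIntegersEquiv a, ?_⟩
  apply Rat.ringOfIntegersEquiv.injective
  simp

theorem int_mem {O : Type*} [CommRing O] {P : Ideal O} (hP : P.IsPrime) {l : ℕ} (hl : l.Prime)
    (h : (l : O) ∈ P) (n : ℤ) : (n : O) ∈ P ↔ (l : ℤ) ∣ n := by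
  constructor
  · intro hn
    by_contra hd
    have hcop : IsCoprime (l : ℤ) n := (Prime.coprime_iff_not_dvd (Nat.prime_iff_prime_int.1 hl)).2 hd
    obtain ⟨a, b, hab⟩ := hcop
    apply hP.ne_top
    rw [Ideal.eq_top_iff_one]
    have := congrArg (Int.cast (R := O)) hab
    push_cast at this
    rw [← this]
    exact add_mem (Ideal.mul_mem_left _ _ h) (Ideal.mul_mem_left _ _ hn)
  · rintro ⟨c, rfl⟩
    push_cast
    exact Ideal.mul_mem_right _ _ h

theorem uniq_rat {l : ℕ} (hl : l.Prime) {P P' : Ideal (𝓞 ℚ)} (hP : P.IsPrime) (hP' : P'.IsPrime)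
    (h : (l : 𝓞 ℚ) ∈ P) (h' : (l : 𝓞 ℚ) ∈ P') : P = P' := by
  ext a
  obtain ⟨n, rfl⟩ := int_of_rat a
  rw [int_mem hP hl h, int_mem hP' hl h']

theorem unr_rat {l : ℕ} (hl : l.Prime) : Unr ℚ l := by
  intro P hP h h2
  have hle : P ≤ Ideal.span {(l : 𝓞 ℚ)} := by
    intro a ha
    obtain ⟨n, rfl⟩ := int_of_rat a
    obtain ⟨c, rfl⟩ := (int_mem hP hl h _).1 ha
    rw [Ideal.mem_span_singleton]
    exact ⟨c, by push_cast; rfl⟩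
  have h3 := Ideal.pow_right_mono hle 2 h2
  rw [Ideal.span_singleton_pow, Ideal.mem_span_singleton] at h3
  obtain ⟨t, ht⟩ := h3
  have hl0 : (l : 𝓞 ℚ) ≠ 0 := by exact_mod_cast hl.ne_zero
  have : (l : 𝓞 ℚ) * t = 1 := mul_left_cancel₀ hl0 (by rw [mul_one]; linear_combination -ht)
  exact not_unit_nat ℚ hl.ne_one (IsUnit.of_mul_eq_one _ this)

theorem int_dvd_zmod {l : ℕ} {n : ℤ} : (l : ℤ) ∣ n ↔ (n : ZMod l) = 0 :=
  (ZMod.intCast_zmod_eq_zero_iff_dvd n l).symm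

theorem indep_rat {l : ℕ} (hl : l.Prime) (h4 : l % 4 = 3) : Indep ℚ l := by
  intro T hT P hPS
  have hsing : PS ℚ l = {P} := by
    ext P'
    rw [Finset.mem_singleton]
    constructor
    · intro h
      rw [mem_PS hl.ne_zero] at h hPS
      exact uniq_rat hl h.1 hPS.1 h.2 hPS.2
    · rintro rfl; exact hPS
  have h1 := hT (-1)
  rw [hsing, Finset.sum_singleton] at h1
  rw [mem_PS hl.ne_zero] at hPS
  rcases mul_eq_zero.1 h1 with h | h
  · exact h
  · exfalso
    obtain ⟨c, hc⟩ := chi_eq_zero.1 h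
    obtain ⟨n, rfl⟩ := int_of_rat c
    have h2 : ((-1 - n ^ 2 : ℤ) : 𝓞 ℚ) ∈ P := by push_cast; simpa using hc
    rw [int_mem hPS.1 hl hPS.2, int_dvd_zmod] at h2
    push_cast at h2
    haveI := Fact.mk hl
    exact ZMod.mod_four_ne_three_of_sq_eq_neg_one (p := l) (y := (n : ZMod l))
      (by linear_combination -h2) h4

theorem TR_rat : TR ℚ := by
  intro ψ x
  rw [eq_ratCast]; simp

theorem Stage.base {p q s : ℕ} (hp : p.Prime) (hq : q.Prime) (hs : s.Prime) (hpq : p ≠ q) (hps : p ≠ s)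
    (hp8 : p % 8 = 5) (hq8 : q % 8 = 3) (hs4 : s % 4 = 3)
    (hQRq : IsSquare (p : ZMod q))
    {K : Type*} [Field K] [NumberField K] (Q : Quad ℚ K) (hd : Q.d = p) : Stage q s K 0 := by
  have hq2 : q.Coprime 2 := by
    rw [Nat.coprime_two_right, Nat.odd_iff]; omega
  have hs2 : s.Coprime 2 := by
    rw [Nat.coprime_two_right, Nat.odd_iff]; omega
  have hp2 : p.Coprime 2 := by
    rw [Nat.coprime_two_right, Nat.odd_iff]; omega
  have hpqc : q.Coprime p := (Nat.coprime_primes hq hp).2 hpq.symm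
  have hpsc : s.Coprime p := (Nat.coprime_primes hs hp).2 hps.symm
  obtain ⟨c, hc⟩ : ∃ c : ℕ, p = 4 * (2 * c + 1) + 1 := ⟨(p - 5) / 8, by omega⟩
  have hθ2 : Q.θ ^ 2 = p := by rw [Q.hθ2, hd]; simp
  have hK2 : (2 : K) ≠ 0 := two_ne_zero
  have hωint : IsIntegral ℤ ((1 + Q.θ) / 2) := by
    refine ⟨Polynomial.X ^ 2 - Polynomial.X - Polynomial.C ((2 * c + 1 : ℕ) : ℤ), by monicity!, ?_⟩
    simp only [Polynomial.eval₂_sub, Polynomial.eval₂_pow, Polynomial.eval₂_X, Polynomial.eval₂_C]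
    rw [hc] at hθ2
    push_cast at hθ2
    simp only [eq_intCast]
    push_cast
    field_simp
    linear_combination hθ2
  set ω : 𝓞 K := ⟨(1 + Q.θ) / 2, hωint⟩ with hω
  set t : 𝓞 K := ⟨Q.θ, Q.θint⟩ with ht
  have htω : ω + ω = 1 + t := by
    apply RingOfIntegers.coe_injective
    rw [map_add, map_add, map_one]
    change (1 + Q.θ) / 2 + (1 + Q.θ) / 2 = 1 + Q.θ
    ring
  have htt : t ^ 2 = p := by
    apply RingOfIntegers.coe_injective
    rw [map_pow, map_natCast]; exact hθ2
  have hτt : Q.toInv.τ t = -t := by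
    apply RingOfIntegers.coe_injective
    rw [map_neg]
    exact (Q.coe_τ t).trans Q.hσθ
  have h20 : (2 : 𝓞 K) ≠ 0 := two_ne_zero
  have hτω : ω - Q.toInv.τ ω = t := by
    apply mul_left_cancel₀ h20
    have h1 := congrArg Q.toInv.τ htω
    rw [map_add, map_add, map_one, hτt] at h1
    linear_combination htω - h1
  have hωeq : ω ^ 2 - ω - ((2 * c + 1 : ℕ) : 𝓞 K) = 0 := by
    apply mul_left_cancel₀ (mul_ne_zero h20 h20)
    rw [hc] at htt
    push_cast at htt ⊢
    linear_combination htt + (2 * ω - 2 + 1 + t) * htω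
  have htr : TR K := Q.TR_step TR_rat (by
    intro ψ; rw [hd]; simp; exact hp.pos)
  haveI := htr.real
  haveI := TR_rat.real
  have hgood : Q.toInv.Good (PS ℚ p) := by
    intro P hP hP0 hPS
    rw [mem_PS hp.ne_zero] at hPS
    exact ⟨ω, p, by rw [hτω, htt, map_natCast], fun h => hPS ⟨hP, h⟩⟩
  have hcard : (PS ℚ p).card ≤ 1 := by
    rw [Finset.card_le_one]
    intro P hP P' hP'
    rw [mem_PS hp.ne_zero] at hP hP'
    exact uniq_rat hp hP.1 hP'.1 hP.2 hP'.2
  obtain ⟨hodd, hN⟩ := Q.main_small oddCl_rat hgood hcard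
  have hωm : ∀ m : ℕ, m ≠ 0 → m.Coprime p → ∀ P ∈ PS K m, ω - Q.toInv.τ ω ∉ P := by
    intro m hm0 hm P hP hcon
    rw [mem_PS hm0] at hP
    rw [hτω] at hcon
    refine two_not_mem hP.1 hm hP.2 ?_
    rw [← htt]
    exact Ideal.pow_mem_of_mem _ hcon 2 (by norm_num)
  have hoddm : ∀ m : ℕ, m ≠ 0 → m.Coprime 2 → ∀ P ∈ PS K m, (2 : 𝓞 K) ∉ P := by
    intro m hm0 hm P hP
    rw [mem_PS hm0] at hP
    exact_mod_cast two_not_mem hP.1 hm hP.2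
  have hun2 : Unr K 2 := Q.unr_step (by norm_num) (unr_rat Nat.prime_two) ω
    (hωm 2 (by norm_num) hp2.symm)
  have hcq : ∀ P ∈ PS K q, Q.toInv.conj P ≠ P := by
    intro P hPS hcon
    have h2 := hoddm q hq.ne_zero hq2 P hPS
    have hωP := hωm q hq.ne_zero hpqc P hPS
    rw [hτω] at hωP
    obtain ⟨hP, hqP⟩ := (mem_PS hq.ne_zero).1 hPS
    haveI := Fact.mk hq
    obtain ⟨r, hr⟩ := hQRq
    obtain ⟨r, rfl⟩ := ZMod.intCast_surjective r
    have h1 : (q : ℤ) ∣ (p : ℤ) - r * r := by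
      rw [int_dvd_zmod]; push_cast; rw [hr]; ring
    have h3 : (((p : ℤ) - r * r : ℤ) : 𝓞 K) ∈ P := (int_mem hP hq hqP _).2 h1
    have h4 : (t - r) * (t + r) ∈ P := by
      have : (t - r) * (t + r) = (((p : ℤ) - r * r : ℤ) : 𝓞 K) := by
        push_cast; rw [← htt]; ring
      rwa [this]
    have h5 : ∀ r : ℤ, t - (r : 𝓞 K) ∈ P → False := by
      intro r h
      have h' : Q.toInv.τ (t - (r : 𝓞 K)) ∈ P := by
        rw [← Q.toInv.mem_conj, hcon]; exact h
      rw [map_sub, hτt, map_intCast] at h'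
      have h6 : 2 * t ∈ P := by
        have : 2 * t = (t - (r : 𝓞 K)) - (-t - (r : 𝓞 K)) := by ring
        rw [this]; exact sub_mem h h'
      rcases hP.mem_or_mem h6 with h | h
      · exact h2 h
      · exact hωP h
    rcases hP.mem_or_mem h4 with h | h
    · exact h5 r h
    · refine h5 (-r) ?_
      push_cast; rw [sub_neg_eq_add]; exact h
  refine ⟨htr, ?_, hodd, ?_, ?_, ?_, ?_, ?_, ?_, ?_, ?_, ?_⟩
  · intro ψ; simp
  · intro P hP h2; simpa using h2
  · have hc2 : ∀ P : Ideal (𝓞 K), P.IsPrime → (2 : 𝓞 K) ∈ P → Q.toInv.conj P = P := by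
      intro P hP h2
      have hP0 : P ≠ ⊥ := ne_bot_of_nat (m := 2) (by norm_num) (by exact_mod_cast h2)
      by_contra hne
      obtain ⟨a, ha⟩ := Q.toInv.split_res P hP hP0 hne ω
      obtain ⟨n, rfl⟩ := int_of_rat a
      rw [map_intCast] at ha
      have h3 : ((n ^ 2 - n - (2 * c + 1) : ℤ) : 𝓞 K) ∈ P := by
        have : ((n ^ 2 - n - (2 * c + 1) : ℤ) : 𝓞 K) = -((ω - n) * (ω + n - 1)) := by
          push_cast at hωeq ⊢
          linear_combination hωeq
        rw [this]
        exact neg_mem (Ideal.mul_mem_right _ _ ha)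
      rw [int_mem hP Nat.prime_two (by exact_mod_cast h2)] at h3
      have h4 : Even (n ^ 2 - n) := by
        rw [show n ^ 2 - n = (n - 1) * (n - 1 + 1) by ring]; exact Int.even_mul_succ_self _
      obtain ⟨k, hk⟩ := h4
      push_cast at h3
      omega
    intro P P' hP hP' h2 h2'
    have hP0' : P' ≠ ⊥ := ne_bot_of_nat (m := 2) (by norm_num) (by exact_mod_cast h2')
    have h3 := uniq_rat Nat.prime_two (Inv.dn_prime (O := 𝓞 ℚ) P hP) (Inv.dn_prime (O := 𝓞 ℚ) P' hP')
      (by rw [Inv.mem_dn, map_natCast]; exact_mod_cast h2)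
      (by rw [Inv.mem_dn, map_natCast]; exact_mod_cast h2')
    rcases Q.toInv.trans_primes P P' hP hP' hP0' h3 with h | h
    · exact h.symm
    · rw [h, hc2 P hP h2]
  · intro P hP h2
    rw [add_zero]
    refine ⟨h2, ?_⟩
    exact_mod_cast hun2 P hP (by exact_mod_cast h2)
  · exact Q.unr_step hs.ne_zero (unr_rat hs) ω (hωm s hs.ne_zero hpsc)
  · exact Q.unr_step hq.ne_zero (unr_rat hq) ω (hωm q hq.ne_zero hpqc)
  · exact Q.indep_step hs.ne_zero (indep_rat hs hs4) ω (hωm s hs.ne_zero hpsc)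
      (hoddm s hs.ne_zero hs2) hN
  · exact Q.indep_step hq.ne_zero (indep_rat hq (by omega)) ω (hωm q hq.ne_zero hpqc)
      (hoddm q hq.ne_zero hq2) hN
  · intro P hPS
    rw [add_zero, sub_zero, and_self]
    obtain ⟨hP, hqP⟩ := (mem_PS hq.ne_zero).1 hPS
    have h1 := Q.toInv.split_sq P hP (ne_bot_of_nat hq.ne_zero hqP) (hcq P hPS) 2
    rw [map_ofNat] at h1
    rw [h1]
    rintro ⟨a, ha⟩
    obtain ⟨n, rfl⟩ := int_of_rat a
    have h2 : ((2 - n ^ 2 : ℤ) : 𝓞 ℚ) ∈ Inv.dn (O := 𝓞 ℚ) P := by push_cast; exact ha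
    rw [int_mem (Inv.dn_prime P hP) hq (by rw [Inv.mem_dn, map_natCast]; exact hqP), int_dvd_zmod] at h2
    push_cast at h2
    haveI := Fact.mk hq
    have h3 : IsSquare (2 : ZMod q) := ⟨n, by linear_combination h2⟩
    rw [ZMod.exists_sq_eq_two_iff (by rintro rfl; norm_num at hq8)] at h3
    omega
  · classical
    rcases (PS K q).eq_empty_or_nonempty with h | ⟨P, hPS⟩
    · rw [h]; simp
    · refine le_trans (Finset.card_le_card (t := {P, Q.toInv.conj P}) ?_) (Finset.card_le_two)
      intro P' hPS'
      rw [mem_PS hq.ne_zero] at hPS hPS'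
      rw [Finset.mem_insert, Finset.mem_singleton]
      refine Q.toInv.trans_primes P P' hPS.1 hPS'.1 (ne_bot_of_nat hq.ne_zero hPS'.2) ?_
      exact uniq_rat hq (Inv.dn_prime (O := 𝓞 ℚ) P hPS.1) (Inv.dn_prime (O := 𝓞 ℚ) P' hPS'.1)
        (by rw [Inv.mem_dn, map_natCast]; exact hPS.2)
        (by rw [Inv.mem_dn, map_natCast]; exact hPS'.2)

end CnFProof

end

section
open NumberField IsDedekindDomain

namespace CnFProof
set_option linter.unusedSectionVars false
set_option linter.unusedVariables false
set_option linter.style.haveILetI false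

section
variable {k K L : Type*} [Field k] [Field K] [Field L] [NumberField k] [NumberField K] [NumberField L]
  [Algebra k K] [Algebra K L]

theorem Unr.not_range {m : ℕ} (hm : m ≠ 1) (h : Unr K m) (y : L)
    (hy : y ^ 2 = m) (hyi : IsIntegral ℤ y) : y ∉ Set.range (algebraMap K L) := by
  rintro ⟨w, rfl⟩
  have hy' : algebraMap K L (w ^ 2) = algebraMap K L (m : K) := by rw [map_pow, hy, map_natCast]
  have hw := (algebraMap K L).injective hy'
  have hwi : IsIntegral ℤ w := (isIntegral_algebraMap_iff (algebraMap K L).injective).1 hyi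
  set w' : 𝓞 K := ⟨w, hwi⟩ with hw'
  have h1 : w' ^ 2 = m := by
    apply RingOfIntegers.coe_injective
    rw [map_pow, map_natCast]; exact hw
  obtain ⟨P, hP, h2⟩ := exists_prime_over K hm
  have h3 := h P hP h2
  rw [← h1] at h2 h3
  exact h3 (Ideal.pow_mem_pow (hP.mem_of_pow_mem _ h2) 2)

theorem Quad.chiHom_one {m : ℕ} (hm : m ≠ 0) (Q : Quad K L) (hd : Q.d = m) (hu : Unr K m)
    (hJ : ∀ P ∈ PS K m, P.IsPrime ∧ P ≠ ⊥) (u : (𝓞 K)ˣ) (a b : 𝓞 L) (ha : a ≠ 0) (hb : b ≠ 0)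
    (h : a * Q.toInv.τ a = algebraMap (𝓞 K) (𝓞 L) u * (b * Q.toInv.τ b)) :
    chiHom (PS K m) hJ u = 1 := by
  refine congrArg Multiplicative.ofAdd (funext fun P => ?_)
  have hP := (mem_PS hm).1 P.2
  refine chi_eq_zero.2 ?_
  exact Q.norm_test P.1 hP.1 (m : 𝓞 K) (by rw [hd]; simp) hP.2 (hu _ hP.1 hP.2) u a b hb h

theorem PS_prime {m : ℕ} (hm : m ≠ 0) : ∀ P ∈ PS K m, P.IsPrime ∧ P ≠ ⊥ := fun P hP =>
  ⟨((mem_PS hm).1 hP).1, ne_bot_of_nat hm ((mem_PS hm).1 hP).2⟩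

theorem stageK {q s : ℕ} (hq : q.Prime) (hs : s.Prime) (hqs : q ≠ s) (hq2 : q.Coprime 2)
    {x : 𝓞 k} (h : Stage q s k x) (Q : Quad k K) (hd : Q.d = s) :
    TR K ∧ OddCl K ∧ Unr K q := by
  have htr : TR K := Q.TR_step h.tr (by
    intro ψ; rw [hd]; simp; exact hs.pos)
  haveI := htr.real
  haveI := h.tr.real
  set t : 𝓞 K := ⟨Q.θ, Q.θint⟩ with ht
  have htt : t ^ 2 = s := by
    apply RingOfIntegers.coe_injective
    rw [map_pow, map_natCast]
    have := Q.hθ2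
    rw [hd, map_natCast] at this
    exact this
  have hτt : Q.toInv.τ t = -t := by
    apply RingOfIntegers.coe_injective
    rw [map_neg]
    exact (Q.coe_τ t).trans Q.hσθ
  refine ⟨htr, ?_, ?_⟩
  · apply Quad.odd_of_card_le_two
    classical
    have hgood : Q.toInv.Good (PS k 2 ∪ PS k s) := by
      intro P hP hP0 hPS
      rw [Finset.mem_union, not_or, mem_PS (by norm_num), mem_PS hs.ne_zero] at hPS
      refine ⟨t, 4 * s, ?_, ?_⟩
      · rw [hτt, map_mul, map_natCast, map_ofNat, ← htt]; ring
      · intro hc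
        rcases hP.mem_or_mem hc with hc | hc
        · have : (2 : 𝓞 k) * 2 ∈ P := by norm_num; exact hc
          exact hPS.1 ⟨hP, by rcases hP.mem_or_mem this with h | h <;> exact_mod_cast h⟩
        · exact hPS.2 ⟨hP, hc⟩
    have hcard : (PS k 2).card ≤ 1 := by
      rw [Finset.card_le_one]
      intro P hP P' hP'
      rw [mem_PS (by norm_num)] at hP hP'
      exact h.uniq P P' hP.1 hP'.1 (by exact_mod_cast hP.2) (by exact_mod_cast hP'.2)
    have h1 := Q.main_count h.odd hgood (chiHom (PS k s) (PS_prime hs.ne_zero))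
      (chiHom_surj hs.ne_zero h.ins _ _ (fun P hP => hP))
      (Q.chiHom_one hs.ne_zero hd h.uns _)
    rw [Fintype.card_coe] at h1
    have h2 : 2 ^ (PS k 2 ∪ PS k s).card ≤ 2 * 2 ^ (PS k s).card := by
      rw [← pow_succ']
      refine Nat.pow_le_pow_right (by norm_num) ?_
      have := Finset.card_union_le (PS k 2) (PS k s)
      omega
    have h3 : 0 < 2 ^ (PS k s).card := by positivity
    by_contra hcon
    push Not at hcon
    nlinarith
  · refine Q.unr_step hq.ne_zero h.unq t ?_
    intro P hPS hcon
    rw [mem_PS hq.ne_zero] at hPS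
    rw [hτt, sub_neg_eq_add, ← two_mul] at hcon
    have h2 : ((2 : ℕ) : 𝓞 K) ∉ P := two_not_mem hPS.1 hq2 hPS.2
    rcases hPS.1.mem_or_mem hcon with hc | hc
    · exact h2 (by exact_mod_cast hc)
    · refine two_not_mem hPS.1 ((Nat.coprime_primes hq hs).2 hqs) hPS.2 ?_
      rw [← htt]
      exact Ideal.pow_mem_of_mem _ hc 2 (by norm_num)

theorem Quad.card_PS {m : ℕ} (hm : m ≠ 0) (Q : Quad k K) :
    ∃ J : Finset (Ideal (𝓞 k)), (∀ p ∈ J, p ∈ PS k m) ∧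
      (∀ p ∈ J, ∃ P ∈ PS K m, Q.toInv.conj P ≠ P ∧ Inv.dn (O := 𝓞 k) P = p) ∧
      (PS K m).card ≤ (PS k m).card + J.card := by
  classical
  set J := ((PS K m).filter (fun P => Q.toInv.conj P ≠ P)).image (fun P => Inv.dn (O := 𝓞 k) P) with hJ
  refine ⟨J, ?_, ?_, ?_⟩
  · intro p hp
    obtain ⟨P, hP, rfl⟩ := Finset.mem_image.1 hp
    exact dn_PS hm (Finset.mem_filter.1 hP).1
  · intro p hp
    obtain ⟨P, hP, rfl⟩ := Finset.mem_image.1 hp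
    exact ⟨P, (Finset.mem_filter.1 hP).1, (Finset.mem_filter.1 hP).2, rfl⟩
  · rw [Finset.card_eq_sum_card_fiberwise (f := fun P => Inv.dn (O := 𝓞 k) P) (t := PS k m)
      (fun P hP => dn_PS hm hP)]
    calc _ ≤ ∑ p ∈ PS k m, (1 + if p ∈ J then 1 else 0) := by
          refine Finset.sum_le_sum fun p hp => ?_
          by_cases hex : ∃ P ∈ PS K m, Inv.dn (O := 𝓞 k) P = p
          · obtain ⟨P, hPS, rfl⟩ := hex
            have hsub : (PS K m).filter (fun P' => Inv.dn (O := 𝓞 k) P' = Inv.dn P) ⊆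
                {P, Q.toInv.conj P} := by
              intro P' hP'
              obtain ⟨h1, h3⟩ := Finset.mem_filter.1 hP'
              obtain ⟨h1, h1'⟩ := (mem_PS hm).1 h1
              rw [Finset.mem_insert, Finset.mem_singleton]
              exact Q.toInv.trans_primes P P' ((mem_PS hm).1 hPS).1 h1 (ne_bot_of_nat hm h1') h3.symm
            by_cases hc : Q.toInv.conj P = P
            · rw [hc, Finset.pair_eq_singleton] at hsub
              have := Finset.card_le_card hsub
              rw [Finset.card_singleton] at this
              exact le_trans this (Nat.le_add_right _ _)
            · have hmem : Inv.dn (O := 𝓞 k) P ∈ J :=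
                Finset.mem_image.2 ⟨P, Finset.mem_filter.2 ⟨hPS, hc⟩, rfl⟩
              rw [if_pos hmem]
              exact (Finset.card_le_card hsub).trans Finset.card_le_two
          · rw [Finset.card_eq_zero.2]
            · exact Nat.zero_le _
            · rw [Finset.filter_eq_empty_iff]
              intro P hP hcon
              exact hex ⟨P, hP, hcon⟩
      _ ≤ _ := by
          rw [Finset.sum_add_distrib]
          refine Nat.add_le_add (by simp) ?_
          rw [← Finset.sum_filter, Finset.sum_const, smul_eq_mul, mul_one]
          refine Finset.card_le_card fun p hp => (Finset.mem_filter.1 hp).2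

theorem stageL {q s : ℕ} (hq : q.Prime) (hs : s.Prime) (hqs : q ≠ s) (hq2 : q.Coprime 2)
    (hqs4 : q % 4 = s % 4)
    {x : 𝓞 k} (h : Stage q s k x) (Q : Quad k K) (hd : Q.d = s) (Q' : Quad K L) (hd' : Q'.d = q) :
    TR L ∧ Nat.card {c : ClassGroup (𝓞 L) | c ^ 2 = 1} ≤ 2 := by
  obtain ⟨htrK, hoddK, hunr⟩ := stageK hq hs hqs hq2 h Q hd
  have htr : TR L := Q'.TR_step htrK (by
    intro ψ; rw [hd']; simp; exact hq.pos)
  haveI := htr.real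
  haveI := htrK.real
  refine ⟨htr, ?_⟩
  obtain ⟨c, hc⟩ : ∃ c : ℤ, (s : ℤ) = q + 4 * c := ⟨((s : ℤ) - q) / 4, by omega⟩
  have hs2 : (algebraMap K L Q.θ) ^ 2 = s := by
    rw [← map_pow, Q.hθ2, hd, map_natCast, map_natCast]
  have hq2' : Q'.θ ^ 2 = q := by rw [Q'.hθ2, hd', map_natCast]
  have hωint : IsIntegral ℤ ((algebraMap K L Q.θ + Q'.θ) / 2) := by
    refine ⟨Polynomial.X ^ 4 + Polynomial.C (2 * c - s) * Polynomial.X ^ 2 + Polynomial.C (c ^ 2),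
      by monicity!, ?_⟩
    simp only [Polynomial.eval₂_add, Polynomial.eval₂_mul, Polynomial.eval₂_pow, Polynomial.eval₂_X,
      Polynomial.eval₂_C]
    have hc' : (s : L) = q + 4 * c := by exact_mod_cast congrArg (Int.cast (R := L)) hc
    simp only [eq_intCast]
    push_cast
    have h1 : ((algebraMap K L Q.θ + Q'.θ) / 2) ^ 2 + c =
        algebraMap K L Q.θ * ((algebraMap K L Q.θ + Q'.θ) / 2) := by
      have h20 : (2 : L) ≠ 0 := two_ne_zero
      field_simp
      linear_combination -hs2 + hq2' - hc'
    linear_combination (((algebraMap K L Q.θ + Q'.θ) / 2) ^ 2 + c +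
        algebraMap K L Q.θ * ((algebraMap K L Q.θ + Q'.θ) / 2)) * h1 +
        ((algebraMap K L Q.θ + Q'.θ) / 2) ^ 2 * hs2
  set ω : 𝓞 L := ⟨_, hωint⟩ with hω
  have hgood : Q'.toInv.Good (PS K q) := by
    intro P hP hP0 hPS
    rw [mem_PS hq.ne_zero] at hPS
    refine ⟨ω, q, ?_, fun h => hPS ⟨hP, h⟩⟩
    apply RingOfIntegers.coe_injective
    rw [map_pow, map_sub, map_natCast, map_natCast, ← hq2']
    have h1 : algebraMap (𝓞 L) L (Q'.toInv.τ ω) = (algebraMap K L Q.θ - Q'.θ) / 2 := by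
      refine (Q'.coe_τ ω).trans ?_
      change Q'.σ ((algebraMap K L Q.θ + Q'.θ) / 2) = _
      rw [map_div₀, map_add, Q'.hσθ, map_ofNat, AlgEquiv.commutes, sub_eq_add_neg]
    rw [h1]
    change Q'.θ ^ 2 = ((algebraMap K L Q.θ + Q'.θ) / 2 - (algebraMap K L Q.θ - Q'.θ) / 2) ^ 2
    ring
  obtain ⟨J, hJ1, hJ2, hJ3⟩ := Q.card_PS hq.ne_zero
  choose f hf1 hf2 hf3 using hJ2
  set g : J → PS K q := fun p => ⟨f p.1 p.2, hf1 p.1 p.2⟩ with hg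
  set ρ : Multiplicative (PS K q → ZMod 2) →* Multiplicative (J → ZMod 2) :=
    AddMonoidHom.toMultiplicative (LinearMap.funLeft ℤ (ZMod 2) g).toAddMonoidHom with hρ
  have h1 := Q'.main_count hoddK hgood (ρ.comp (chiHom (PS K q) (PS_prime hq.ne_zero))) (by
      intro w
      obtain ⟨u, hu⟩ := chiHom_surj hq.ne_zero h.inq J
        (fun p hp => PS_prime hq.ne_zero p (hJ1 p hp)) hJ1 w
      refine ⟨Quad.uu k K u, ?_⟩
      rw [← hu]
      refine congrArg Multiplicative.ofAdd (funext fun p => ?_)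
      change chi (f p.1 p.2) ((Quad.uu k K u : (𝓞 K)ˣ) : 𝓞 K) = chi p.1 (u : 𝓞 k)
      have hP := PS_prime hq.ne_zero _ (hf1 p.1 p.2)
      have := chi_congr (Q.toInv.split_sq (f p.1 p.2) hP.1 hP.2 (hf2 p.1 p.2) (u : 𝓞 k))
      rw [hf3] at this
      exact this)
    (by
      intro u a b ha hb hab
      rw [MonoidHom.comp_apply, Q'.chiHom_one hq.ne_zero hd' hunr _ u a b ha hb hab, map_one])
  rw [Fintype.card_coe] at h1
  have h2 : 2 ^ (PS K q).card ≤ 4 * 2 ^ J.card := by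
    rw [show (4 : ℕ) = 2 ^ 2 by norm_num, ← pow_add]
    refine Nat.pow_le_pow_right (by norm_num) ?_
    have := h.le2
    omega
  have h3 : 0 < 2 ^ J.card := by positivity
  by_contra hcon
  push Not at hcon
  nlinarith

end
end CnFProof

end

section
open NumberField IsDedekindDomain

namespace CnFProof
set_option linter.unusedSectionVars false
set_option linter.unusedVariables false
set_option linter.style.haveILetI false

section
variable {K : Type*} [Field K] [NumberField K]

theorem omega_data {p : ℕ} (hp8 : p % 8 = 5) (Q : Quad ℚ K) (hd : Q.d = p) :
    ∃ (ω t : 𝓞 K) (c : ℤ), (p : ℤ) = 4 * (2 * c + 1) + 1 ∧ (t : K) = Q.θ ∧ ω + ω = 1 + t ∧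
      t ^ 2 = p ∧ Q.toInv.τ t = -t ∧ Q.toInv.τ ω = 1 - ω ∧ ω ^ 2 = ω + (2 * c + 1) := by
  obtain ⟨c, hc⟩ : ∃ c : ℕ, p = 4 * (2 * c + 1) + 1 := ⟨(p - 5) / 8, by omega⟩
  have hθ2 : Q.θ ^ 2 = p := by rw [Q.hθ2, hd]; simp
  have hK2 : (2 : K) ≠ 0 := two_ne_zero
  have hωint : IsIntegral ℤ ((1 + Q.θ) / 2) := by
    refine ⟨Polynomial.X ^ 2 - Polynomial.X - Polynomial.C ((2 * c + 1 : ℕ) : ℤ), by monicity!, ?_⟩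
    simp only [Polynomial.eval₂_sub, Polynomial.eval₂_pow, Polynomial.eval₂_X, Polynomial.eval₂_C]
    rw [hc] at hθ2
    push_cast at hθ2
    simp only [eq_intCast]
    push_cast
    field_simp
    linear_combination hθ2
  set ω : 𝓞 K := ⟨(1 + Q.θ) / 2, hωint⟩ with hω
  set t : 𝓞 K := ⟨Q.θ, Q.θint⟩ with ht
  have htω : ω + ω = 1 + t := by
    apply RingOfIntegers.coe_injective
    rw [map_add, map_add, map_one]
    change (1 + Q.θ) / 2 + (1 + Q.θ) / 2 = 1 + Q.θ
    ring
  have htt : t ^ 2 = p := by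
    apply RingOfIntegers.coe_injective
    rw [map_pow, map_natCast]; exact hθ2
  have hτt : Q.toInv.τ t = -t := by
    apply RingOfIntegers.coe_injective
    rw [map_neg]
    exact (Q.coe_τ t).trans Q.hσθ
  have h20 : (2 : 𝓞 K) ≠ 0 := two_ne_zero
  have hτω : Q.toInv.τ ω = 1 - ω := by
    apply mul_left_cancel₀ h20
    have h1 := congrArg Q.toInv.τ htω
    rw [map_add, map_add, map_one, hτt] at h1
    linear_combination h1 + htω
  refine ⟨ω, t, c, by exact_mod_cast hc, rfl, htω, htt, hτt, hτω, ?_⟩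
  apply mul_left_cancel₀ (mul_ne_zero h20 h20)
  have : (p : 𝓞 K) = 4 * (2 * c + 1) + 1 := by exact_mod_cast congrArg (Nat.cast (R := 𝓞 K)) hc
  rw [this] at htt
  push_cast
  linear_combination htt + (2 * ω - 2 + 1 + t) * htω

theorem Quad.fix_int (Q : Quad ℚ K) (x : 𝓞 K) (h : Q.toInv.τ x = x) : ∃ n : ℤ, x = n := by
  obtain ⟨a, ha⟩ := Q.toInv.fix x h
  obtain ⟨n, rfl⟩ := int_of_rat a
  exact ⟨n, by rw [← ha, map_intCast]⟩

theorem Quad.int_dvd (Q : Quad ℚ K) {a b : ℤ} (h : (a : 𝓞 K) ∣ b) : a ∣ b := by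
  obtain ⟨v, hv⟩ := h
  by_cases ha : a = 0
  · subst ha
    rw [Int.cast_zero, zero_mul] at hv
    have : b = 0 := by exact_mod_cast hv
    rw [this]
  · have ha' : (a : 𝓞 K) ≠ 0 := by exact_mod_cast ha
    obtain ⟨n, rfl⟩ := Q.fix_int v (by
      apply mul_left_cancel₀ ha'
      have := congrArg Q.toInv.τ hv
      rw [map_mul, map_intCast, map_intCast] at this
      rw [← this, hv])
    exact ⟨n, by exact_mod_cast hv⟩

theorem basis {p : ℕ} (hp : p.Prime) (Q : Quad ℚ K) {ω t : 𝓞 K} {c : ℤ}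
    (hc : (p : ℤ) = 4 * (2 * c + 1) + 1) (htω : ω + ω = 1 + t) (htt : t ^ 2 = p) (hτt : Q.toInv.τ t = -t)
    (x : 𝓞 K) : ∃ a b : ℤ, x = a + b * ω := by
  obtain ⟨A, hA⟩ := Q.toInv.exists_tr x
  obtain ⟨A, rfl⟩ := int_of_rat A
  obtain ⟨N, hN⟩ := Q.toInv.exists_norm x
  obtain ⟨N, rfl⟩ := int_of_rat N
  rw [map_intCast] at hA hN
  obtain ⟨C, hC⟩ := Q.fix_int ((x - Q.toInv.τ x) * t) (by
    rw [map_mul, map_sub, Q.toInv.inv, hτt]; ring)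
  have h1 : C ^ 2 = (A ^ 2 - 4 * N) * p := by
    have : (C : 𝓞 K) ^ 2 = (A ^ 2 - 4 * N) * p := by
      rw [← hC, ← htt, hA, hN]; ring
    exact_mod_cast this
  obtain ⟨B, rfl⟩ : (p : ℤ) ∣ C := (Nat.prime_iff_prime_int.1 hp).dvd_of_dvd_pow (h1 ▸ Dvd.intro_left _ rfl)
  have ht0 : t ≠ 0 := by
    rintro rfl
    have : (p : 𝓞 K) = 0 := by rw [← htt]; ring
    exact hp.ne_zero (by exact_mod_cast this)
  have h2 : x - Q.toInv.τ x = t * B := by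
    apply mul_right_cancel₀ ht0
    rw [hC]; push_cast; rw [← htt]; ring
  have h3 : B ^ 2 * p = A ^ 2 - 4 * N := by
    have hp0 : (p : ℤ) ≠ 0 := by exact_mod_cast hp.ne_zero
    apply mul_right_cancel₀ hp0
    rw [← h1]; ring
  have h4 : ∃ a, A - B = 2 * a := by
    have h5 : Even (A ^ 2 - B ^ 2) := by
      rw [hc] at h3
      exact ⟨2 * N + 2 * B ^ 2 * (2 * c + 1), by linear_combination -h3⟩
    have h6 : Even (A - B) := by
      rw [sq_sub_sq, Int.even_mul] at h5
      rcases h5 with h | h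
      · rw [Int.even_add] at h; rw [Int.even_sub]; exact h
      · exact h
    obtain ⟨a, ha⟩ := h6
    exact ⟨a, by omega⟩
  obtain ⟨a, ha⟩ := h4
  refine ⟨a, B, ?_⟩
  have h20 : (2 : 𝓞 K) ≠ 0 := two_ne_zero
  apply mul_left_cancel₀ h20
  have ha' : (A : 𝓞 K) - B = 2 * a := by exact_mod_cast congrArg (Int.cast (R := 𝓞 K)) ha
  linear_combination h2 - hA + ha' - (B : 𝓞 K) * htω

theorem mod_four {a b c M : ℤ} {A B : ℤ} 
    (hB : B = 3 * a ^ 2 * b + 3 * a * b ^ 2 + b ^ 3 * (2 * c + 2))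
    (hN : A ^ 2 + A * B - (2 * c + 1) * B ^ 2 = 4 * M + 1) :
    ∃ e A' B' : ℤ, (e = 1 ∨ e = -1) ∧ A = e + 4 * A' ∧ B = 4 * B' := by
  have hBe : Even B := by
    have : Even (a * b * (a + b)) := by
      rcases Int.even_or_odd a with h | h
      · exact (h.mul_right _).mul_right _
      · rcases Int.even_or_odd b with h' | h'
        · exact (h'.mul_left _).mul_right _
        · exact (h.add_odd h').mul_left _
    have h2 : B = 3 * (a * b * (a + b)) + 2 * (b ^ 3 * (c + 1)) := by rw [hB]; ring
    rw [h2]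
    exact (this.mul_left _).add (even_two_mul _)
  obtain ⟨B1, hB1⟩ := hBe
  have hAo : Odd A := by
    by_contra h
    rw [Int.not_odd_iff_even] at h
    obtain ⟨a1, rfl⟩ := h
    have : 2 * (2 * a1 ^ 2 + a1 * B - (2 * c + 1) * B1 * B - 2 * M) = 1 := by
      rw [hB1] at hN ⊢; linear_combination hN
    omega
  obtain ⟨a1, rfl⟩ := hAo
  have h3 : (2 * a1 + 1) * B1 = 2 * (M - a1 ^ 2 - a1 + (2 * c + 1) * B1 ^ 2) := by
    have : 2 * ((2 * a1 + 1) * B1) = 2 * (2 * (M - a1 ^ 2 - a1 + (2 * c + 1) * B1 ^ 2)) := by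
      rw [hB1] at hN; linear_combination hN
    exact mul_left_cancel₀ two_ne_zero this
  obtain ⟨B2, hB2⟩ : ∃ B2, B1 = 2 * B2 :=
    ⟨M - a1 ^ 2 - a1 + (2 * c + 1) * B1 ^ 2 - a1 * B1, by linear_combination h3⟩
  rcases Int.even_or_odd a1 with ⟨k, hk⟩ | ⟨k, hk⟩
  · exact ⟨1, k, B2, Or.inl rfl, by omega, by omega⟩
  · exact ⟨-1, k + 1, B2, Or.inr rfl, by omega, by omega⟩

end
end CnFProof

end

section
open NumberField IsDedekindDomain

namespace CnFProof
set_option linter.unusedSectionVars false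
set_option linter.unusedVariables false
set_option linter.style.haveILetI false

section
variable {K : Type*} [Field K] [NumberField K]

theorem exists_root {p q s : ℕ} (hp : p.Prime) (hq : q.Prime) (hs : s.Prime) (hpq : p ≠ q) (hps : p ≠ s)
    (hqs : q ≠ s) (hq2 : q.Coprime 2) (hs2 : s.Coprime 2)
    (hQRq : IsSquare (p : ZMod q)) (hQRs : IsSquare (p : ZMod s)) :
    ∃ r w : ℤ, (p : ℤ) - r ^ 2 = q * s * w ∧ IsCoprime ((q : ℤ) * s) (2 * r) := by
  obtain ⟨r1, h1⟩ := hQRq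
  obtain ⟨r1, rfl⟩ := ZMod.intCast_surjective r1
  obtain ⟨r2, h2⟩ := hQRs
  obtain ⟨r2, rfl⟩ := ZMod.intCast_surjective r2
  have h1' : (q : ℤ) ∣ (p : ℤ) - r1 * r1 := by
    rw [int_dvd_zmod]; push_cast; rw [h1]; ring
  have h2' : (s : ℤ) ∣ (p : ℤ) - r2 * r2 := by
    rw [int_dvd_zmod]; push_cast; rw [h2]; ring
  have hcop : IsCoprime (q : ℤ) s := Nat.isCoprime_iff_coprime.2 ((Nat.coprime_primes hq hs).2 hqs)
  obtain ⟨u, v, huv⟩ := hcop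
  set r := r1 * v * s + r2 * u * q with hr
  have e1 : (q : ℤ) ∣ (p : ℤ) - r ^ 2 := by
    obtain ⟨z, hz⟩ := h1'
    have : r - r1 = q * (u * (r2 - r1)) := by rw [hr]; linear_combination r1 * huv
    exact ⟨z - (u * (r2 - r1)) * (r + r1), by linear_combination hz - (r + r1) * this⟩
  have e2 : (s : ℤ) ∣ (p : ℤ) - r ^ 2 := by
    obtain ⟨z, hz⟩ := h2'
    have : r - r2 = s * (v * (r1 - r2)) := by rw [hr]; linear_combination r2 * huv
    exact ⟨z - (v * (r1 - r2)) * (r + r2), by linear_combination hz - (r + r2) * this⟩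
  obtain ⟨w, hw⟩ := IsCoprime.mul_dvd ⟨u, v, huv⟩ e1 e2
  refine ⟨r, w, hw, ?_⟩
  have key : ∀ l : ℕ, l.Prime → p ≠ l → l.Coprime 2 → (l : ℤ) ∣ (p : ℤ) - r ^ 2 → IsCoprime (l : ℤ) (2 * r) := by
    intro l hl hpl hl2 hd
    rw [Prime.coprime_iff_not_dvd (Nat.prime_iff_prime_int.1 hl)]
    intro hcon
    rcases (Nat.prime_iff_prime_int.1 hl).dvd_or_dvd hcon with h | h
    · have h3 : l ∣ 2 := by exact_mod_cast h
      have := Nat.eq_one_of_dvd_coprimes hl2 dvd_rfl h3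
      exact hl.ne_one this
    · have h3 : (l : ℤ) ∣ p := by
        have h4 := dvd_add hd (h.trans (dvd_pow_self r two_ne_zero))
        rwa [sub_add_cancel] at h4
      have h5 : l ∣ p := by exact_mod_cast h3
      exact hpl ((Nat.prime_dvd_prime_iff_eq hl hp).1 h5).symm
  exact (key q hq hpq hq2 e1).mul_left (key s hs hps hs2 e2)

theorem exists_beta {p q s : ℕ} (hp : p.Prime) (hq : q.Prime) (hs : s.Prime) (hpq : p ≠ q) (hps : p ≠ s)
    (hqs : q ≠ s) (hq2 : q.Coprime 2) (hs2 : s.Coprime 2)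
    (hQRq : IsSquare (p : ZMod q)) (hQRs : IsSquare (p : ZMod s))
    (Q : Quad ℚ K) (hodd : OddCl K)
    (hN : ∀ u : (𝓞 ℚ)ˣ, ∃ ε : (𝓞 K)ˣ, ε * Q.toInv.σu ε = Quad.uu ℚ K u)
    {t : 𝓞 K} (htt : t ^ 2 = p) (hτt : Q.toInv.τ t = -t) :
    ∃ (β : 𝓞 K) (h : ℕ), Odd h ∧ β * Q.toInv.τ β = ((q * s : ℤ) : 𝓞 K) ^ h ∧ IsCoprime β (Q.toInv.τ β) := by
  obtain ⟨r, w, hw, hcop⟩ := exists_root hp hq hs hpq hps hqs hq2 hs2 hQRq hQRs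
  set m : ℤ := q * s with hm
  have hm0 : m ≠ 0 := mul_ne_zero (by exact_mod_cast hq.ne_zero) (by exact_mod_cast hs.ne_zero)
  obtain ⟨u, v, huv⟩ := hcop
  have huv' : (u : 𝓞 K) * m + v * (2 * r) = 1 := by exact_mod_cast congrArg (Int.cast (R := 𝓞 K)) huv
  have hw' : (p : 𝓞 K) - r ^ 2 = m * w := by exact_mod_cast congrArg (Int.cast (R := 𝓞 K)) hw
  set I : Ideal (𝓞 K) := Ideal.span {(m : 𝓞 K), t - r} with hI
  have hcI : Q.toInv.conj I = Ideal.span {(m : 𝓞 K), -t - r} := by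
    unfold Inv.conj
    rw [hI, Ideal.map_span, Set.image_pair]
    simp [hτt]
  have hprod : I * Q.toInv.conj I = Ideal.span {(m : 𝓞 K)} := by
    rw [hcI, hI, Ideal.span_pair_mul_span_pair]
    apply le_antisymm
    · rw [Ideal.span_le]
      intro z hz
      rw [SetLike.mem_coe, Ideal.mem_span_singleton]
      simp only [Set.mem_insert_iff, Set.mem_singleton_iff] at hz
      rcases hz with rfl | rfl | rfl | rfl
      · exact Dvd.intro _ rfl
      · exact Dvd.intro _ rfl
      · exact Dvd.intro_left _ rfl
      · exact ⟨-w, by linear_combination -htt - hw'⟩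
    · rw [Ideal.span_singleton_le_iff_mem]
      have : (m : 𝓞 K) = u * (m * m) - v * (m * (-t - r)) - v * ((t - r) * m) := by
        linear_combination (-(m : 𝓞 K)) * huv'
      refine Set.mem_of_eq_of_mem this ?_
      refine sub_mem (sub_mem (Ideal.mul_mem_left _ _ (Ideal.subset_span ?_))
        (Ideal.mul_mem_left _ _ (Ideal.subset_span ?_))) (Ideal.mul_mem_left _ _ (Ideal.subset_span ?_)) <;> simp
  have hcopI : IsCoprime I (Q.toInv.conj I) := by
    rw [Ideal.isCoprime_iff_exists]
    refine ⟨u * m - v * (t - r), ?_, -v * (-t - r), ?_, by linear_combination huv'⟩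
    · exact sub_mem (Ideal.mul_mem_left _ _ (Ideal.subset_span (by simp)))
        (Ideal.mul_mem_left _ _ (Ideal.subset_span (by simp)))
    · rw [hcI]
      exact Ideal.mul_mem_left _ _ (Ideal.subset_span (by simp))
  have hmK : (m : 𝓞 K) ≠ 0 := by exact_mod_cast hm0
  have hI0 : I ≠ ⊥ := by
    intro h
    have : (m : 𝓞 K) ∈ I := Ideal.subset_span (by simp)
    rw [h] at this
    exact hmK this
  obtain ⟨β, hβ⟩ := hodd.principal I hI0
  set h := Nat.card (ClassGroup (𝓞 K)) with hh
  have hcβ : (Q.toInv.conj I) ^ h = Ideal.span {Q.toInv.τ β} := by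
    rw [← Q.toInv.conj_pow, hβ, Q.toInv.conj_span]
  have hcopβ : IsCoprime β (Q.toInv.τ β) := by
    have := hcopI.pow (m := h) (n := h)
    rwa [hβ, hcβ, Ideal.isCoprime_span_singleton_iff] at this
  obtain ⟨n, hn⟩ := Q.toInv.exists_norm β
  obtain ⟨n, rfl⟩ := int_of_rat n
  rw [map_intCast] at hn
  have hspan : Ideal.span {(n : 𝓞 K)} = Ideal.span {((m ^ h : ℤ) : 𝓞 K)} := by
    push_cast
    rw [hn, ← Ideal.span_singleton_mul_span_singleton, ← hβ, ← hcβ, ← mul_pow, hprod,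
      Ideal.span_singleton_pow]
  have hd1 : n ∣ m ^ h := Q.int_dvd (by
    rw [← Ideal.mem_span_singleton, hspan]; exact Ideal.mem_span_singleton_self _)
  have hd2 : m ^ h ∣ n := Q.int_dvd (by
    rw [← Ideal.mem_span_singleton, ← hspan]; exact Ideal.mem_span_singleton_self _)
  rcases Int.natAbs_eq_natAbs_iff.1 (Int.natAbs_eq_of_dvd_dvd hd1 hd2) with e | e
  · refine ⟨β, h, hodd, ?_, hcopβ⟩
    rw [← hn, e]; push_cast; rfl
  · obtain ⟨ε, hε⟩ := hN (-1)
    have hε' : (ε : 𝓞 K) * Q.toInv.τ ε = -1 := by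
      have := congrArg Units.val hε
      have h2 : ((Quad.uu ℚ K (-1) : (𝓞 K)ˣ) : 𝓞 K) = -1 := by
        change algebraMap (𝓞 ℚ) (𝓞 K) ((-1 : (𝓞 ℚ)ˣ) : 𝓞 ℚ) = -1
        rw [Units.val_neg, Units.val_one, map_neg, map_one]
      rw [h2] at this
      exact this
    refine ⟨ε * β, h, hodd, ?_, ?_⟩
    · rw [map_mul]
      have : (n : 𝓞 K) = -((m : 𝓞 K) ^ h) := by rw [e]; push_cast; rfl
      rw [this] at hn
      linear_combination β * Q.toInv.τ β * hε' + hn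
    · rw [map_mul]
      refine (isCoprime_mul_unit_left_left ε.isUnit _ _).2 ?_
      exact (isCoprime_mul_unit_left_right (ε.isUnit.map Q.toInv.τ) _ _).2 hcopβ

theorem exists_alpha {p q s : ℕ} (hp : p.Prime) (hq : q.Prime) (hs : s.Prime) (hpq : p ≠ q) (hps : p ≠ s)
    (hqs : q ≠ s) (hp8 : p % 8 = 5) (hq8 : q % 8 = 3) (hs4 : s % 4 = 3)
    (hQRq : IsSquare (p : ZMod q)) (hQRs : IsSquare (p : ZMod s))
    (Q : Quad ℚ K) (hd : Q.d = p) :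
    ∃ (α α' : 𝓞 K) (N : ℕ) (e : ℤ), Odd N ∧ α * α' = ((q * s : ℕ) : 𝓞 K) ^ N ∧ (e = 1 ∨ e = -1) ∧
      (∃ b, α = e + 4 * b) ∧ (∃ b, α' = e + 4 * b) ∧ IsCoprime α α' ∧
      (∀ ψ : K →+* ℂ, 0 < (ψ (α : K)).re) ∧
      (∃ P : Ideal (𝓞 K), P.IsPrime ∧ (q : 𝓞 K) ∈ P ∧ α ∈ P) ∧
      (∃ P : Ideal (𝓞 K), P.IsPrime ∧ (q : 𝓞 K) ∈ P ∧ α' ∈ P) := by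
  have hq2 : q.Coprime 2 := by
    rw [Nat.coprime_two_right, Nat.odd_iff]; omega
  have hs2 : s.Coprime 2 := by
    rw [Nat.coprime_two_right, Nat.odd_iff]; omega
  obtain ⟨ω, t, c, hc, htθ, htω, htt, hτt, hτω, hωeq⟩ := omega_data hp8 Q hd
  have htr : TR K := Q.TR_step TR_rat (by
    intro ψ; rw [hd]; simp; exact hp.pos)
  haveI := htr.real
  haveI := TR_rat.real
  have hgood : Q.toInv.Good (PS ℚ p) := by
    intro P hP hP0 hPS
    rw [mem_PS hp.ne_zero] at hPS
    refine ⟨ω, p, ?_, fun h => hPS ⟨hP, h⟩⟩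
    rw [hτω, map_natCast, ← htt]
    linear_combination (-t - (ω - (1 - ω))) * htω
  have hcard : (PS ℚ p).card ≤ 1 := by
    rw [Finset.card_le_one]
    intro P hP P' hP'
    rw [mem_PS hp.ne_zero] at hP hP'
    exact uniq_rat hp hP.1 hP'.1 hP.2 hP'.2
  obtain ⟨hodd, hN⟩ := Q.main_small oddCl_rat hgood hcard
  obtain ⟨β, h, hhodd, hβ, hβcop⟩ := exists_beta hp hq hs hpq hps hqs hq2 hs2 hQRq hQRs Q hodd hN htt hτt
  have hm0 : ((q * s : ℤ) : 𝓞 K) ≠ 0 := by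
    push_cast
    exact mul_ne_zero (by exact_mod_cast hq.ne_zero) (by exact_mod_cast hs.ne_zero)
  have hβ0 : β ≠ 0 := by
    rintro rfl
    rw [zero_mul] at hβ
    exact pow_ne_zero _ hm0 hβ.symm
  -- fix the sign
  obtain ⟨ψ0⟩ : Nonempty (K →+* ℂ) := inferInstance
  obtain ⟨β, hβ, hβcop, hpos⟩ : ∃ β : 𝓞 K, β * Q.toInv.τ β = ((q * s : ℤ) : 𝓞 K) ^ h ∧
      IsCoprime β (Q.toInv.τ β) ∧ 0 < (ψ0 (β : K)).re := by
    have hne : (ψ0 (β : K)).re ≠ 0 := by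
      intro hre
      have : ψ0 (β : K) = 0 := Complex.ext hre (htr ψ0 _)
      rw [map_eq_zero] at this
      exact hβ0 (by exact_mod_cast this)
    rcases lt_or_gt_of_ne hne with h1 | h1
    · refine ⟨-β, by rw [map_neg, neg_mul_neg, hβ], by rw [map_neg]; exact hβcop.neg_neg, ?_⟩
      have : ((-β : 𝓞 K) : K) = -(β : K) := map_neg _ _
      rw [this, map_neg, Complex.neg_re]; linarith
    · exact ⟨β, hβ, hβcop, h1⟩
  have hpos' : 0 < (ψ0 (Q.σ (β : K))).re := by
    have h1 : (β : K) * Q.σ (β : K) = ((q * s : ℤ) : K) ^ h := by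
      have := congrArg (algebraMap (𝓞 K) K) hβ
      rw [map_mul, map_pow, map_intCast] at this
      exact this
    have h2 := congrArg (fun z => (ψ0 z).re) h1
    rw [map_mul, map_pow, map_intCast, Complex.mul_re, htr ψ0 (β : K), zero_mul, sub_zero] at h2
    have h3 : (((q * s : ℤ) : ℂ) ^ h).re = ((q * s : ℕ) : ℝ) ^ h := by
      rw [← Complex.ofReal_re (((q * s : ℕ) : ℝ) ^ h)]
      push_cast; rfl
    rw [h3] at h2
    have h4 : 0 < ((q * s : ℕ) : ℝ) ^ h := by
      have := Nat.mul_pos hq.pos hs.pos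
      positivity
    rw [← h2] at h4
    exact (mul_pos_iff_of_pos_left hpos).1 h4
  have htot : ∀ ψ : K →+* ℂ, 0 < (ψ (β : K)).re := by
    intro ψ
    obtain ⟨a, b, hab⟩ := Q.span (β : K)
    have hsq : (ψ Q.θ - ψ0 Q.θ) * (ψ Q.θ + ψ0 Q.θ) = 0 := by
      have h1 := congrArg ψ Q.hθ2
      have h2 := congrArg ψ0 Q.hθ2
      rw [hd, map_pow, map_natCast, map_natCast] at h1 h2
      linear_combination h1 - h2
    have hψa : ∀ a : ℚ, ψ (algebraMap ℚ K a) = ψ0 (algebraMap ℚ K a) := fun a => by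
      rw [eq_ratCast, map_ratCast, map_ratCast]
    rcases mul_eq_zero.1 hsq with h1 | h1
    · have : ψ (β : K) = ψ0 (β : K) := by
        rw [hab, map_add, map_add, map_mul, map_mul, hψa, hψa, sub_eq_zero.1 h1]
      rw [this]; exact hpos
    · have : ψ (β : K) = ψ0 (Q.σ (β : K)) := by
        rw [hab, Q.σ_apply, map_add, map_sub, map_mul, map_mul, hψa, hψa, eq_neg_of_add_eq_zero_left h1]
        ring
      rw [this]; exact hpos'
  obtain ⟨a, b, hab⟩ := basis hp Q hc htω htt hτt β
  set A : ℤ := a ^ 3 + 3 * a * b ^ 2 * (2 * c + 1) + b ^ 3 * (2 * c + 1) with hA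
  set B : ℤ := 3 * a ^ 2 * b + 3 * a * b ^ 2 + b ^ 3 * (2 * c + 2) with hB
  have hα : β ^ 3 = A + B * ω := by
    rw [hA, hB, hab]; push_cast
    linear_combination (3 * (a : 𝓞 K) * b ^ 2 + b ^ 3 * (ω + 1)) * hωeq
  have hα' : Q.toInv.τ (β ^ 3) = A + B * (1 - ω) := by
    rw [hα, map_add, map_mul, map_intCast, map_intCast, hτω]
  have hprod : β ^ 3 * Q.toInv.τ (β ^ 3) = ((q * s : ℤ) : 𝓞 K) ^ (3 * h) := by
    rw [map_pow, ← mul_pow, hβ, ← pow_mul, mul_comm h 3]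
  obtain ⟨M, hM⟩ : ∃ M : ℤ, ((q : ℤ) * s) ^ (3 * h) = 4 * M + 1 := by
    have h1 : ((q : ℤ) * s) ≡ 1 [ZMOD 4] := by
      have h1 : (q : ℤ) ≡ 3 [ZMOD 4] := by unfold Int.ModEq; omega
      have h2 : (s : ℤ) ≡ 3 [ZMOD 4] := by unfold Int.ModEq; omega
      exact (h1.mul h2).trans (by decide)
    have h2 := h1.pow (3 * h)
    rw [one_pow] at h2
    obtain ⟨M, hM⟩ := h2.symm.dvd
    exact ⟨M, by linarith⟩
  have hnorm : A ^ 2 + A * B - (2 * c + 1) * B ^ 2 = 4 * M + 1 := by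
    rw [← hM]
    rw [hα', hα] at hprod
    have : ((A ^ 2 + A * B - (2 * c + 1) * B ^ 2 : ℤ) : 𝓞 K) = (((q : ℤ) * s) ^ (3 * h) : ℤ) := by
      push_cast at hprod ⊢
      rw [← hprod]
      linear_combination (-(B : 𝓞 K) ^ 2) * (-hωeq)
    exact_mod_cast this
  obtain ⟨e, A', B', he, hA', hB'⟩ := mod_four hB hnorm
  refine ⟨β ^ 3, Q.toInv.τ (β ^ 3), 3 * h, e, (by decide : Odd 3).mul hhodd, ?_, he, ?_, ?_, ?_, ?_, ?_⟩
  · rw [hprod]; push_cast; rfl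
  · exact ⟨A' + B' * ω, by rw [hα, hA', hB']; push_cast; ring⟩
  · exact ⟨A' + B' * (1 - ω), by rw [hα', hA', hB']; push_cast; ring⟩
  · rw [map_pow]; exact hβcop.pow
  · intro ψ
    have h1 := htot ψ
    have : ψ ((β ^ 3 : 𝓞 K) : K) = (((ψ (β : K)).re ^ 3 : ℝ) : ℂ) := by
      have h2 : ψ (β : K) = ((ψ (β : K)).re : ℂ) := Complex.ext rfl (by rw [htr, Complex.ofReal_im])
      have h3 : ((β ^ 3 : 𝓞 K) : K) = (β : K) ^ 3 := map_pow _ _ _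
      rw [h3, map_pow]
      conv_lhs => rw [h2]
      push_cast; rfl
    rw [this, Complex.ofReal_re]
    positivity
  · have hfin : ∀ P : Ideal (𝓞 K), P.IsPrime → (q : 𝓞 K) ∈ P → β ^ 3 * Q.toInv.τ (β ^ 3) ∈ P := by
      intro P hP hqP
      rw [hprod]
      refine Ideal.pow_mem_of_mem _ ?_ _ (Nat.pos_of_ne_zero (by
        intro h0
        obtain ⟨z, hz⟩ := hhodd
        omega))
      push_cast
      exact Ideal.mul_mem_right _ _ hqP
    obtain ⟨P, hP, hqP⟩ := exists_prime_over K hq.ne_one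
    have hqc : (q : 𝓞 K) ∈ Q.toInv.conj P := by rw [Inv.mem_conj, map_natCast]; exact hqP
    rcases hP.mem_or_mem (hfin P hP hqP) with h1 | h1
    · exact ⟨⟨P, hP, hqP, h1⟩, ⟨Q.toInv.conj P, Q.toInv.conj_prime P hP, hqc, by
        rw [Inv.mem_conj, Q.toInv.inv]; exact h1⟩⟩
    · exact ⟨⟨Q.toInv.conj P, Q.toInv.conj_prime P hP, hqc, by
        rw [Inv.mem_conj]; exact h1⟩, ⟨P, hP, hqP, h1⟩⟩

end
end CnFProof

end

section
open NumberField IsDedekindDomain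

namespace CnFProof
set_option linter.unusedSectionVars false
set_option linter.unusedVariables false
set_option linter.style.haveILetI false

/-- the elements whose square roots give an unramified extension -/
structure IsAlpha (q s : ℕ) {K : Type*} [Field K] [NumberField K] (α α' : 𝓞 K) (N : ℕ) (e : ℤ) : Prop where
  oddN : Odd N
  prod : α * α' = ((q * s : ℕ) : 𝓞 K) ^ N
  he : e = 1 ∨ e = -1
  m1 : ∃ b, α = e + 4 * b
  m2 : ∃ b, α' = e + 4 * b
  cop : IsCoprime α α'
  pos : ∀ ψ : K →+* ℂ, 0 < (ψ (α : K)).re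
  p1 : ∃ P : Ideal (𝓞 K), P.IsPrime ∧ (q : 𝓞 K) ∈ P ∧ α ∈ P
  p2 : ∃ P : Ideal (𝓞 K), P.IsPrime ∧ (q : 𝓞 K) ∈ P ∧ α' ∈ P

section
variable {k K L M : Type*} [Field k] [Field K] [Field L] [Field M] [NumberField k] [NumberField K] [NumberField L]
  [NumberField M] [Algebra k K] [Algebra K L] [Algebra L M]

theorem lying_over (P : Ideal (𝓞 K)) (hP : P.IsPrime) (h0 : P ≠ ⊥) :
    ∃ P' : Ideal (𝓞 L), P'.IsPrime ∧ ∀ x ∈ P, algebraMap (𝓞 K) (𝓞 L) x ∈ P' := by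
  haveI := hP.isMaximal h0
  haveI : FaithfulSMul (𝓞 K) (𝓞 L) := inferInstance
  obtain ⟨P', h1, h2⟩ := Ideal.exists_ideal_over_maximal_of_isIntegral (S := 𝓞 L) P
    (by rw [(RingHom.injective_iff_ker_eq_bot _).1 (FaithfulSMul.algebraMap_injective (𝓞 K) (𝓞 L))]; exact bot_le)
  refine ⟨P', h1.isPrime, fun x hx => ?_⟩
  rw [← h2] at hx
  exact hx

theorem IsAlpha.step {q s : ℕ} (hq : q ≠ 0) {α α' : 𝓞 K} {N : ℕ} {e : ℤ} (h : IsAlpha q s α α' N e) :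
    IsAlpha q s (algebraMap (𝓞 K) (𝓞 L) α) (algebraMap (𝓞 K) (𝓞 L) α') N e where
  oddN := h.oddN
  prod := by rw [← map_mul, h.prod, map_pow, map_natCast]
  he := h.he
  m1 := by
    obtain ⟨b, hb⟩ := h.m1
    exact ⟨algebraMap _ _ b, by rw [hb, map_add, map_mul, map_intCast, map_ofNat]⟩
  m2 := by
    obtain ⟨b, hb⟩ := h.m2
    exact ⟨algebraMap _ _ b, by rw [hb, map_add, map_mul, map_intCast, map_ofNat]⟩
  cop := h.cop.map _
  pos := fun ψ => h.pos (ψ.comp (algebraMap K L))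
  p1 := by
    obtain ⟨P, hP, h1, h2⟩ := h.p1
    obtain ⟨P', h3, h4⟩ := lying_over (L := L) P hP (ne_bot_of_nat hq h1)
    exact ⟨P', h3, by simpa using h4 _ h1, h4 _ h2⟩
  p2 := by
    obtain ⟨P, hP, h1, h2⟩ := h.p2
    obtain ⟨P', h3, h4⟩ := lying_over (L := L) P hP (ne_bot_of_nat hq h1)
    exact ⟨P', h3, by simpa using h4 _ h1, h4 _ h2⟩

theorem Quad.sq_descent (Q : Quad K L) (a : K) (γ : L) (h : γ ^ 2 = algebraMap K L a) :
    ∃ b : K, a = b ^ 2 ∨ a = b ^ 2 * Q.d := by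
  obtain ⟨u, v, rfl⟩ := Q.span γ
  have h1 : algebraMap K L (2 * u * v) * Q.θ = algebraMap K L (a - u ^ 2 - v ^ 2 * Q.d) := by
    simp only [map_sub, map_mul, map_pow, ← h, ← Q.hθ2, map_ofNat]
    ring
  have h2 : 2 * u * v = 0 := by
    by_contra hne
    apply Q.not_mem
    refine ⟨(a - u ^ 2 - v ^ 2 * Q.d) / (2 * u * v), ?_⟩
    rw [map_div₀, ← h1, mul_div_cancel_left₀]
    rwa [Ne, map_eq_zero]
  have h3 : a - u ^ 2 - v ^ 2 * Q.d = 0 := by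
    rw [h2, map_zero, zero_mul] at h1
    exact (map_eq_zero _).1 h1.symm
  rcases mul_eq_zero.1 h2 with h4 | h4
  · have : u = 0 := by simpa using h4
    exact ⟨v, Or.inr (by rw [this] at h3; linear_combination h3)⟩
  · exact ⟨u, Or.inl (by rw [h4] at h3; linear_combination h3)⟩

theorem vv_pow (P : Ideal (𝓞 k)) {x : 𝓞 k} (hx : x ≠ 0) (n : ℕ) :
    vv P (Ideal.span {x ^ n}) = n * vv P (Ideal.span {x}) := by
  induction n with
  | zero =>
    rw [pow_zero, Ideal.span_singleton_one, zero_mul]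
    by_cases h : P.IsPrime ∧ P ≠ ⊥
    · exact vv_eq_zero (fun h' => h.1.ne_top (top_le_iff.1 h'))
    · exact vv_not_prime h
  | succ n ih =>
    rw [pow_succ, ← Ideal.span_singleton_mul_span_singleton, vv_mul, ih]
    · ring
    · simpa using fun h => absurd h hx
    · simpa using hx

theorem vv_mul' (P : Ideal (𝓞 k)) {x y : 𝓞 k} (hx : x ≠ 0) (hy : y ≠ 0) :
    vv P (Ideal.span {x * y}) = vv P (Ideal.span {x}) + vv P (Ideal.span {y}) := by
  rw [← Ideal.span_singleton_mul_span_singleton, vv_mul]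
  · simpa using hx
  · simpa using hy

theorem IsAlpha.parity {q s : ℕ} (hq : q.Prime) (hs : s.Prime) (hqs : q ≠ s) (huq : Unr k q)
    {α α' : 𝓞 k} {N : ℕ} {e : ℤ} (h : IsAlpha q s α α' N e) (i j : ℕ) (a b : 𝓞 k) (hb : b ≠ 0)
    (hab : α * q ^ i * b ^ 2 = a ^ 2 * s ^ j) : False := by
  have hq0 : (q : 𝓞 k) ≠ 0 := by exact_mod_cast hq.ne_zero
  have hs0 : (s : 𝓞 k) ≠ 0 := by exact_mod_cast hs.ne_zero
  have h00 : α * α' ≠ 0 := by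
    rw [h.prod]; push_cast; exact pow_ne_zero _ (mul_ne_zero hq0 hs0)
  have hα0 := left_ne_zero_of_mul h00
  have hα0' := right_ne_zero_of_mul h00
  have ha : a ≠ 0 := by
    rintro rfl
    have : α * q ^ i * b ^ 2 ≠ 0 := mul_ne_zero (mul_ne_zero hα0 (pow_ne_zero _ hq0)) (pow_ne_zero _ hb)
    rw [hab] at this
    simp at this
  have key : ∀ P : Ideal (𝓞 k), P.IsPrime → (q : 𝓞 k) ∈ P →
      vv P (Ideal.span {α}) + vv P (Ideal.span {α'}) = N ∧
      vv P (Ideal.span {α}) + i + 2 * vv P (Ideal.span {b}) = 2 * vv P (Ideal.span {a}) := by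
    intro P hP hqP
    have v1 : vv P (Ideal.span {(q : 𝓞 k)}) = 1 := by
      haveI := hP
      unfold vv
      convert Ideal.count_normalizedFactors_eq (p := P) (n := 1) ?_ ?_
      · rw [pow_one, Ideal.span_singleton_le_iff_mem]; exact hqP
      · rw [Ideal.span_singleton_le_iff_mem]; exact huq P hP hqP
    have v2 : vv P (Ideal.span {(s : 𝓞 k)}) = 0 := by
      apply vv_eq_zero
      rw [Ideal.span_singleton_le_iff_mem]
      exact two_not_mem hP ((Nat.coprime_primes hq hs).2 hqs) hqP
    constructor
    · rw [← vv_mul' P hα0 hα0', h.prod]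
      push_cast
      rw [vv_pow P (mul_ne_zero hq0 hs0), vv_mul' P hq0 hs0, v1, v2]; ring
    · have := congrArg (fun x => vv P (Ideal.span {x})) hab
      rw [vv_mul' P (mul_ne_zero hα0 (pow_ne_zero _ hq0)) (pow_ne_zero _ hb),
        vv_mul' P hα0 (pow_ne_zero _ hq0), vv_mul' P (pow_ne_zero _ ha) (pow_ne_zero _ hs0),
        vv_pow P hq0, vv_pow P hb, vv_pow P ha, vv_pow P hs0, v1, v2] at this
      omega
  have nn : ∀ P : Ideal (𝓞 k), P.IsPrime → α ∈ P → α' ∈ P → False := by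
    intro P hP h1 h2
    obtain ⟨u, v, huv⟩ := h.cop
    apply hP.ne_top
    rw [Ideal.eq_top_iff_one, ← huv]
    exact add_mem (Ideal.mul_mem_left _ _ h1) (Ideal.mul_mem_left _ _ h2)
  obtain ⟨P, hP, h1, h2⟩ := h.p1
  obtain ⟨P', hP', h1', h2'⟩ := h.p2
  have e1 := key P hP h1
  have e2 := key P' hP' h1'
  rw [vv_eq_zero (P := P) (A := Ideal.span {α'})
    (by rw [Ideal.span_singleton_le_iff_mem]; exact fun h => nn P hP h2 h)] at e1
  rw [vv_eq_zero (P := P') (A := Ideal.span {α})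
    (by rw [Ideal.span_singleton_le_iff_mem]; exact fun h => nn P' hP' h h2')] at e2
  obtain ⟨z, hz⟩ := h.oddN
  omega

theorem IsAlpha.parityK {q s : ℕ} (hq : q.Prime) (hs : s.Prime) (hqs : q ≠ s) (huq : Unr k q)
    {α α' : 𝓞 k} {N : ℕ} {e : ℤ} (h : IsAlpha q s α α' N e) (i j : ℕ) (c : k)
    (hc : (α : k) * q ^ i = c ^ 2 * s ^ j) : False := by
  obtain ⟨a, b, hb, rfl⟩ := IsFractionRing.div_surjective (A := 𝓞 k) c
  have hb0 : b ≠ 0 := nonZeroDivisors.ne_zero hb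
  have hb1 : algebraMap (𝓞 k) k b ≠ 0 := by simpa using hb0
  refine h.parity hq hs hqs huq i j a b hb0 ?_
  apply RingOfIntegers.coe_injective
  rw [map_mul, map_mul, map_mul, map_pow, map_pow, map_pow, map_pow, map_natCast, map_natCast]
  rw [div_pow] at hc
  field_simp at hc
  linear_combination hc

theorem IsAlpha.not_range {q s : ℕ} (hq : q.Prime) (hs : s.Prime) (hqs : q ≠ s) (huq : Unr k q)
    {α α' : 𝓞 k} {N : ℕ} {e : ℤ} (h : IsAlpha q s α α' N e) (Q : Quad k K) (hd : Q.d = s)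
    (Q' : Quad K L) (hd' : Q'.d = q) (y : M)
    (hy : y ^ 2 = algebraMap L M (algebraMap K L (algebraMap k K α))) : y ∉ Set.range (algebraMap L M) := by
  rintro ⟨γ, rfl⟩
  rw [← map_pow] at hy
  have hy := (algebraMap L M).injective hy
  obtain ⟨b, hb | hb⟩ := Q'.sq_descent _ _ hy
  · obtain ⟨c, hc | hc⟩ := Q.sq_descent _ _ hb.symm
    · exact h.parityK hq hs hqs huq 0 0 c (by rw [hc]; ring)
    · exact h.parityK hq hs hqs huq 0 1 c (by rw [hc, hd]; ring)
  · have h1 : (b * q) ^ 2 = algebraMap k K (α * q) := by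
      rw [map_mul, hb, hd', map_natCast]; ring
    obtain ⟨c, hc | hc⟩ := Q.sq_descent _ _ h1
    · exact h.parityK hq hs hqs huq 1 0 c (by rw [pow_one, hc]; ring)
    · exact h.parityK hq hs hqs huq 1 1 c (by rw [pow_one, hc, hd]; ring)

end
end CnFProof

end

section
open NumberField IsDedekindDomain

namespace CnFProof
set_option linter.unusedSectionVars false
set_option linter.unusedVariables false
set_option linter.style.haveILetI false

section
variable {L M : Type*} [Field L] [Field M] [NumberField L] [NumberField M] [Algebra L M]

theorem Quad.half (Q : Quad L M) (t : M) (ht : Q.σ t = -t) (a b c : 𝓞 L) (hab : a = c ^ 2 + 4 * b)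
    (hta : t ^ 2 = algebraMap L M (a : L)) :
    ∃ ω : 𝓞 M, algebraMap (𝓞 L) (𝓞 M) a = (ω - Q.toInv.τ ω) ^ 2 := by
  have h2 : (2 : M) ≠ 0 := two_ne_zero
  set c' : M := algebraMap L M (c : L) with hc'
  set b' : M := algebraMap L M (b : L) with hb'
  have ht2 : t ^ 2 = c' ^ 2 + 4 * b' := by
    have h4 : ((4 : 𝓞 L) : L) = 4 := map_ofNat _ 4
    rw [hta, hab, hc', hb']
    simp [h4]
    left
    exact map_ofNat _ 4
  have hω : IsIntegral ℤ ((c' + t) / 2) := by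
    refine isIntegral_trans (A := 𝓞 M) _ ?_
    refine ⟨Polynomial.X ^ 2 - Polynomial.C (algebraMap (𝓞 L) (𝓞 M) c) * Polynomial.X
      - Polynomial.C (algebraMap (𝓞 L) (𝓞 M) b), by monicity!, ?_⟩
    simp only [Polynomial.eval₂_sub, Polynomial.eval₂_mul, Polynomial.eval₂_pow, Polynomial.eval₂_X,
      Polynomial.eval₂_C]
    change ((c' + t) / 2) ^ 2 - c' * ((c' + t) / 2) - b' = 0
    field_simp
    linear_combination ht2
  obtain ⟨ω, hωe⟩ : ∃ ω : 𝓞 M, (ω : M) = (c' + t) / 2 := ⟨⟨_, hω⟩, rfl⟩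
  refine ⟨ω, ?_⟩
  apply RingOfIntegers.coe_injective
  rw [map_pow, map_sub]
  change _ = ((ω : M) - Q.σ (ω : M)) ^ 2
  rw [hωe]
  change algebraMap L M (a : L) = ((c' + t) / 2 - Q.σ ((c' + t) / 2)) ^ 2
  rw [← hta, map_div₀, map_add, ht, hc', AlgEquiv.commutes, map_ofNat]
  field_simp
  ring

theorem IsAlpha.not_odd {q s : ℕ} (hq : q.Prime) (hs : s.Prime) (hq4 : q % 4 = 3) {α α' : 𝓞 L} {N : ℕ} {e : ℤ}
    (h : IsAlpha q s α α' N e) (htr : TR L) (r w : 𝓞 L) (hr : r ^ 2 = q) (hw : w ^ 2 = s)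
    (Q : Quad L M) (hd : Q.d = (α : L)) : ¬ OddCl L := by
  intro hodd
  haveI := htr.real
  haveI := (Q.TR_step htr (by intro ψ; rw [hd]; exact h.pos ψ)).real
  apply Q.not_good_empty hodd
  obtain ⟨c, m, hm⟩ : ∃ c m : 𝓞 L, (e : 𝓞 L) = c ^ 2 + 4 * m := by
    rcases h.he with rfl | rfl
    · exact ⟨1, 0, by simp⟩
    · obtain ⟨z, hz⟩ : ∃ z : ℕ, q = 4 * z + 3 := ⟨q / 4, by omega⟩
      refine ⟨r, -(z + 1), ?_⟩
      rw [hr, hz]; push_cast; ring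
  obtain ⟨b, hb⟩ := h.m1
  obtain ⟨b', hb'⟩ := h.m2
  obtain ⟨ω1, h1⟩ := Q.half Q.θ Q.hσθ α (m + b) c (by rw [hb, hm]; ring) (by rw [Q.hθ2, hd])
  have hprodL : (α : L) * α' = (((r * w) ^ N : 𝓞 L) : L) ^ 2 := by
    have h3 : α * α' = ((r * w) ^ N) ^ 2 := by
      rw [h.prod, ← pow_mul, mul_comm N 2, pow_mul, mul_pow, hr, hw]; push_cast; rfl
    have := congrArg (algebraMap (𝓞 L) L) h3
    rw [map_mul, map_pow] at this
    exact this
  obtain ⟨ω2, h2⟩ := Q.half (algebraMap L M (((r * w) ^ N : 𝓞 L) : L) / Q.θ)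
    (by rw [map_div₀, AlgEquiv.commutes, Q.hσθ, div_neg]) α' (m + b') c (by rw [hb', hm]; ring)
    (by
      have hα0 : algebraMap L M (α : L) ≠ 0 := by
        rw [← hd, ← Q.hθ2]; exact pow_ne_zero _ Q.θ0
      rw [div_pow, ← map_pow, ← hprodL, Q.hθ2, hd, map_mul, mul_div_cancel_left₀ _ hα0])
  intro P hP hP0 _
  by_cases hα : α ∈ P
  · refine ⟨ω2, α', h2, fun hα' => hP.ne_top ?_⟩
    obtain ⟨u, v, huv⟩ := h.cop
    rw [Ideal.eq_top_iff_one, ← huv]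
    exact add_mem (Ideal.mul_mem_left _ _ hα) (Ideal.mul_mem_left _ _ hα')
  · exact ⟨ω1, α, h1, hα⟩

end

section
variable {G : Type*} [CommGroup G] [Finite G]

theorem card_pow_two_le (h : Nat.card {c : G | c ^ 2 = 1} ≤ 2) (k : ℕ) :
    Nat.card {c : G | c ^ (2 ^ k) = 1} ≤ 2 ^ k := by
  classical
  haveI := Fintype.ofFinite G
  have conv : ∀ n : ℕ, Nat.card {c : G | c ^ n = 1} = (Finset.univ.filter (fun c : G => c ^ n = 1)).card := by
    intro n
    rw [Nat.card_eq_fintype_card, Fintype.card_subtype]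
    rfl
  rw [conv] at h ⊢
  induction k with
  | zero =>
    rw [pow_zero, Finset.card_le_one]
    intro a ha b hb
    simp only [pow_one, Finset.mem_filter, Finset.mem_univ, true_and] at ha hb
    rw [ha, hb]
  | succ k ih =>
    have h1 := Finset.card_le_mul_card_image (f := fun c : G => c ^ 2)
      (Finset.univ.filter (fun c : G => c ^ (2 ^ (k + 1)) = 1)) 2 (by
        intro a ha
        obtain ⟨x0, hx0, rfl⟩ := Finset.mem_image.1 ha
        refine le_trans (Finset.card_le_card_of_injOn (fun x => x / x0) ?_ ?_) h
        · intro x hx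
          simp only [Finset.coe_filter, Finset.mem_filter, Finset.mem_univ, true_and, Set.mem_ofPred_eq] at hx ⊢
          rw [div_pow, hx.2, div_self']
        · intro x _ y _ hxy
          exact div_left_injective hxy)
    have h2 : ((Finset.univ.filter (fun c : G => c ^ (2 ^ (k + 1)) = 1)).image (fun c : G => c ^ 2)).card
        ≤ (Finset.univ.filter (fun c : G => c ^ (2 ^ k) = 1)).card := by
      apply Finset.card_le_card
      intro x hx
      obtain ⟨y, hy, rfl⟩ := Finset.mem_image.1 hx
      simp only [Finset.mem_filter, Finset.mem_univ, true_and] at hy ⊢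
      rw [← pow_mul, ← pow_succ', hy]
    calc _ ≤ _ := h1
      _ ≤ 2 * 2 ^ k := by gcongr; exact h2.trans ih
      _ = 2 ^ (k + 1) := by ring

theorem cyclic_of_card_le (h : Nat.card {c : G | c ^ 2 = 1} ≤ 2) (hodd : ¬ Odd (Nat.card G))
    (P : Sylow 2 G) : IsCyclic (P : Subgroup G) ∧ (P : Subgroup G) ≠ ⊥ := by
  classical
  haveI := Fact.mk Nat.prime_two
  constructor
  · rw [IsCyclic.iff_exponent_eq_card]
    obtain ⟨n, hn⟩ := IsPGroup.iff_card.1 P.isPGroup'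
    have hdvd : Monoid.exponent (P : Subgroup G) ∣ Nat.card (P : Subgroup G) := Group.exponent_dvd_nat_card
    refine Nat.le_antisymm (Nat.le_of_dvd Nat.card_pos hdvd) ?_
    rw [hn] at hdvd
    obtain ⟨k, -, hk⟩ := (Nat.dvd_prime_pow Nat.prime_two).1 hdvd
    rw [hk]
    refine le_trans ?_ (card_pow_two_le h k)
    refine Nat.card_le_card_of_injective
      (fun x : (P : Subgroup G) => (⟨(x : G), ?_⟩ : {c : G | c ^ (2 ^ k) = 1})) ?_
    · have := Monoid.pow_exponent_eq_one x
      rw [hk] at this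
      exact congrArg Subtype.val this
    · intro x y hxy
      have h5 := Subtype.ext_iff.1 hxy
      exact Subtype.ext h5
  · intro hbot
    have h1 := P.card_eq_multiplicity
    have h2 : Nat.card (P : Subgroup G) = 1 := by rw [hbot]; simp
    have hdvd : 2 ∣ Nat.card G := (Nat.not_odd_iff_even.1 hodd).two_dvd
    have h3 := P.dvd_card_of_dvd_card hdvd
    rw [h2] at h3
    omega

end
end CnFProof

end

section
open NumberField IsDedekindDomain

namespace CnFProof
set_option linter.unusedSectionVars false
set_option linter.unusedVariables false
set_option linter.style.haveILetI false

/-- adjoin one more element -/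
noncomputable def ext (E : IntermediateField ℚ ℂ) (θ : ℂ) : IntermediateField ℚ ℂ := E ⊔ IntermediateField.adjoin ℚ {θ}

theorem le_ext (E : IntermediateField ℚ ℂ) (θ : ℂ) : E ≤ ext E θ := le_sup_left

theorem mem_ext (E : IntermediateField ℚ ℂ) (θ : ℂ) : θ ∈ ext E θ :=
  (le_sup_right : _ ≤ ext E θ) (IntermediateField.mem_adjoin_simple_self ℚ θ)

theorem ext_le {E F : IntermediateField ℚ ℂ} {θ : ℂ} (h : E ≤ F) (hθ : θ ∈ F) : ext E θ ≤ F :=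
  sup_le h (IntermediateField.adjoin_le_iff.2 (by simpa using hθ))

noncomputable instance extAlg (E : IntermediateField ℚ ℂ) (θ : ℂ) : Algebra E (ext E θ) :=
  (IntermediateField.inclusion (le_ext E θ)).toRingHom.toAlgebra

theorem coe_alg (E : IntermediateField ℚ ℂ) (θ : ℂ) (x : E) : ((algebraMap E (ext E θ) x : ext E θ) : ℂ) = x := rfl

theorem ext_span (E : IntermediateField ℚ ℂ) (θ : ℂ) (hθ : θ ^ 2 ∈ E) (x : ℂ) (hx : x ∈ ext E θ) :
    ∃ a ∈ E, ∃ b ∈ E, x = a + b * θ := by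
  let F : IntermediateField ℚ ℂ :=
    { carrier := {x | ∃ a ∈ E, ∃ b ∈ E, x = a + b * θ}
      mul_mem' := by
        rintro _ _ ⟨a, ha, b, hb, rfl⟩ ⟨a', ha', b', hb', rfl⟩
        exact ⟨a * a' + b * b' * θ ^ 2, add_mem (mul_mem ha ha') (mul_mem (mul_mem hb hb') hθ),
          a * b' + b * a', add_mem (mul_mem ha hb') (mul_mem hb ha'), by ring⟩
      add_mem' := by
        rintro _ _ ⟨a, ha, b, hb, rfl⟩ ⟨a', ha', b', hb', rfl⟩
        exact ⟨a + a', add_mem ha ha', b + b', add_mem hb hb', by ring⟩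
      algebraMap_mem' := fun r => ⟨algebraMap ℚ ℂ r, E.algebraMap_mem r, 0, zero_mem E, by ring⟩
      inv_mem' := by
        rintro _ ⟨a, ha, b, hb, rfl⟩
        by_cases hn : a ^ 2 - b ^ 2 * θ ^ 2 = 0
        · by_cases h0 : a + b * θ = 0
          · exact ⟨0, zero_mem E, 0, zero_mem E, by rw [h0]; simp⟩
          · have h1 : (a + b * θ) * (a - b * θ) = 0 := by linear_combination hn
            have h2 := (mul_eq_zero.1 h1).resolve_left h0
            refine ⟨(2 * a)⁻¹, inv_mem (mul_mem (by exact_mod_cast E.algebraMap_mem 2) ha), 0, zero_mem E, ?_⟩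
            rw [show a + b * θ = 2 * a by linear_combination -h2]; ring
        · have hmem : a ^ 2 - b ^ 2 * θ ^ 2 ∈ E := sub_mem (pow_mem ha 2) (mul_mem (pow_mem hb 2) hθ)
          refine ⟨a * (a ^ 2 - b ^ 2 * θ ^ 2)⁻¹, mul_mem ha (inv_mem hmem),
            -b * (a ^ 2 - b ^ 2 * θ ^ 2)⁻¹, mul_mem (neg_mem hb) (inv_mem hmem), ?_⟩
          apply inv_eq_of_mul_eq_one_right
          have : (a * (a ^ 2 - b ^ 2 * θ ^ 2)⁻¹ + -b * (a ^ 2 - b ^ 2 * θ ^ 2)⁻¹ * θ) * (a + b * θ)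
            = (a ^ 2 - b ^ 2 * θ ^ 2)⁻¹ * (a ^ 2 - b ^ 2 * θ ^ 2) := by ring
          rw [mul_comm, this, inv_mul_cancel₀ hn] }
  have hF : ext E θ ≤ F := ext_le (fun a ha => ⟨a, ha, 0, zero_mem E, by ring⟩)
    ⟨0, zero_mem E, 1, one_mem E, by ring⟩
  exact hF hx

theorem ext_nf (E : IntermediateField ℚ ℂ) [NumberField E] (θ : ℂ) (hθ : IsIntegral ℤ θ) :
    NumberField (ext E θ) := by
  haveI : FiniteDimensional ℚ (IntermediateField.adjoin ℚ {θ}) :=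
    IntermediateField.adjoin.finiteDimensional hθ.tower_top
  haveI h0 : FiniteDimensional ℚ E := inferInstance
  haveI : FiniteDimensional ℚ (ext E θ) := IntermediateField.finiteDimensional_sup E _
  exact { to_charZero := inferInstance, to_finiteDimensional := inferInstance }

theorem int_coe {F : IntermediateField ℚ ℂ} (y : F) : IsIntegral ℤ y ↔ IsIntegral ℤ (y : ℂ) :=
  (isIntegral_algebraMap_iff (A := F) (B := ℂ) (algebraMap F ℂ).injective).symm

theorem ext_quad (E : IntermediateField ℚ ℂ) [NumberField E] (θ : ℂ) [NumberField (ext E θ)] (d : 𝓞 E)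
    (hd : θ ^ 2 = ((d : E) : ℂ))
    (hnr : ∀ y : ext E θ, y ^ 2 = algebraMap E (ext E θ) (d : E) → IsIntegral ℤ y →
      y ∉ Set.range (algebraMap E (ext E θ))) :
    ∃ Q : Quad E (ext E θ), (Q.θ : ℂ) = θ ∧ Q.d = (d : E) := by
  have hintg : IsIntegral ℤ θ := by
    apply IsIntegral.of_pow (n := 2) (by norm_num)
    rw [hd]
    exact (int_coe _).1 d.isIntegral_coe
  have hintg' : IsIntegral ℤ (⟨θ, mem_ext E θ⟩ : ext E θ) := (int_coe _).2 hintg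
  have h2 : (⟨θ, mem_ext E θ⟩ : ext E θ) ^ 2 = algebraMap E (ext E θ) (d : E) := by
    apply Subtype.ext
    exact hd
  obtain ⟨Q, h3, h4⟩ := Quad.exists_of (K := E) (L := ext E θ) ⟨θ, mem_ext E θ⟩ (d : E) h2 (by
    intro x
    obtain ⟨a, ha, b, hb, hab⟩ := ext_span E θ (by rw [hd]; exact (d : E).2) x x.2
    exact ⟨⟨a, ha⟩, ⟨b, hb⟩, Subtype.ext hab⟩) hintg' (hnr _ h2 hintg')
  exact ⟨Q, by rw [h3], h4⟩

section
variable {p q s : ℕ} (hp : p.Prime) (hq : q.Prime) (hs : s.Prime) (hpq : p ≠ q) (hps : p ≠ s)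
    (hqs : q ≠ s) (hp8 : p % 8 = 5) (hq8 : q % 8 = 3) (hs4 : s % 4 = 3)
    (hQRq : IsSquare (p : ZMod q)) (hQRs : IsSquare (p : ZMod s))

theorem base_gen {K : Type*} [Field K] [NumberField K] (hp : p.Prime) (hq : q.Prime) (hs : s.Prime)
    (hpq : p ≠ q) (hps : p ≠ s)
    (hqs : q ≠ s) (hp8 : p % 8 = 5) (hq8 : q % 8 = 3) (hs4 : s % 4 = 3)
    (hQRq : IsSquare (p : ZMod q)) (hQRs : IsSquare (p : ZMod s)) (θ : K) (hθ : θ ^ 2 = p)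
    (span : ∀ x : K, ∃ a b : ℚ, x = a + b * θ) :
    Stage q s K 0 ∧ ∃ (α α' : 𝓞 K) (N : ℕ) (e : ℤ), IsAlpha q s α α' N e := by
  have hintg : IsIntegral ℤ θ := by
    apply IsIntegral.of_pow (n := 2) (by norm_num)
    rw [hθ]; exact isIntegral_natCast (R := ℤ) (a := p)
  obtain ⟨Q, h1, h2⟩ := Quad.exists_of (K := ℚ) θ (p : ℚ) (by rw [hθ]; simp) (by
    intro x
    obtain ⟨a, b, h⟩ := span x
    exact ⟨a, b, by simpa using h⟩) hintg
    (Unr.not_range hp.ne_one (unr_rat hp) θ hθ hintg)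
  refine ⟨Stage.base hp hq hs hpq hps hp8 hq8 hs4 hQRq Q h2, ?_⟩
  obtain ⟨α, α', N, e, a1, a2, a3, a4, a5, a6, a7, a8, a9⟩ :=
    exists_alpha hp hq hs hpq hps hqs hp8 hq8 hs4 hQRq hQRs Q h2
  exact ⟨α, α', N, e, a1, a2, a3, a4, a5, a6, a7, a8, a9⟩

end

/-- the real numbers generating the cyclotomic layers -/
noncomputable def xx (n : ℕ) : ℂ := ((2 * Real.cos (2 * Real.pi / 2 ^ (n + 2)) : ℝ) : ℂ)

theorem xx_zero : xx 0 = 0 := by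
  unfold xx
  rw [show 2 * Real.pi / 2 ^ (0 + 2) = Real.pi / 2 by ring, Real.cos_pi_div_two]; simp

theorem xx_succ (n : ℕ) : xx (n + 1) ^ 2 = 2 + xx n := by
  unfold xx
  have h : (2 * Real.cos (2 * Real.pi / 2 ^ (n + 1 + 2))) ^ 2 = 2 + 2 * Real.cos (2 * Real.pi / 2 ^ (n + 2)) := by
    have h1 : 2 * Real.pi / 2 ^ (n + 2) = 2 * (2 * Real.pi / 2 ^ (n + 1 + 2)) := by
      field_simp; ring
    rw [h1, Real.cos_two_mul]; ring
  exact_mod_cast congrArg (Complex.ofReal) h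

theorem xx_int (n : ℕ) : IsIntegral ℤ (xx n) := by
  induction n with
  | zero => rw [xx_zero]; exact isIntegral_zero
  | succ n ih =>
    apply IsIntegral.of_pow (n := 2) (by norm_num)
    rw [xx_succ]
    exact (isIntegral_natCast (R := ℤ) (a := 2)).add ih

/-- square root in ℂ -/
noncomputable def rt (m : ℕ) : ℂ := ((Real.sqrt m : ℝ) : ℂ)

theorem rt_sq (m : ℕ) : rt m ^ 2 = m := by
  unfold rt
  have := Real.sq_sqrt (Nat.cast_nonneg (α := ℝ) m)
  exact_mod_cast congrArg (Complex.ofReal) this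

theorem rt_int (m : ℕ) : IsIntegral ℤ (rt m) := by
  apply IsIntegral.of_pow (n := 2) (by norm_num)
  rw [rt_sq]; exact isIntegral_natCast (R := ℤ) (a := m)

/-- the tower -/
noncomputable def EE (p : ℕ) : ℕ → IntermediateField ℚ ℂ
  | 0 => ext ⊥ (rt p)
  | n + 1 => ext (EE p n) (xx (n + 1))

instance : NumberField (⊥ : IntermediateField ℚ ℂ) :=
  { to_charZero := inferInstance, to_finiteDimensional := inferInstance }

instance EE_nf (p n : ℕ) : NumberField (EE p n) := by
  induction n with
  | zero => exact ext_nf _ _ (rt_int p)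
  | succ n ih => exact ext_nf _ _ (xx_int _)

theorem rt_mem_EE (p n : ℕ) : rt p ∈ EE p n := by
  induction n with
  | zero => exact mem_ext _ _
  | succ n ih => exact le_ext _ _ ih

theorem xx_mem_EE (p n : ℕ) : xx n ∈ EE p n := by
  cases n with
  | zero => rw [xx_zero]; exact zero_mem _
  | succ n => exact mem_ext _ _

theorem EE_le (p n : ℕ) (F : IntermediateField ℚ ℂ) (h1 : rt p ∈ F) (h2 : xx n ∈ F) : EE p n ≤ F := by
  induction n with
  | zero => exact ext_le bot_le h1
  | succ n ih =>
    refine ext_le (ih ?_) h2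
    have : xx n = xx (n + 1) ^ 2 - algebraMap ℚ ℂ 2 := by rw [xx_succ, map_ofNat]; ring
    rw [this]
    exact sub_mem (pow_mem h2 2) (F.algebraMap_mem 2)

end CnFProof

end

section
open NumberField IsDedekindDomain

namespace CnFProof
set_option linter.unusedSectionVars false
set_option linter.unusedVariables false
set_option linter.style.haveILetI false

theorem tower_stage {p q s : ℕ} (hp : p.Prime) (hq : q.Prime) (hs : s.Prime) (hpq : p ≠ q) (hps : p ≠ s)
    (hqs : q ≠ s) (hp8 : p % 8 = 5) (hq8 : q % 8 = 3) (hs4 : s % 4 = 3)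
    (hQRq : IsSquare (p : ZMod q)) (hQRs : IsSquare (p : ZMod s)) (n : ℕ) :
    (∃ x : 𝓞 (EE p n), ((x : EE p n) : ℂ) = xx n ∧ Stage q s (EE p n) x) ∧
      ∃ (α α' : 𝓞 (EE p n)) (N : ℕ) (e : ℤ), IsAlpha q s α α' N e := by
  have hq2 : q.Coprime 2 := by
    rw [Nat.coprime_two_right, Nat.odd_iff]; omega
  have hs2 : s.Coprime 2 := by
    rw [Nat.coprime_two_right, Nat.odd_iff]; omega
  induction n with
  | zero =>
    obtain ⟨h1, h2⟩ := base_gen (K := EE p 0) hp hq hs hpq hps hqs hp8 hq8 hs4 hQRq hQRs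
      ⟨rt p, rt_mem_EE p 0⟩ (Subtype.ext (by simpa using rt_sq p)) (by
        intro x
        obtain ⟨a, ha, b, hb, hab⟩ := ext_span ⊥ (rt p)
          (by rw [rt_sq]; exact natCast_mem (⊥ : IntermediateField ℚ ℂ) p) x x.2
        obtain ⟨a, rfl⟩ := IntermediateField.mem_bot.1 ha
        obtain ⟨b, rfl⟩ := IntermediateField.mem_bot.1 hb
        exact ⟨a, b, Subtype.ext (by simpa using hab)⟩)
    exact ⟨⟨0, by rw [xx_zero]; rfl, h1⟩, h2⟩
  | succ n ih =>
    obtain ⟨⟨x, hx, hst⟩, α, α', N, e, hα⟩ := ih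
    haveI : NumberField (ext (EE p n) (xx (n + 1))) := ext_nf _ _ (xx_int _)
    obtain ⟨Q, h1, h2⟩ := ext_quad (EE p n) (xx (n + 1)) (2 + x) (by
      rw [xx_succ, ← hx]; rfl) (fun y hy hyi => hst.not_range y hy hyi)
    have hintg : IsIntegral ℤ (⟨xx (n + 1), mem_ext _ _⟩ : ext (EE p n) (xx (n + 1))) :=
      (int_coe _).2 (xx_int _)
    have h3 := hst.step hq2 hs2 Q (⟨⟨xx (n + 1), mem_ext _ _⟩, hintg⟩ : 𝓞 (ext (EE p n) (xx (n + 1)))) h2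
      (Subtype.ext h1)
    have h4 := hα.step (L := ext (EE p n) (xx (n + 1))) hq.ne_zero
    exact ⟨⟨_, rfl, h3⟩, ⟨_, _, N, e, h4⟩⟩

theorem final_k {q s : ℕ} (hq : q.Prime) (hs : s.Prime)
    (hqs : q ≠ s) (hq8 : q % 8 = 3) (hs4 : s % 4 = 3)
    (k : IntermediateField ℚ ℂ) [NumberField k] (x : 𝓞 k) (hst : Stage q s k x)
    (α α' : 𝓞 k) (N : ℕ) (e : ℤ) (hα : IsAlpha q s α α' N e)
    (K L : IntermediateField ℚ ℂ) (hK : K = ext k (rt s)) (hL : L = ext K (rt q)) [NumberField L] :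
    Nat.card {c : ClassGroup (𝓞 L) | c ^ 2 = 1} ≤ 2 ∧ ¬ OddCl L := by
  have hq2 : q.Coprime 2 := by
    rw [Nat.coprime_two_right, Nat.odd_iff]; omega
  subst hL
  subst hK
  haveI : NumberField (ext k (rt s)) := ext_nf _ _ (rt_int _)
  let K := ext k (rt s)
  let L := ext K (rt q)
  obtain ⟨Q, h1, h2⟩ := ext_quad k (rt s) (s : 𝓞 k) (by rw [rt_sq]; simp) (fun y hy hyi =>
    hst.uns.not_range hs.ne_one y (by rw [hy]; simp) hyi)
  replace h2 : Q.d = s := by rw [h2]; simp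
  obtain ⟨-, -, hunr⟩ := stageK hq hs hqs hq2 hst Q h2
  obtain ⟨Q', h1', h2'⟩ := ext_quad K (rt q) (q : 𝓞 K) (by rw [rt_sq]; simp) (fun y hy hyi =>
    hunr.not_range hq.ne_one y (by rw [hy]; simp) hyi)
  replace h2' : Q'.d = q := by rw [h2']; simp
  obtain ⟨htr, hcard⟩ := stageL hq hs hqs hq2 (by omega) hst Q h2 Q' h2'
  refine ⟨hcard, ?_⟩
  have hαL := (hα.step (L := K) hq.ne_zero).step (L := L) hq.ne_zero
  let β : 𝓞 L := algebraMap (𝓞 K) (𝓞 L) (algebraMap (𝓞 k) (𝓞 K) α)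
  obtain ⟨θ, hθ⟩ := IsAlgClosed.exists_pow_nat_eq ((β : L) : ℂ) (n := 2) (by norm_num)
  have hθint : IsIntegral ℤ θ := by
    apply IsIntegral.of_pow (n := 2) (by norm_num)
    rw [hθ]
    exact (int_coe _).1 β.isIntegral_coe
  haveI : NumberField (ext L θ) := ext_nf _ _ hθint
  obtain ⟨Q'', h1'', h2''⟩ := ext_quad L θ β hθ (fun y hy hyi =>
    hα.not_range hq hs hqs hst.unq Q h2 Q' h2' y hy)
  have hrq : IsIntegral ℤ (⟨rt q, mem_ext _ _⟩ : L) := (int_coe _).2 (rt_int _)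
  have hrs : IsIntegral ℤ (⟨rt s, le_ext _ _ (mem_ext _ _)⟩ : L) := (int_coe _).2 (rt_int _)
  obtain ⟨r, hr⟩ : ∃ r : 𝓞 L, ((r : L) : ℂ) = rt q := ⟨⟨_, hrq⟩, rfl⟩
  obtain ⟨w, hw⟩ : ∃ r : 𝓞 L, ((r : L) : ℂ) = rt s := ⟨⟨_, hrs⟩, rfl⟩
  have hr2 : r ^ 2 = q := by
    apply RingOfIntegers.coe_injective
    rw [map_pow, map_natCast]
    apply Subtype.ext
    push_cast
    change ((r : L) : ℂ) ^ 2 = q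
    rw [hr, rt_sq]
  have hw2 : w ^ 2 = s := by
    apply RingOfIntegers.coe_injective
    rw [map_pow, map_natCast]
    apply Subtype.ext
    push_cast
    change ((w : L) : ℂ) ^ 2 = s
    rw [hw, rt_sq]
  exact hαL.not_odd hq hs (by omega) htr r w hr2 hw2 Q'' h2''

theorem final_gen (F : IntermediateField ℚ ℂ) [NumberField F]
    (h : Nat.card {c : ClassGroup (𝓞 F) | c ^ 2 = 1} ≤ 2 ∧ ¬ OddCl F)
    (P : Sylow 2 (ClassGroup (𝓞 F))) : IsCyclic (P : Subgroup (ClassGroup (𝓞 F))) ∧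
      (P : Subgroup (ClassGroup (𝓞 F))) ≠ ⊥ :=
  cyclic_of_card_le h.1 h.2 P

theorem final_eq (p q s n : ℕ) : IntermediateField.adjoin ℚ {rt p, rt q, rt s, xx n}
    = ext (ext (EE p n) (rt s)) (rt q) := by
  apply le_antisymm
  · rw [IntermediateField.adjoin_le_iff]
    rintro z (rfl | rfl | rfl | rfl)
    · exact le_ext _ _ (le_ext _ _ (rt_mem_EE p n))
    · exact mem_ext _ _
    · exact le_ext _ _ (mem_ext _ _)
    · exact le_ext _ _ (le_ext _ _ (xx_mem_EE p n))
  · have h := IntermediateField.subset_adjoin ℚ ({rt p, rt q, rt s, xx n} : Set ℂ)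
    exact ext_le (ext_le (EE_le p n _ (h (by simp)) (h (by simp))) (h (by simp))) (h (by simp))


theorem final_all {p q s : ℕ} (hp : p.Prime) (hq : q.Prime) (hs : s.Prime) (hpq : p ≠ q) (hps : p ≠ s)
    (hqs : q ≠ s) (hp8 : p % 8 = 5) (hq8 : q % 8 = 3) (hs4 : s % 4 = 3)
    (hQRq : IsSquare (p : ZMod q)) (hQRs : IsSquare (p : ZMod s)) (n : ℕ)
    (F : IntermediateField ℚ ℂ) (hF : F = IntermediateField.adjoin ℚ {rt p, rt q, rt s, xx n})
    (P : Sylow 2 (ClassGroup (𝓞 F))) : IsCyclic (P : Subgroup (ClassGroup (𝓞 F))) ∧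
      (P : Subgroup (ClassGroup (𝓞 F))) ≠ ⊥ := by
  rw [final_eq] at hF
  haveI : NumberField (ext (EE p n) (rt s)) := ext_nf _ _ (rt_int _)
  haveI : NumberField (ext (ext (EE p n) (rt s)) (rt q)) := ext_nf _ _ (rt_int _)
  haveI : NumberField F := by rw [hF]; infer_instance
  obtain ⟨⟨x, hx, hst⟩, α, α', N, e, hα⟩ :=
    tower_stage hp hq hs hpq hps hqs hp8 hq8 hs4 hQRq hQRs n
  exact final_gen F (final_k hq hs hqs hq8 hs4 (EE p n) x hst α α' N e hα _ F rfl hF) P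

end CnFProof

end

theorem two_class_group_of_CnF_cyclic_nontrivial
    (p q s : ℕ) (hp : p.Prime) (hq : q.Prime) (hs : s.Prime)
    (hpq : p ≠ q) (hps : p ≠ s) (hqs : q ≠ s)
    (hp8 : p % 8 = 5) (hq8 : q % 8 = 3) (hs4 : s % 4 = 3)
    (hQRq : IsSquare (p : ZMod q)) (hQRs : IsSquare (p : ZMod s)) :
    ∀ n : ℕ, ∀ P : Sylow 2 (ClassGroup (𝓞 (CnF p q s n))),
      IsCyclic (P : Subgroup (ClassGroup (𝓞 (CnF p q s n)))) ∧
      (P : Subgroup (ClassGroup (𝓞 (CnF p q s n)))) ≠ ⊥ := by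
  intro n P
  exact CnFProof.final_all hp hq hs hpq hps hqs hp8 hq8 hs4 hQRq hQRs n (CnF p q s n) rfl P
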